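/- Leading order of the ground state energy in three dimensions (Lieb–Yngvason): Let V:ℝ³→[0,∞] be measurable, radial and compactly supported, with scattering length a∈(0,∞). Then lim_{ρ→0⁺} e₃⁻(ρ)/(4πaρ²) = lim_{ρ→0⁺} e₃⁺(ρ)/(4πaρ²) = 1, where e₃⁻(ρ)=liminf_{N→∞}E₃(N,T_N)/T_N³ and e₃⁺(ρ)=limsup_{N→∞}E₃(N,T_N)/T_N³ with T_N=(N/ρ)^{1/3}. -/

import Mathlib

open MeasureTheory Filter Real
open scoped ENNReal NNReal

noncomputable section

abbrev Vec (d : ℕ) := Fin d → ℝ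

def box (d N : ℕ) (T : ℝ) : Set (Fin N → Vec d) :=
  {x | ∀ i k, x i k ∈ Set.Icc (-T/2) (T/2)}

def periodize (d : ℕ) (V : Vec d → ℝ≥0∞) (T : ℝ) (z : Vec d) : ℝ≥0∞ :=
  ∑' n : Fin d → ℤ, V (fun k => z k + T * n k)

def kineticE (d N : ℕ) (T : ℝ) (ψ : (Fin N → Vec d) → ℂ) : ℝ≥0∞ :=
  ∑ i : Fin N, ∑ k : Fin d,
    ∫⁻ x in box d N T, (‖fderiv ℝ ψ x (Pi.single i (Pi.single k 1))‖₊ : ℝ≥0∞) ^ 2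

def interE (d N : ℕ) (T : ℝ) (V : Vec d → ℝ≥0∞) (ψ : (Fin N → Vec d) → ℂ) : ℝ≥0∞ :=
  ∑ i : Fin N, ∑ j : Fin N,
    if i < j then
      ∫⁻ x in box d N T, periodize d V T (fun k => x i k - x j k) * (‖ψ x‖₊ : ℝ≥0∞) ^ 2
    else 0

def IsTrialState (d N : ℕ) (T : ℝ) (ψ : (Fin N → Vec d) → ℂ) : Prop :=
  ContDiff ℝ (⊤ : ℕ∞) ψ ∧
  (∀ (x : Fin N → Vec d) (v : Fin N → Fin d → ℤ), ψ (fun i k => x i k + T * v i k) = ψ x) ∧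
  (∀ (σ : Equiv.Perm (Fin N)) (x : Fin N → Vec d), ψ (x ∘ σ) = ψ x) ∧
  ∫⁻ x in box d N T, (‖ψ x‖₊ : ℝ≥0∞) ^ 2 = 1

def gsEnergy (d N : ℕ) (T : ℝ) (V : Vec d → ℝ≥0∞) : ℝ :=
  sInf {e : ℝ | ∃ ψ, IsTrialState d N T ψ ∧
        kineticE d N T ψ + interE d N T V ψ ≠ ⊤ ∧
        (kineticE d N T ψ + interE d N T V ψ).toReal = e}

/-- side length of the thermodynamic box -/
def sideLength (d : ℕ) (ρ : ℝ) (N : ℕ) : ℝ := ((N : ℝ) / ρ) ^ ((1 : ℝ) / d)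

def eMinus (d : ℕ) (V : Vec d → ℝ≥0∞) (ρ : ℝ) : ℝ :=
  liminf (fun N : ℕ => gsEnergy d N (sideLength d ρ N) V / (sideLength d ρ N) ^ d) atTop

def ePlus (d : ℕ) (V : Vec d → ℝ≥0∞) (ρ : ℝ) : ℝ :=
  limsup (fun N : ℕ => gsEnergy d N (sideLength d ρ N) V / (sideLength d ρ N) ^ d) atTop

def scatSet3 (V : Vec 3 → ℝ≥0∞) : Set ℝ≥0∞ :=
  {E | ∃ f : Vec 3 → ℝ, ContDiff ℝ (⊤ : ℕ∞) f ∧ HasCompactSupport (fun x => f x - 1) ∧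
       E = ∫⁻ x, ((∑ k, ((‖fderiv ℝ f x (Pi.single k 1)‖₊ : ℝ≥0∞)) ^ 2)
             + V x * (‖f x‖₊ : ℝ≥0∞) ^ 2 / 2)}

/-- The squared Euclidean length of a vector of `Vec 3`. -/
def sqLen (x : Vec 3) : ℝ := ∑ k, x k ^ 2

/-- The squared Euclidean length of the gradient. -/
def gradSq (f : Vec 3 → ℝ) (x : Vec 3) : ℝ :=
  ∑ k, (fderiv ℝ f x (Pi.single k 1)) ^ 2

lemma sqLen_nonneg (x : Vec 3) : 0 ≤ sqLen x := Finset.sum_nonneg fun _ _ => sq_nonneg _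

lemma gradSq_nonneg (f : Vec 3 → ℝ) (x : Vec 3) : 0 ≤ gradSq f x :=
  Finset.sum_nonneg fun _ _ => sq_nonneg _

lemma contDiff_sqLen {n : WithTop ℕ∞} : ContDiff ℝ n sqLen := by
  unfold sqLen; fun_prop

lemma hasFDerivAt_sqLen (x v : Vec 3) : fderiv ℝ sqLen x v = 2 * ∑ k, x k * v k := by
  have h : HasFDerivAt sqLen
      (∑ k : Fin 3, (2 * x k) • (ContinuousLinearMap.proj (R := ℝ) (φ := fun _ : Fin 3 => ℝ) k)) x := by
    unfold sqLen
    refine HasFDerivAt.fun_sum fun k _ => ?_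
    have := ((ContinuousLinearMap.proj (R := ℝ) (φ := fun _ : Fin 3 => ℝ) k).hasFDerivAt (x := x)).pow 2
    simpa using this
  rw [h.fderiv]
  simp [Finset.mul_sum, mul_assoc]

lemma continuous_gradSq {f : Vec 3 → ℝ} (hf : ContDiff ℝ 1 f) : Continuous (gradSq f) := by
  have := hf.continuous_fderiv one_ne_zero
  unfold gradSq
  fun_prop

lemma fderiv_sqLen_single (x : Vec 3) (k : Fin 3) :
    fderiv ℝ sqLen x (Pi.single k 1) = 2 * x k := by
  rw [hasFDerivAt_sqLen]; simp [Pi.single_apply]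

lemma hasCompactSupport_gradSq {f : Vec 3 → ℝ} (hf : HasCompactSupport f) :
    HasCompactSupport (gradSq f) := by
  have h := hf.fderiv (𝕜 := ℝ)
  refine h.mono' ?_
  intro x hx
  refine subset_closure ?_
  contrapose! hx
  simp only [Function.mem_support, not_not] at hx ⊢
  simp [gradSq, hx]

/-- **Hardy's inequality** with a regularised weight. -/
theorem hardy {h : Vec 3 → ℝ} (hh : ContDiff ℝ 1 h) (hc : HasCompactSupport h) :
    ∫ x, h x ^ 2 / (1 + sqLen x) ≤ 4 * ∫ x, gradSq h x := by
  have hq : ∀ x, 0 < 1 + sqLen x := fun x => by have := sqLen_nonneg x; linarith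
  have hsq : Continuous sqLen := (contDiff_sqLen (n := 0)).continuous
  have hfd := hh.continuous_fderiv one_ne_zero
  let F : Fin 3 → Vec 3 → ℝ := fun k x => x k / (1 + sqLen x)
  have hF : ∀ k, ContDiff ℝ 1 (F k) := fun k =>
    ContDiff.div (by fun_prop) (contDiff_const.add contDiff_sqLen) fun x => (hq x).ne'
  have hFd : ∀ k x, fderiv ℝ (F k) x (Pi.single k 1)
      = 1 / (1 + sqLen x) - 2 * x k ^ 2 / (1 + sqLen x) ^ 2 := by
    intro k x
    have h1 : HasFDerivAt (fun x : Vec 3 => x k)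
      (ContinuousLinearMap.proj (R := ℝ) (φ := fun _ : Fin 3 => ℝ) k) x :=
      (ContinuousLinearMap.proj (R := ℝ) (φ := fun _ : Fin 3 => ℝ) k).hasFDerivAt
    have h2 : HasFDerivAt (fun x => 1 + sqLen x) (fderiv ℝ sqLen x) x :=
      ((contDiff_sqLen (n := 1)).differentiable one_ne_zero x).hasFDerivAt.const_add 1
    have h3 := h1.fun_mul ((hasDerivAt_inv (hq x).ne').comp_hasFDerivAt x h2)
    have : F k = fun x => x k * (1 + sqLen x)⁻¹ := rfl
    rw [this]
    have h4 := h3.fderiv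
    simp only [Function.comp_def] at h4
    rw [h4]
    have := (hq x).ne'
    simp [fderiv_sqLen_single]
    field_simp
    ring
  have hcF : ∀ (g : Vec 3 → ℝ), Continuous g → Integrable (fun x => h x * g x) := by
    intro g hg
    exact (hh.continuous.mul hg).integrable_of_hasCompactSupport hc.mul_right
  have hcF' : ∀ (g : Vec 3 → ℝ), Continuous g → Integrable (fun x => h x ^ 2 * g x) := by
    intro g hg
    refine ((hh.continuous.pow 2).mul hg).integrable_of_hasCompactSupport ?_
    have : HasCompactSupport (fun x => h x * (h x * g x)) := hc.mul_right
    rwa [show h ^ 2 * g = fun x => h x * (h x * g x) from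
      funext fun x => by simp [pow_two, mul_assoc]]
  have hparts : ∀ k, ∫ x, h x ^ 2 * fderiv ℝ (F k) x (Pi.single k 1)
      = - ∫ x, (2 * h x * fderiv ℝ h x (Pi.single k 1)) * F k x := by
    intro k
    have e : ∀ x, fderiv ℝ (fun x => h x ^ 2) x (Pi.single k 1)
        = 2 * h x * fderiv ℝ h x (Pi.single k 1) := by
      intro x
      have := ((hh.differentiable one_ne_zero x).hasFDerivAt.pow 2).fderiv
      erw [this]; simp
    have hFc := (hF k).continuous
    have hFdc := (hF k).continuous_fderiv one_ne_zero
    have := integral_mul_fderiv_eq_neg_fderiv_mul_of_integrable (μ := volume)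
      (f := fun x => h x ^ 2) (g := F k) (v := Pi.single k 1) ?_ ?_ ?_ ?_ ?_
    · rw [this]; simp_rw [e]
    · simp_rw [e]
      have := hcF (fun x => 2 * fderiv ℝ h x (Pi.single k 1) * F k x) (by fun_prop)
      exact this.congr (.of_forall fun x => by simp only; ring)
    · exact hcF' _ (by fun_prop)
    · exact hcF' _ hFc
    · exact fun x _ => (hh.differentiable one_ne_zero x).pow 2
    · exact fun x _ => (hF k).differentiable one_ne_zero x
  have hw : Continuous fun x => 1 / (1 + sqLen x) :=
    continuous_const.div (continuous_const.add hsq) fun x => (hq x).ne'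
  have hI1 : Integrable (fun x => h x ^ 2 / (1 + sqLen x)) := by
    have := hcF' _ hw
    simpa [div_eq_mul_inv] using this
  have hI2 : Integrable (gradSq h) :=
    (continuous_gradSq hh).integrable_of_hasCompactSupport (hasCompactSupport_gradSq hc)
  have hFc := fun k => (hF k).continuous
  have hFdc := fun k => (hF k).continuous_fderiv one_ne_zero
  have hI3 : ∀ k, Integrable (fun x => h x ^ 2 * fderiv ℝ (F k) x (Pi.single k 1)) := by
    intro k
    have := hFdc k
    exact hcF' _ (by fun_prop)
  have hI4 : ∀ k, Integrable (fun x => (2 * h x * fderiv ℝ h x (Pi.single k 1)) * F k x) := by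
    intro k
    have := hFc k
    have := hcF (fun x => 2 * fderiv ℝ h x (Pi.single k 1) * F k x) (by fun_prop)
    exact this.congr (.of_forall fun x => by simp only; ring)
  have key1 : ∫ x, h x ^ 2 / (1 + sqLen x)
      ≤ ∫ x, ∑ k, h x ^ 2 * fderiv ℝ (F k) x (Pi.single k 1) := by
    refine integral_mono hI1 (integrable_finsetSum _ fun k _ => hI3 k) fun x => ?_
    have h0 := hq x
    have : ∑ k, h x ^ 2 * fderiv ℝ (F k) x (Pi.single k 1)
        = h x ^ 2 * (3 / (1 + sqLen x) - 2 * sqLen x / (1 + sqLen x) ^ 2) := by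
      rw [← Finset.mul_sum]
      simp_rw [hFd]
      simp only [sqLen, Fin.sum_univ_three]; ring
    simp only [this]
    rw [div_eq_mul_one_div]
    refine mul_le_mul_of_nonneg_left ?_ (sq_nonneg _)
    have := sqLen_nonneg x
    rw [div_sub_div _ _ h0.ne' (by positivity), div_le_div_iff₀ h0 (by positivity)]
    nlinarith [mul_pos h0 h0, mul_pos (mul_pos h0 h0) h0]
  have key2 : ∫ x, ∑ k, h x ^ 2 * fderiv ℝ (F k) x (Pi.single k 1)
      = ∫ x, - ∑ k, (2 * h x * fderiv ℝ h x (Pi.single k 1)) * F k x := by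
    rw [integral_finsetSum _ fun k _ => hI3 k, integral_neg,
      integral_finsetSum _ fun k _ => hI4 k, ← Finset.sum_neg_distrib]
    exact Finset.sum_congr rfl fun k _ => hparts k
  have key3 : ∫ x, - ∑ k, (2 * h x * fderiv ℝ h x (Pi.single k 1)) * F k x
      ≤ ∫ x, (2 * gradSq h x + 1 / 2 * (h x ^ 2 / (1 + sqLen x))) := by
    refine integral_mono (integrable_finsetSum _ fun k _ => hI4 k).neg
      ((hI2.const_mul 2).add (hI1.const_mul _)) fun x => ?_
    have h0 := hq x
    have e1 : h x ^ 2 * (sqLen x / (1 + sqLen x) ^ 2) ≤ h x ^ 2 / (1 + sqLen x) := by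
      rw [div_eq_mul_one_div (h x ^ 2)]
      refine mul_le_mul_of_nonneg_left ?_ (sq_nonneg _)
      have := sqLen_nonneg x
      rw [div_le_div_iff₀ (by positivity) h0]
      nlinarith
    have e2 : h x ^ 2 * (sqLen x / (1 + sqLen x) ^ 2) = ∑ k, (h x * F k x) ^ 2 := by
      simp only [F, mul_pow, div_pow, ← Finset.mul_sum, ← Finset.sum_div]; rfl
    have e3 : - ∑ k, (2 * h x * fderiv ℝ h x (Pi.single k 1)) * F k x
        ≤ 2 * gradSq h x + 1 / 2 * ∑ k, (h x * F k x) ^ 2 := by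
      rw [gradSq, Finset.mul_sum, Finset.mul_sum, ← Finset.sum_add_distrib, ← Finset.sum_neg_distrib]
      refine Finset.sum_le_sum fun k _ => ?_
      nlinarith [sq_nonneg (2 * fderiv ℝ h x (Pi.single k 1) + h x * F k x)]
    simp only
    linarith
  rw [integral_add (hI2.const_mul 2) (hI1.const_mul _), integral_const_mul, integral_const_mul] at key3
  linarith

lemma enorm_sq_eq_ofReal (r : ℝ) : (‖r‖₊ : ℝ≥0∞) ^ 2 = ENNReal.ofReal (r ^ 2) := by
  rw [← sq_abs, ENNReal.ofReal_pow (abs_nonneg r), ← Real.norm_eq_abs, ofReal_norm]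
  rfl

lemma exists_bound_deriv_smoothTransition :
    ∃ M : ℝ, 0 < M ∧ (∀ t, |deriv smoothTransition t| ≤ M) := by
  have hc : Continuous (deriv smoothTransition) :=
    (smoothTransition.contDiff (n := 1)).continuous_deriv le_rfl
  obtain ⟨C, hC⟩ := (isCompact_Icc (a := (0 : ℝ)) (b := 1)).exists_bound_of_continuousOn hc.continuousOn
  refine ⟨max C 1, by positivity, fun t => ?_⟩
  rcases lt_or_ge t 0 with h | h
  · have : smoothTransition =ᶠ[nhds t] fun _ => 0 := by
      filter_upwards [Iio_mem_nhds h] with s hs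
      exact smoothTransition.zero_of_nonpos (le_of_lt hs)
    rw [this.deriv_eq]; simp
  rcases lt_or_ge 1 t with h' | h'
  · have : smoothTransition =ᶠ[nhds t] fun _ => 1 := by
      filter_upwards [Ioi_mem_nhds h'] with s hs
      exact smoothTransition.one_of_one_le (le_of_lt hs)
    rw [this.deriv_eq]; simp
  · exact (hC t ⟨h, h'⟩).trans (le_max_left _ _)

lemma gradSq_radial {F : ℝ → ℝ} {F' : ℝ} {x : Vec 3} (hF : HasDerivAt F F' (sqLen x)) :
    gradSq (fun y => F (sqLen y)) x = 4 * F' ^ 2 * sqLen x := by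
  have h2 : HasFDerivAt sqLen (fderiv ℝ sqLen x) x :=
    ((contDiff_sqLen (n := 1)).differentiable one_ne_zero x).hasFDerivAt
  have h3 := (hF.comp_hasFDerivAt x h2).fderiv
  simp only [Function.comp_def] at h3
  simp only [gradSq, h3]
  simp only [smul_apply, fderiv_sqLen_single, smul_eq_mul, sqLen,
    Finset.mul_sum]
  exact Finset.sum_congr rfl fun k _ => by ring

lemma gradSq_eq_zero_of_eventually {f : Vec 3 → ℝ} {x : Vec 3} {c : ℝ}
    (h : f =ᶠ[nhds x] fun _ => c) : gradSq f x = 0 := by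
  simp [gradSq, h.fderiv_eq]

lemma continuous_sqLen : Continuous sqLen := (contDiff_sqLen (n := 0)).continuous

/-- Logarithmic cutoffs have arbitrarily small Hardy-weighted gradients. -/
lemma exists_log_cutoff (S : ℝ) (hS : 0 ≤ S) {δ : ℝ} (hδ : 0 < δ) :
    ∃ R₀ : ℝ, 0 < R₀ ∧ ∀ R ≥ R₀, ∃ χ : Vec 3 → ℝ, ContDiff ℝ (⊤ : ℕ∞) χ ∧
      (∀ x, 0 ≤ χ x ∧ χ x ≤ 1) ∧ (∀ x, sqLen x ≤ S → χ x = 1) ∧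
      (∀ x, R ^ 2 / 4 ≤ sqLen x → χ x = 0) ∧
      (∀ x, R ^ 2 / 4 < sqLen x → gradSq χ x = 0) ∧
      (∀ x, gradSq χ x ≤ δ / (1 + sqLen x)) := by
  obtain ⟨M, hM, hMb⟩ := exists_bound_deriv_smoothTransition
  -- the logarithmic width of the transition region
  obtain ⟨D, hD, hDδ⟩ : ∃ D : ℝ, 0 < D ∧ 4 * M ^ 2 / D ^ 2 ≤ δ := by
    refine ⟨2 * M / √δ, by positivity, ?_⟩
    rw [div_pow, mul_pow, sq_sqrt hδ.le]
    apply le_of_eq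
    field_simp
    ring
  let R₀ := 2 * √((1 + S) * exp D)
  refine ⟨R₀, by positivity, fun R hR => ?_⟩
  have hR2 : (1 + S) * exp D ≤ R ^ 2 / 4 := by
    have h1 : R₀ ^ 2 ≤ R ^ 2 := pow_le_pow_left₀ (by positivity) hR 2
    have h2 : R₀ ^ 2 = 4 * ((1 + S) * exp D) := by
      simp only [R₀, mul_pow]; rw [sq_sqrt (by positivity)]; ring
    linarith
  have hS1 : 0 < 1 + S := by linarith
  have hq : ∀ x, 0 < 1 + sqLen x := fun x => by have := sqLen_nonneg x; linarith
  let F : ℝ → ℝ := fun s => 1 - smoothTransition ((log (1 + s) - log (1 + S)) / D)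
  have hz : ∀ x, R ^ 2 / 4 ≤ sqLen x → F (sqLen x) = 0 := by
    intro x hx
    have : 1 ≤ (log (1 + sqLen x) - log (1 + S)) / D := by
      rw [le_div_iff₀ hD, one_mul, le_sub_iff_add_le, ← log_exp D,
        ← log_mul (exp_pos _).ne' hS1.ne']
      exact log_le_log (by positivity) (by rw [mul_comm]; linarith)
    simp [F, smoothTransition.one_of_one_le this]
  refine ⟨fun x => F (sqLen x), ?_, fun x => ⟨?_, ?_⟩, fun x hx => ?_, hz, fun x hx => ?_,
    fun x => ?_⟩
  · refine contDiff_const.sub (smoothTransition.contDiff.comp ?_)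
    refine ContDiff.div_const (ContDiff.sub ?_ contDiff_const) _
    exact (contDiff_const.add contDiff_sqLen).log fun x => (hq x).ne'
  · simp only [F]; linarith [smoothTransition.le_one ((log (1 + sqLen x) - log (1 + S)) / D)]
  · simp only [F]; linarith [smoothTransition.nonneg ((log (1 + sqLen x) - log (1 + S)) / D)]
  · have : (log (1 + sqLen x) - log (1 + S)) / D ≤ 0 := by
      refine div_nonpos_of_nonpos_of_nonneg ?_ hD.le
      linarith [log_le_log (hq x) (by linarith : 1 + sqLen x ≤ 1 + S)]
    simp [F, smoothTransition.zero_of_nonpos this]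
  · refine gradSq_eq_zero_of_eventually (c := 0) ?_
    filter_upwards [(isOpen_lt continuous_const continuous_sqLen).mem_nhds hx] with y hy
    exact hz y (le_of_lt hy)
  · have h1 : HasDerivAt (fun s => (log (1 + s) - log (1 + S)) / D)
        (1 / (1 + sqLen x) / D) (sqLen x) := by
      have := ((((hasDerivAt_id (sqLen x)).const_add 1).log (hq x).ne').sub_const
        (log (1 + S))).div_const D
      simpa using this
    have h2 := ((smoothTransition.contDiff (n := 1)).differentiable one_ne_zero
      ((log (1 + sqLen x) - log (1 + S)) / D)).hasDerivAt
    have h3 := (h2.comp (sqLen x) h1).const_sub 1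
    rw [gradSq_radial (F := F) h3]
    set d := deriv smoothTransition ((log (1 + sqLen x) - log (1 + S)) / D)
    have hd : d ^ 2 ≤ M ^ 2 := sq_le_sq' (by linarith [abs_le.1 (hMb ((log (1 + sqLen x) - log (1 + S)) / D))]) (abs_le.1 (hMb _)).2
    have e : 4 * (-(d * (1 / (1 + sqLen x) / D))) ^ 2 * sqLen x
        = (4 * d ^ 2 / D ^ 2) * (sqLen x / (1 + sqLen x)) / (1 + sqLen x) := by
      have := (hq x).ne'
      field_simp
    rw [e]
    refine div_le_div_of_nonneg_right ?_ (hq x).le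
    have h5 : sqLen x / (1 + sqLen x) ≤ 1 := by
      rw [div_le_one (hq x)]; linarith
    have h6 : 4 * d ^ 2 / D ^ 2 ≤ δ := le_trans (by gcongr) hDδ
    calc _ ≤ 4 * d ^ 2 / D ^ 2 * 1 := by gcongr
      _ ≤ δ := by linarith

lemma exists_ball_cutoff : ∃ K : ℝ, 0 < K ∧ ∀ R : ℝ, 0 < R → ∃ η : Vec 3 → ℝ,
    ContDiff ℝ (⊤ : ℕ∞) η ∧ (∀ x, 0 ≤ η x ∧ η x ≤ 1) ∧ (∀ x, sqLen x ≤ R ^ 2 / 4 → η x = 1) ∧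
      (∀ x, R ^ 2 ≤ sqLen x → η x = 0) ∧ (∀ x, R ^ 2 < sqLen x → gradSq η x = 0) ∧
      (∀ x, gradSq η x ≤ K / R ^ 2) := by
  obtain ⟨M, hM, hMb⟩ := exists_bound_deriv_smoothTransition
  refine ⟨64 / 9 * M ^ 2, by positivity, fun R hR => ?_⟩
  let F : ℝ → ℝ := fun s => 1 - smoothTransition ((4 * s / R ^ 2 - 1) / 3)
  have hz : ∀ x, R ^ 2 ≤ sqLen x → F (sqLen x) = 0 := by
    intro x hx
    have : 1 ≤ (4 * sqLen x / R ^ 2 - 1) / 3 := by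
      have : 4 ≤ 4 * sqLen x / R ^ 2 := by
        rw [le_div_iff₀ (by positivity)]; linarith
      linarith
    simp [F, smoothTransition.one_of_one_le this]
  have hz' : ∀ x, R ^ 2 < sqLen x → gradSq (fun x => F (sqLen x)) x = 0 := by
    intro x hx
    refine gradSq_eq_zero_of_eventually (c := 0) ?_
    filter_upwards [(isOpen_lt continuous_const continuous_sqLen).mem_nhds hx] with y hy
    exact hz y (le_of_lt hy)
  refine ⟨fun x => F (sqLen x), ?_, fun x => ⟨?_, ?_⟩, fun x hx => ?_, hz, hz', fun x => ?_⟩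
  · refine contDiff_const.sub (smoothTransition.contDiff.comp ?_)
    refine ContDiff.div_const (ContDiff.sub ?_ contDiff_const) _
    exact (contDiff_const.mul contDiff_sqLen).div_const _
  · simp only [F]; linarith [smoothTransition.le_one ((4 * sqLen x / R ^ 2 - 1) / 3)]
  · simp only [F]; linarith [smoothTransition.nonneg ((4 * sqLen x / R ^ 2 - 1) / 3)]
  · have : (4 * sqLen x / R ^ 2 - 1) / 3 ≤ 0 := by
      have : 4 * sqLen x / R ^ 2 ≤ 1 := by
        rw [div_le_one (by positivity)]; linarith
      linarith
    simp [F, smoothTransition.zero_of_nonpos this]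
  · rcases lt_or_ge (R ^ 2) (sqLen x) with h | h
    · rw [hz' x h]; positivity
    have h1 : HasDerivAt (fun s => (4 * s / R ^ 2 - 1) / 3) (4 / R ^ 2 / 3) (sqLen x) := by
      have := (((((hasDerivAt_id (sqLen x)).const_mul 4).div_const (R ^ 2)).sub_const 1)).div_const 3
      simpa using this
    have h2 := ((smoothTransition.contDiff (n := 1)).differentiable one_ne_zero
      ((4 * sqLen x / R ^ 2 - 1) / 3)).hasDerivAt
    have h3 := (h2.comp (sqLen x) h1).const_sub 1
    rw [gradSq_radial (F := F) h3]
    have hb := hMb ((4 * sqLen x / R ^ 2 - 1) / 3)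
    set d := deriv smoothTransition ((4 * sqLen x / R ^ 2 - 1) / 3)
    have hd : d ^ 2 ≤ M ^ 2 := sq_le_sq' (by linarith [abs_le.1 hb]) (abs_le.1 hb).2
    have e : 4 * (-(d * (4 / R ^ 2 / 3))) ^ 2 * sqLen x
        = 64 / 9 * d ^ 2 * (sqLen x / R ^ 2) / R ^ 2 := by
      field_simp; ring
    rw [e]
    refine div_le_div_of_nonneg_right ?_ (by positivity)
    have h5 : sqLen x / R ^ 2 ≤ 1 := by
      rw [div_le_one (by positivity)]; linarith
    have := sqLen_nonneg x
    calc 64 / 9 * d ^ 2 * (sqLen x / R ^ 2) ≤ 64 / 9 * d ^ 2 * 1 := by gcongr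
      _ ≤ _ := by linarith

lemma gradSq_mul_le {u w : Vec 3 → ℝ} (hu : ContDiff ℝ 1 u) (hw : ContDiff ℝ 1 w) {δ : ℝ}
    (hδ : 0 < δ) (x : Vec 3) : gradSq (fun y => u y * w y) x
      ≤ (1 + δ) * (u x ^ 2 * gradSq w x) + (1 + 1 / δ) * (w x ^ 2 * gradSq u x) := by
  have h := ((hu.differentiable one_ne_zero x).hasFDerivAt.mul
    (hw.differentiable one_ne_zero x).hasFDerivAt).fderiv
  have h' : fderiv ℝ (fun y => u y * w y) x = u x • fderiv ℝ w x + w x • fderiv ℝ u x := h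
  simp only [gradSq, h', Finset.mul_sum, ← Finset.sum_add_distrib]
  refine Finset.sum_le_sum fun k _ => ?_
  simp only [add_apply, smul_apply, smul_eq_mul]
  set p := u x * fderiv ℝ w x (Pi.single k 1)
  set q := w x * fderiv ℝ u x (Pi.single k 1)
  have e : (1 + δ) * p ^ 2 + (1 + 1 / δ) * q ^ 2 - (p + q) ^ 2 = (δ * p - q) ^ 2 / δ := by
    field_simp; ring
  have : 0 ≤ (δ * p - q) ^ 2 / δ := by positivity
  rw [← mul_pow, ← mul_pow]
  linarith

lemma ofReal_le_scatSet {V : Vec 3 → ℝ≥0∞} {a : ℝ}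
    (hscat : sInf (scatSet3 V) = ENNReal.ofReal (4 * π * a)) {f : Vec 3 → ℝ}
    (hf : ContDiff ℝ (⊤ : ℕ∞) f) (hc : HasCompactSupport fun x => f x - 1) :
    ENNReal.ofReal (4 * π * a)
      ≤ ∫⁻ x, (ENNReal.ofReal (gradSq f x) + V x * ENNReal.ofReal (f x ^ 2) / 2) := by
  rw [← hscat]
  refine sInf_le ⟨f, hf, hc, ?_⟩
  refine lintegral_congr fun x => ?_
  simp_rw [enorm_sq_eq_ofReal]
  rw [gradSq, ENNReal.ofReal_sum_of_nonneg fun _ _ => sq_nonneg _]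

lemma fderiv_sub_const_eq (g : Vec 3 → ℝ) (c : ℝ) : fderiv ℝ (fun x => g x - c) = fderiv ℝ g := by
  funext x; exact fderiv_sub_const c

lemma gradSq_sub_const (g : Vec 3 → ℝ) (c : ℝ) : gradSq (fun x => g x - c) = gradSq g := by
  funext x; simp only [gradSq, fderiv_sub_const_eq]

lemma mem_closedBall_of_sqLen_le {x : Vec 3} {R : ℝ} (hR : 0 ≤ R) (h : sqLen x ≤ R ^ 2) :
    x ∈ Metric.closedBall (0 : Vec 3) R := by
  rw [mem_closedBall_zero_iff, pi_norm_le_iff_of_nonneg hR]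
  intro k
  have : x k ^ 2 ≤ sqLen x :=
    Finset.single_le_sum (f := fun k => x k ^ 2) (fun _ _ => sq_nonneg _) (Finset.mem_univ k)
  exact abs_le_of_sq_le_sq (this.trans h) hR

lemma exists_sqLen_bound {V : Vec 3 → ℝ≥0∞} (hV : HasCompactSupport V) :
    ∃ S : ℝ, 0 ≤ S ∧ ∀ x, V x ≠ 0 → sqLen x ≤ S := by
  obtain ⟨C, hC⟩ := hV.exists_bound_of_continuousOn (f := sqLen) continuous_sqLen.continuousOn
  refine ⟨max C 0, le_max_right _ _, fun x hx => ?_⟩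
  exact ((le_abs_self _).trans (hC x (subset_tsupport V hx))).trans (le_max_left _ _)

lemma gradSq_const_add_mul (c : ℝ) (b : ℝ) {u : Vec 3 → ℝ} (x : Vec 3)
    (hu : DifferentiableAt ℝ u x) :
    gradSq (fun y => c + b * u y) x = b ^ 2 * gradSq u x := by
  have : fderiv ℝ (fun y => c + b * u y) x = b • fderiv ℝ u x :=
    ((hu.hasFDerivAt.const_mul b).const_add c).fderiv
  simp only [gradSq, this, Finset.mul_sum, smul_apply, smul_eq_mul, mul_pow]

/-- The weighted mass of `g - c` near the origin is controlled by the Dirichlet energy. -/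
lemma exists_weighted_bound : ∃ K : ℝ, 0 < K ∧ ∀ R : ℝ, 0 < R → ∀ w : Vec 3 → ℝ,
    ContDiff ℝ (⊤ : ℕ∞) w →
    ∫⁻ x in {x | sqLen x ≤ R ^ 2 / 4}, ENNReal.ofReal (w x ^ 2 / (1 + sqLen x))
      ≤ ∫⁻ x in Metric.closedBall (0 : Vec 3) R,
          ENNReal.ofReal (K * gradSq w x + K / R ^ 2 * w x ^ 2) := by
  obtain ⟨K, hK, hcut⟩ := exists_ball_cutoff
  refine ⟨8 + 8 * K, by positivity, fun R hR w hw => ?_⟩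
  obtain ⟨η, hη, hη01, hη1, hη0, hη0', hηK⟩ := hcut R hR
  have hw1 : ContDiff ℝ 1 w := hw.of_le (by simp)
  have hη1' : ContDiff ℝ 1 η := hη.of_le (by simp)
  have hq : ∀ x, 0 < 1 + sqLen x := fun x => by have := sqLen_nonneg x; linarith
  have hηc : HasCompactSupport fun x => η x * w x := by
    refine HasCompactSupport.intro (isCompact_closedBall (0 : Vec 3) R) fun x hx => ?_
    rw [hη0 x, zero_mul]
    by_contra h
    exact hx (mem_closedBall_of_sqLen_le hR.le (not_le.1 h).le)
  have hH := hardy (hη1'.mul hw1) hηc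
  have hcont : Continuous fun x => (η x * w x) ^ 2 / (1 + sqLen x) :=
    ((hη1'.continuous.mul hw1.continuous).pow 2).div (continuous_const.add continuous_sqLen)
      fun x => (hq x).ne'
  have hgc := continuous_gradSq hw1
  have hcw := hw1.continuous
  have hI : Integrable fun x => (η x * w x) ^ 2 / (1 + sqLen x) := by
    refine hcont.integrable_of_hasCompactSupport (hηc.mono fun x hx => ?_)
    contrapose! hx
    simp only [Function.mem_support, not_not] at hx ⊢
    simp [hx]
  have hI2 : IntegrableOn (fun x => (8 + 8 * K) * gradSq w x + (8 + 8 * K) / R ^ 2 * w x ^ 2)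
      (Metric.closedBall (0 : Vec 3) R) :=
    (by fun_prop : Continuous _).continuousOn.integrableOn_compact (isCompact_closedBall _ _)
  calc ∫⁻ x in {x | sqLen x ≤ R ^ 2 / 4}, ENNReal.ofReal (w x ^ 2 / (1 + sqLen x))
      ≤ ∫⁻ x in {x | sqLen x ≤ R ^ 2 / 4}, ENNReal.ofReal ((η x * w x) ^ 2 / (1 + sqLen x)) := by
        refine setLIntegral_mono' (measurableSet_le continuous_sqLen.measurable measurable_const) fun x hx => ?_
        rw [hη1 x hx, one_mul]
    _ ≤ ∫⁻ x, ENNReal.ofReal ((η x * w x) ^ 2 / (1 + sqLen x)) := setLIntegral_le_lintegral _ _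
    _ = ENNReal.ofReal (∫ x, (η x * w x) ^ 2 / (1 + sqLen x)) :=
        (ofReal_integral_eq_lintegral_ofReal hI (.of_forall fun x => by
          have := hq x; positivity)).symm
    _ ≤ ENNReal.ofReal (∫ x in Metric.closedBall (0 : Vec 3) R,
          ((8 + 8 * K) * gradSq w x + (8 + 8 * K) / R ^ 2 * w x ^ 2)) := by
        refine ENNReal.ofReal_le_ofReal (hH.trans ?_)
        rw [← integral_const_mul, ← integral_indicator Metric.isClosed_closedBall.measurableSet]
        refine integral_mono
          (((continuous_gradSq (hη1'.mul hw1)).integrable_of_hasCompactSupport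
            (hasCompactSupport_gradSq hηc)).const_mul 4)
          (hI2.integrable_indicator Metric.isClosed_closedBall.measurableSet) fun x => ?_
        have h1 := gradSq_mul_le hη1' hw1 one_pos x
        have g0 := gradSq_nonneg w x
        by_cases hx : x ∈ Metric.closedBall (0 : Vec 3) R
        · simp only [Set.indicator_of_mem hx]
          have h2 : η x ^ 2 ≤ 1 := pow_le_one₀ (hη01 x).1 (hη01 x).2
          have h3 : η x ^ 2 * gradSq w x ≤ gradSq w x := mul_le_of_le_one_left g0 h2
          have h4 : w x ^ 2 * gradSq η x ≤ w x ^ 2 * (K / R ^ 2) := by gcongr; exact hηK x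
          have h5 : (8 + 8 * K) / R ^ 2 * w x ^ 2 = 8 * (w x ^ 2 * (K / R ^ 2)) + 8 / R ^ 2 * w x ^ 2 := by ring
          have h6 : 0 ≤ 8 / R ^ 2 * w x ^ 2 := by positivity
          have h7 : 0 ≤ 8 * K * gradSq w x := by positivity
          norm_num at h1
          linarith
        · simp only [Set.indicator_of_notMem hx]
          have h2 : R ^ 2 < sqLen x := by
            by_contra h
            exact hx (mem_closedBall_of_sqLen_le hR.le (not_lt.1 h))
          rw [hη0 x h2.le, hη0' x h2] at h1
          norm_num at h1
          linarith
    _ = _ := by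
        refine ofReal_integral_eq_lintegral_ofReal hI2 (.of_forall fun x => ?_)
        have := gradSq_nonneg w x
        positivity

/-- Local lower bound by the scattering length, with a small error relative to a constant `c`,
centred at the origin. -/
lemma scattering_local_zero {V : Vec 3 → ℝ≥0∞} (hVm : Measurable V) (hV : HasCompactSupport V)
    {a : ℝ} (hscat : sInf (scatSet3 V) = ENNReal.ofReal (4 * π * a)) {ε : ℝ} (hε : 0 < ε) :
    ∃ R₀ : ℝ, 0 < R₀ ∧ ∀ R ≥ R₀, ∀ g : Vec 3 → ℝ, ContDiff ℝ (⊤ : ℕ∞) g → ∀ c : ℝ,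
      ENNReal.ofReal (4 * π * a * c ^ 2) ≤ ∫⁻ z in Metric.closedBall (0 : Vec 3) R,
        (ENNReal.ofReal ((1 + ε) * gradSq g z + ε / R ^ 2 * (g z - c) ^ 2)
          + V z * ENNReal.ofReal (g z ^ 2) / 2) := by
  obtain ⟨K, hK, hKb⟩ := exists_weighted_bound
  obtain ⟨S, hS, hVS⟩ := exists_sqLen_bound hV
  let δ : ℝ := ε / 2
  have hδ : 0 < δ := by positivity
  let δ' : ℝ := δ / ((1 + 1 / δ) * K)
  have hδ' : 0 < δ' := by positivity
  obtain ⟨R₀, hR₀, hcut⟩ := exists_log_cutoff S hS hδ'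
  refine ⟨R₀, hR₀, fun R hR g hg c => ?_⟩
  have hRpos : 0 < R := hR₀.trans_le hR
  rcases eq_or_ne c 0 with rfl | hc
  · simp
  obtain ⟨χ, hχ, hχ01, hχ1, hχ0, hχ0', hχδ⟩ := hcut R hR
  have hq : ∀ x, 0 < 1 + sqLen x := fun x => by have := sqLen_nonneg x; linarith
  let w : Vec 3 → ℝ := fun x => g x - c
  have hw : ContDiff ℝ (⊤ : ℕ∞) w := hg.sub contDiff_const
  have hw1 : ContDiff ℝ 1 w := hw.of_le (by simp)
  have hχ1' : ContDiff ℝ 1 χ := hχ.of_le (by simp)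
  have hball : ∀ x : Vec 3, sqLen x ≤ R ^ 2 / 4 → x ∈ Metric.closedBall (0 : Vec 3) R :=
    fun x hx => mem_closedBall_of_sqLen_le hRpos.le (by nlinarith)
  let f : Vec 3 → ℝ := fun x => 1 + c⁻¹ * (χ x * w x)
  have hf : ContDiff ℝ (⊤ : ℕ∞) f := contDiff_const.add (contDiff_const.mul (hχ.mul hw))
  have hfc : HasCompactSupport fun x => f x - 1 := by
    refine HasCompactSupport.intro (isCompact_closedBall (0 : Vec 3) R) fun x hx => ?_
    have : χ x = 0 := hχ0 x (by
      by_contra h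
      exact hx (hball x (not_le.1 h).le))
    simp [f, this]
  have hmain := ofReal_le_scatSet hscat hf hfc
  have hgm := (continuous_gradSq (f := g) (hg.of_le (by simp))).measurable
  have hgcm := hg.continuous.measurable
  have hBm : MeasurableSet (Metric.closedBall (0 : Vec 3) R) :=
    Metric.isClosed_closedBall.measurableSet
  have hAm : MeasurableSet {x : Vec 3 | sqLen x ≤ R ^ 2 / 4} :=
    measurableSet_le continuous_sqLen.measurable measurable_const
  have hb := hKb R hRpos w hw
  -- pointwise comparison of the scattering energy density
  have hpt : ∀ x, ENNReal.ofReal (c ^ 2) * (ENNReal.ofReal (gradSq f x) + V x * ENNReal.ofReal (f x ^ 2) / 2)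
      ≤ (Metric.closedBall (0 : Vec 3) R).indicator (fun z =>
          ENNReal.ofReal ((1 + δ) * gradSq g z) + V z * ENNReal.ofReal (g z ^ 2) / 2) x
        + {x | sqLen x ≤ R ^ 2 / 4}.indicator (fun z =>
          ENNReal.ofReal ((1 + 1 / δ) * δ') * ENNReal.ofReal (w z ^ 2 / (1 + sqLen z))) x := by
    intro x
    have e1 : gradSq f x = (c⁻¹) ^ 2 * gradSq (fun y => χ y * w y) x :=
      gradSq_const_add_mul 1 c⁻¹ x ((hχ1'.mul hw1).differentiable one_ne_zero x)
    have e2 := gradSq_mul_le hχ1' hw1 hδ x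
    have e3 : gradSq w x = gradSq g x := congrFun (gradSq_sub_const g c) x
    have e4 : c ^ 2 * gradSq f x = gradSq (fun y => χ y * w y) x := by
      rw [e1, ← mul_assoc, ← mul_pow, mul_inv_cancel₀ hc]; simp
    have e5 : ENNReal.ofReal (c ^ 2) * (V x * ENNReal.ofReal (f x ^ 2) / 2)
        = V x * ENNReal.ofReal ((c * f x) ^ 2) / 2 := by
      rw [mul_pow, ENNReal.ofReal_mul (sq_nonneg c), div_eq_mul_inv, div_eq_mul_inv]; ring
    rw [mul_add, ← ENNReal.ofReal_mul (sq_nonneg c), e4, e5]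
    have g0 := gradSq_nonneg g x
    by_cases hx : sqLen x ≤ R ^ 2 / 4
    · rw [Set.indicator_of_mem (hball x hx), Set.indicator_of_mem (s := {x | sqLen x ≤ R ^ 2 / 4}) hx,
        add_right_comm, ← ENNReal.ofReal_mul (by positivity),
        ← ENNReal.ofReal_add (by positivity) (by have := hq x; positivity)]
      refine add_le_add (ENNReal.ofReal_le_ofReal (e2.trans ?_)) ?_
      · rw [e3, mul_assoc (1 + 1 / δ)]
        have h2 : χ x ^ 2 * gradSq g x ≤ gradSq g x :=
          mul_le_of_le_one_left g0 (pow_le_one₀ (hχ01 x).1 (hχ01 x).2)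
        have h3 : w x ^ 2 * gradSq χ x ≤ δ' * (w x ^ 2 / (1 + sqLen x)) := by
          calc w x ^ 2 * gradSq χ x ≤ w x ^ 2 * (δ' / (1 + sqLen x)) := by
                gcongr; exact hχδ x
            _ = _ := by ring
        gcongr
      · rcases eq_or_ne (V x) 0 with h0 | h0
        · simp [h0]
        · have : c * f x = g x := by
            simp only [f, w, hχ1 x (hVS x h0)]
            field_simp; ring
          rw [this]
    · have h0 : V x = 0 := by
        by_contra h0
        have h1 := hχ1 x (hVS x h0)
        rw [hχ0 x (not_le.1 hx).le] at h1
        exact zero_ne_one h1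
      rw [hχ0 x (not_le.1 hx).le, hχ0' x (not_le.1 hx)] at e2
      have : gradSq (fun y => χ y * w y) x ≤ 0 := by simpa using e2
      rw [ENNReal.ofReal_of_nonpos this, h0]
      simp
  calc ENNReal.ofReal (4 * π * a * c ^ 2)
      = ENNReal.ofReal (c ^ 2) * ENNReal.ofReal (4 * π * a) := by
        rw [← ENNReal.ofReal_mul (sq_nonneg c)]; congr 1; ring
    _ ≤ ∫⁻ x, ENNReal.ofReal (c ^ 2) * (ENNReal.ofReal (gradSq f x) + V x * ENNReal.ofReal (f x ^ 2) / 2) := by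
        rw [lintegral_const_mul' _ _ ENNReal.ofReal_ne_top]
        gcongr
    _ ≤ _ := lintegral_mono hpt
    _ = (∫⁻ z in Metric.closedBall (0 : Vec 3) R,
          (ENNReal.ofReal ((1 + δ) * gradSq g z) + V z * ENNReal.ofReal (g z ^ 2) / 2))
        + ENNReal.ofReal ((1 + 1 / δ) * δ') * ∫⁻ z in {x | sqLen x ≤ R ^ 2 / 4},
            ENNReal.ofReal (w z ^ 2 / (1 + sqLen z)) := by
        rw [lintegral_add_left (by
            refine Measurable.indicator ?_ hBm
            fun_prop), lintegral_indicator hBm, lintegral_indicator hAm,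
          lintegral_const_mul' _ _ ENNReal.ofReal_ne_top]
    _ ≤ (∫⁻ z in Metric.closedBall (0 : Vec 3) R,
          (ENNReal.ofReal ((1 + δ) * gradSq g z) + V z * ENNReal.ofReal (g z ^ 2) / 2))
        + ∫⁻ x in Metric.closedBall (0 : Vec 3) R,
          ENNReal.ofReal ((1 + 1 / δ) * δ') * ENNReal.ofReal (K * gradSq w x + K / R ^ 2 * w x ^ 2) := by
        rw [lintegral_const_mul' _ _ ENNReal.ofReal_ne_top]
        gcongr
    _ ≤ _ := by
        rw [← lintegral_add_left (by fun_prop)]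
        refine lintegral_mono fun z => ?_
        have e3 : gradSq w z = gradSq g z := congrFun (gradSq_sub_const g c) z
        have g0 := gradSq_nonneg g z
        rw [add_right_comm, ← ENNReal.ofReal_mul (by positivity),
          ← ENNReal.ofReal_add (by positivity) (by rw [e3]; positivity), e3]
        have h1 : (1 + 1 / δ) * δ' * K = δ := by simp only [δ']; field_simp
        have h2 : (1 + 1 / δ) * δ' * (K * gradSq g z + K / R ^ 2 * w z ^ 2)
            = ((1 + 1 / δ) * δ' * K) * gradSq g z + ((1 + 1 / δ) * δ' * K) / R ^ 2 * w z ^ 2 := by ring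
        rw [h2, h1, ← add_assoc]
        gcongr
        · simp only [δ]; linarith
        · simp only [δ]; linarith

/-- Local lower bound by the scattering length, with a small error relative to a constant `c`. -/
lemma scattering_local {V : Vec 3 → ℝ≥0∞} (hVm : Measurable V) (hV : HasCompactSupport V)
    {a : ℝ} (hscat : sInf (scatSet3 V) = ENNReal.ofReal (4 * π * a)) {ε : ℝ} (hε : 0 < ε) :
    ∃ R₀ : ℝ, 0 < R₀ ∧ ∀ R ≥ R₀, ∀ g : Vec 3 → ℝ, ContDiff ℝ (⊤ : ℕ∞) g → ∀ (c : ℝ) (y : Vec 3),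
      ENNReal.ofReal (4 * π * a * c ^ 2) ≤ ∫⁻ z in Metric.closedBall y R,
        (ENNReal.ofReal ((1 + ε) * gradSq g z + ε / R ^ 2 * (g z - c) ^ 2)
          + V (z - y) * ENNReal.ofReal (g z ^ 2) / 2) := by
  obtain ⟨R₀, hR₀, h⟩ := scattering_local_zero hVm hV hscat hε
  refine ⟨R₀, hR₀, fun R hR g hg c y => ?_⟩
  have h1 := h R hR (fun x => g (y + x)) (hg.comp (contDiff_const.add contDiff_id)) c
  refine h1.trans (le_of_eq ?_)
  have hBm : ∀ y : Vec 3, MeasurableSet (Metric.closedBall y R) := fun y =>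
    Metric.isClosed_closedBall.measurableSet
  rw [← lintegral_indicator (hBm _), ← lintegral_indicator (hBm _)]
  refine Eq.trans (lintegral_congr fun z => ?_) (lintegral_add_left_eq_self _ y)
  have hm : y + z ∈ Metric.closedBall y R ↔ z ∈ Metric.closedBall (0 : Vec 3) R := by
    simp
  by_cases hz : z ∈ Metric.closedBall (0 : Vec 3) R
  · rw [Set.indicator_of_mem hz, Set.indicator_of_mem (hm.2 hz)]
    simp only [gradSq, fderiv_comp_add_left, add_sub_cancel_left]
  · rw [Set.indicator_of_notMem hz, Set.indicator_of_notMem (mt hm.1 hz)]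

lemma lintegral_lintegral_update {ι : Type*} [Fintype ι] [DecidableEq ι] {X : ι → Type*}
    [∀ i, MeasurableSpace (X i)] (μ : ∀ i, Measure (X i)) [∀ i, SigmaFinite (μ i)] (i : ι)
    {g : (∀ i, X i) → ℝ≥0∞} (hg : Measurable g) :
    ∫⁻ x, ∫⁻ z, g (Function.update x i z) ∂μ i ∂Measure.pi μ
      = (∫⁻ x, g x ∂Measure.pi μ) * μ i Set.univ := by
  rcases isEmpty_or_nonempty (∀ i, X i) with h | ⟨⟨x⟩⟩
  · have : Measure.pi μ = 0 := Measure.eq_zero_of_isEmpty _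
    simp [this]
  set F : (∀ i, X i) → ℝ≥0∞ := lmarginal μ {i} g with hF
  have hF' : (fun x => ∫⁻ z, g (Function.update x i z) ∂μ i) = F := by
    rw [hF, lmarginal_singleton]
  have hFm : Measurable F := hg.lmarginal μ
  have h2 : lmarginal μ {i} F = fun x => F x * μ i Set.univ := by
    rw [lmarginal_singleton]
    funext y
    have : ∀ z, F (Function.update y i z) = F y := fun z =>
      lmarginal_update_of_mem μ (by simp) g y z
    simp [this]
  rw [show (∫⁻ x, ∫⁻ z, g (Function.update x i z) ∂μ i ∂Measure.pi μ) = ∫⁻ x, F x ∂Measure.pi μ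
    from by rw [← hF'], lintegral_eq_lmarginal_univ x, lintegral_eq_lmarginal_univ (f := g) x,
    lmarginal_erase' _ hFm (Finset.mem_univ i), lmarginal_erase' _ hg (Finset.mem_univ i)]
  have h3 : (∫⋯∫⁻_{i}, F ∂μ) = lmarginal μ {i} F := rfl
  have h4 : lmarginal μ {i} F = fun x => μ i Set.univ * F x := by
    rw [h2]; funext x; rw [mul_comm]
  have h5 : (fun x => ∫⁻ xᵢ, F (Function.update x i xᵢ) ∂μ i) = lmarginal μ {i} F := by
    rw [lmarginal_singleton]
  have h6 : (fun x => ∫⁻ xᵢ, g (Function.update x i xᵢ) ∂μ i) = F := hF'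
  rw [h5, h6, h4, mul_comm]
  unfold lmarginal
  rw [lintegral_const_mul]
  exact hFm.comp measurable_updateFinset

section Poincare

variable {E : Type*} [NormedAddCommGroup E] [NormedSpace ℝ E] [FiniteDimensional ℝ E]
  [MeasurableSpace E] [BorelSpace E] (μ : Measure E) [μ.IsAddHaarMeasure]

lemma lintegral_comp_affine_le {H : E → ℝ≥0∞} (hH : Measurable H) (c : E) {s : ℝ}
    (hs : 1 / 2 ≤ s) :
    ∫⁻ x, H (c + s • x) ∂μ ≤ 2 ^ Module.finrank ℝ E * ∫⁻ x, H x ∂μ := by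
  have hs0 : 0 < s := by linarith
  have h1 : ∫⁻ x, H (c + s • x) ∂μ = ∫⁻ x, H (c + x) ∂(Measure.map (s • ·) μ) := by
    rw [lintegral_map (by fun_prop) (by fun_prop)]
  rw [h1, Measure.map_addHaar_smul μ hs0.ne', lintegral_smul_measure, lintegral_add_left_eq_self,
    smul_eq_mul]
  gcongr
  have : |(s ^ Module.finrank ℝ E)⁻¹| ≤ 2 ^ Module.finrank ℝ E := by
    rw [abs_of_pos (by positivity), ← inv_pow]
    gcongr
    rw [inv_le_comm₀ hs0 (by norm_num)]; linarith
  calc ENNReal.ofReal |(s ^ Module.finrank ℝ E)⁻¹| ≤ ENNReal.ofReal (2 ^ Module.finrank ℝ E) :=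
        ENNReal.ofReal_le_ofReal this
    _ = _ := by rw [ENNReal.ofReal_pow (by norm_num)]; norm_num

lemma setLIntegral_comp_affine_le {S : Set E} (hS : Convex ℝ S) (hSm : MeasurableSet S)
    {G : E → ℝ≥0∞} (hG : Measurable G) {y : E} (hy : y ∈ S) {s : ℝ} (hs : 1 / 2 ≤ s)
    (hs1 : s ≤ 1) :
    ∫⁻ x in S, G ((1 - s) • y + s • x) ∂μ ≤ 2 ^ Module.finrank ℝ E * ∫⁻ x in S, G x ∂μ := by
  rw [← lintegral_indicator hSm, ← lintegral_indicator hSm]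
  refine le_trans (lintegral_mono fun x => ?_)
    (lintegral_comp_affine_le μ (hG.indicator hSm) ((1 - s) • y) hs)
  by_cases hx : x ∈ S
  · have : (1 - s) • y + s • x ∈ S := hS hy hx (by linarith) (by linarith) (by ring)
    simp [hx, this]
  · simp [hx]

lemma sq_sub_le_lintegral_segment {φ : E → ℝ} (hφ : ContDiff ℝ 1 φ) {G : E → ℝ≥0∞}
    {x y : E} (hG : ∀ z, ENNReal.ofReal (fderiv ℝ φ z (x - y) ^ 2) ≤ G z) :
    ENNReal.ofReal ((φ x - φ y) ^ 2) ≤ ∫⁻ t in Set.Icc (0 : ℝ) 1, G ((1 - t) • y + t • x) := by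
  set h : ℝ → ℝ := fun t => fderiv ℝ φ ((1 - t) • y + t • x) (x - y) with hh
  have hcont : Continuous h := by
    have := hφ.continuous_fderiv (by norm_num)
    exact (this.comp (by fun_prop)).clm_apply continuous_const
  have hder : ∀ t : ℝ, HasDerivAt (fun t : ℝ => φ ((1 - t) • y + t • x)) (h t) t := by
    intro t
    have h1 : HasDerivAt (fun t : ℝ => (1 - t) • y + t • x) (x - y) t := by
      have := (((hasDerivAt_id t).const_sub 1).smul_const y).add ((hasDerivAt_id t).smul_const x)
      refine this.congr_deriv ?_
      simp; abel
    exact ((hφ.differentiable (by norm_num)) _).hasFDerivAt.comp_hasDerivAt t h1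
  have hftc : ∫ t in (0:ℝ)..1, h t = φ x - φ y := by
    rw [intervalIntegral.integral_eq_sub_of_hasDerivAt (fun t _ => hder t)
      (hcont.intervalIntegrable _ _)]
    simp
  have hsq : (φ x - φ y) ^ 2 ≤ ∫ t in (0:ℝ)..1, h t ^ 2 := by
    have h0 : 0 ≤ ∫ t in (0:ℝ)..1, (h t - (φ x - φ y)) ^ 2 :=
      intervalIntegral.integral_nonneg (by norm_num) fun t _ => sq_nonneg _
    have h2 : ∫ t in (0:ℝ)..1, (h t - (φ x - φ y)) ^ 2
        = (∫ t in (0:ℝ)..1, h t ^ 2) - 2 * (φ x - φ y) * (∫ t in (0:ℝ)..1, h t)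
          + (φ x - φ y) ^ 2 := by
      have : ∀ t, (h t - (φ x - φ y)) ^ 2
          = h t ^ 2 - 2 * (φ x - φ y) * h t + (φ x - φ y) ^ 2 := fun t => by ring
      simp_rw [this]
      rw [intervalIntegral.integral_add, intervalIntegral.integral_sub,
        intervalIntegral.integral_const_mul]
      · simp
      all_goals exact Continuous.intervalIntegrable (by fun_prop) _ _
    rw [h2, hftc] at h0
    nlinarith
  rw [intervalIntegral.integral_of_le (by norm_num), ← integral_Icc_eq_integral_Ioc] at hsq
  refine (ENNReal.ofReal_le_ofReal hsq).trans ?_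
  rw [ofReal_integral_eq_lintegral_ofReal
    (f := fun t => h t ^ 2) (Continuous.continuousOn (by fun_prop)).integrableOn_Icc (.of_forall fun t => sq_nonneg _)]
  exact lintegral_mono fun t => hG _

lemma exists_const_poincare {S : Set E} (hS : Convex ℝ S) (hSm : MeasurableSet S)
    (h0 : μ S ≠ 0) (htop : μ S ≠ ⊤) {φ : E → ℝ} (hφ : ContDiff ℝ 1 φ) {G : E → ℝ≥0∞}
    (hGm : Measurable G)
    (hG : ∀ x ∈ S, ∀ y ∈ S, ∀ z, ENNReal.ofReal (fderiv ℝ φ z (x - y) ^ 2) ≤ G z) :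
    ∃ c : ℝ, ∫⁻ x in S, ENNReal.ofReal ((φ x - c) ^ 2) ∂μ
      ≤ 2 ^ Module.finrank ℝ E * ∫⁻ x in S, G x ∂μ := by
  have : IsFiniteMeasure (μ.restrict S) := ⟨by simpa using htop.lt_top⟩
  set B := 2 ^ Module.finrank ℝ E * ∫⁻ x in S, G x ∂μ with hB
  have hφc := hφ.continuous
  have hm1 : Measurable fun p : E × E => ENNReal.ofReal ((φ p.2 - φ p.1) ^ 2) := by
    apply Measurable.ennreal_ofReal
    exact (((hφc.comp continuous_snd).sub (hφc.comp continuous_fst)).pow 2).measurable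
  have key : ∫⁻ y in S, ∫⁻ x in S, ENNReal.ofReal ((φ x - φ y) ^ 2) ∂μ ∂μ ≤ B * μ S := by
    calc _ ≤ ∫⁻ y in S, ∫⁻ x in S, (∫⁻ t in Set.Icc (0 : ℝ) 1, G ((1 - t) • y + t • x)) ∂μ ∂μ := by
          refine setLIntegral_mono' hSm fun y hy => setLIntegral_mono' hSm fun x hx => ?_
          exact sq_sub_le_lintegral_segment hφ (hG x hx y hy)
      _ = ∫⁻ y in S, (∫⁻ t in Set.Icc (0 : ℝ) 1, ∫⁻ x in S, G ((1 - t) • y + t • x) ∂μ) ∂μ := by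
          refine lintegral_congr fun y => lintegral_lintegral_swap ?_
          exact (hGm.comp (by fun_prop)).aemeasurable
      _ = ∫⁻ t in Set.Icc (0 : ℝ) 1, ∫⁻ y in S, ∫⁻ x in S, G ((1 - t) • y + t • x) ∂μ ∂μ := by
          refine lintegral_lintegral_swap ?_
          refine Measurable.aemeasurable ?_
          exact Measurable.lintegral_prod_right'
            (f := fun q : (E × ℝ) × E => G ((1 - q.1.2) • q.1.1 + q.1.2 • q.2))
            (hGm.comp (by fun_prop))
      _ ≤ ∫⁻ t in Set.Icc (0 : ℝ) 1, B * μ S := by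
          refine setLIntegral_mono' measurableSet_Icc fun t ht => ?_
          rcases le_total (1 / 2) t with h | h
          · calc _ ≤ ∫⁻ y in S, B ∂μ := setLIntegral_mono' hSm fun y hy =>
                  setLIntegral_comp_affine_le μ hS hSm hGm hy h ht.2
              _ = _ := by simp
          · rw [lintegral_lintegral_swap]
            · calc _ ≤ ∫⁻ x in S, B ∂μ := setLIntegral_mono' hSm fun x hx => by
                    have := setLIntegral_comp_affine_le μ hS hSm hGm hx (s := 1 - t)
                      (by linarith) (by linarith [ht.1])
                    refine le_trans (le_of_eq ?_) this
                    refine lintegral_congr fun y => ?_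
                    congr 1
                    rw [sub_sub_cancel, add_comm]
                _ = _ := by simp
            · exact (hGm.comp (by fun_prop)).aemeasurable
      _ = _ := by simp
  have hmeas : Measurable fun y => ∫⁻ x in S, ENNReal.ofReal ((φ x - φ y) ^ 2) ∂μ :=
    hm1.lintegral_prod_right
  have hne : μ.restrict S ≠ 0 := by
    intro h; apply h0; simpa using congrArg (fun m => m Set.univ) h
  obtain ⟨y, hy⟩ := exists_le_laverage hne hmeas.aemeasurable
  refine ⟨φ y, hy.trans ?_⟩
  rw [laverage_eq, Measure.restrict_apply_univ]
  exact ENNReal.div_le_of_le_mul key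

end Poincare

/-- The half-open cube with lower corner `b` and side `ℓ`. -/
def cell (b : Vec 3) (ℓ : ℝ) : Set (Vec 3) := Set.pi Set.univ fun k => Set.Ico (b k) (b k + ℓ)

lemma mem_cell {b : Vec 3} {ℓ : ℝ} {z : Vec 3} :
    z ∈ cell b ℓ ↔ ∀ k, b k ≤ z k ∧ z k < b k + ℓ := by
  simp [cell, Set.mem_pi]

lemma measurableSet_cell (b : Vec 3) (ℓ : ℝ) : MeasurableSet (cell b ℓ) :=
  MeasurableSet.univ_pi fun _ => measurableSet_Ico

lemma volume_cell (b : Vec 3) (ℓ : ℝ) : volume (cell b ℓ) = ENNReal.ofReal ℓ ^ 3 := by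
  simp [cell, volume_pi_pi]

lemma convex_cell (b : Vec 3) (ℓ : ℝ) : Convex ℝ (cell b ℓ) :=
  convex_pi fun _ _ => convex_Ico _ _

instance isFiniteMeasure_restrict_cell (b : Vec 3) (ℓ : ℝ) :
    IsFiniteMeasure ((volume : Measure (Vec 3)).restrict (cell b ℓ)) :=
  ⟨by rw [Measure.restrict_apply_univ, volume_cell]; finiteness⟩

lemma measure_pi_le_of_forall_update {ι : Type*} [Fintype ι] [DecidableEq ι] {X : ι → Type*}
    [∀ i, MeasurableSpace (X i)] (μ : ∀ i, Measure (X i)) [∀ i, IsFiniteMeasure (μ i)] (i : ι)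
    (h0 : μ i Set.univ ≠ 0)
    {S : Set (∀ i, X i)} (hS : MeasurableSet S) {β : ℝ≥0∞}
    (h : ∀ x, μ i {z | Function.update x i z ∈ S} ≤ β * μ i Set.univ) :
    Measure.pi μ S ≤ β * Measure.pi μ Set.univ := by
  have h1 := lintegral_lintegral_update μ i (g := S.indicator 1) (measurable_one.indicator hS)
  rw [lintegral_indicator_one hS] at h1
  rw [← ENNReal.mul_le_mul_iff_left h0 (measure_ne_top (μ i) _), ← h1]
  calc _ ≤ ∫⁻ x, β * μ i Set.univ ∂Measure.pi μ := by
        refine lintegral_mono fun x => le_trans (le_of_eq ?_) (h x)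
        have hm : MeasurableSet {z | Function.update x i z ∈ S} :=
          (measurable_update x (a := i)) hS
        rw [← lintegral_indicator_one hm]
        rfl
    _ = _ := by rw [lintegral_const]; ring

/-- Configurations in which particle `j` is at distance `R` from the boundary of the cube and at
distance more than `2 * R` from every particle other than `i`. -/
def isolatedSet {ι : Type*} (b : Vec 3) (ℓ R : ℝ) (i j : ι) : Set (ι → Vec 3) :=
  {x | x j ∈ cell (fun k => b k + R) (ℓ - 2 * R) ∧ ∀ k, k ≠ i → k ≠ j → 2 * R < dist (x j) (x k)}

lemma measurableSet_isolatedSet {ι : Type*} [Fintype ι] (b : Vec 3) (ℓ R : ℝ) (i j : ι) :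
    MeasurableSet (isolatedSet b ℓ R i j) := by
  have : isolatedSet b ℓ R i j = (fun x : ι → Vec 3 => x j) ⁻¹' cell (fun k => b k + R) (ℓ - 2 * R)
      ∩ ⋂ k, ⋂ (_ : k ≠ i), ⋂ (_ : k ≠ j), {x | 2 * R < dist (x j) (x k)} := by
    ext x; simp [isolatedSet]
  rw [this]
  refine MeasurableSet.inter ((measurableSet_cell _ _).preimage (measurable_pi_apply j)) ?_
  refine MeasurableSet.iInter fun k => MeasurableSet.iInter fun _ => MeasurableSet.iInter fun _ => ?_
  exact measurableSet_lt measurable_const (by fun_prop)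

lemma volume_closedBall_vec (x : Vec 3) {r : ℝ} (hr : 0 ≤ r) :
    volume (Metric.closedBall x r) = ENNReal.ofReal (2 * r) ^ 3 := by
  rw [Real.volume_pi_closedBall x hr, ENNReal.ofReal_pow (by positivity)]
  simp

lemma measure_compl_isolatedSet_le {ι : Type*} [Fintype ι] [DecidableEq ι] (b : Vec 3)
    {ℓ κ : ℝ} (hℓ : 0 < ℓ) (hκ : 0 < κ) (hκ1 : κ ≤ 1) {i j : ι} :
    Measure.pi (fun _ : ι => volume.restrict (cell b ℓ)) (isolatedSet b ℓ (κ * ℓ) i j)ᶜ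
      ≤ ENNReal.ofReal ((6 + 64 * Fintype.card ι) * κ)
        * Measure.pi (fun _ : ι => volume.restrict (cell b ℓ)) Set.univ := by
  set μ : ι → Measure (Vec 3) := fun _ : ι => volume.restrict (cell b ℓ) with hμ
  have hu : ∀ i, μ i Set.univ = ENNReal.ofReal (ℓ ^ 3) := fun i => by
    rw [Measure.restrict_apply_univ, volume_cell, ENNReal.ofReal_pow hℓ.le]
  have hne : ∀ i, μ i Set.univ ≠ 0 := fun i => by
    rw [hu i]; simpa using pow_pos hℓ 3
  set B0 : Set (ι → Vec 3) := {x | x j ∉ cell (fun k => b k + κ * ℓ) (ℓ - 2 * (κ * ℓ))} with hB0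
  set B1 : ι → Set (ι → Vec 3) := fun k => {x | k ≠ j ∧ dist (x j) (x k) ≤ 2 * (κ * ℓ)} with hB1
  have hsub : (isolatedSet b ℓ (κ * ℓ) i j)ᶜ ⊆ B0 ∪ ⋃ k, B1 k := by
    intro x hx
    simp only [isolatedSet, Set.mem_compl_iff, Set.mem_ofPred_eq, not_and_or, not_forall,
      not_lt] at hx
    rcases hx with h | ⟨k, hki, hkj, h⟩
    · exact Or.inl h
    · exact Or.inr (Set.mem_iUnion.2 ⟨k, hkj, h⟩)
  have hm0 : Measure.pi μ B0 ≤ ENNReal.ofReal (6 * κ) * Measure.pi μ Set.univ := by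
    refine measure_pi_le_of_forall_update μ j (hne j)
      ((measurableSet_cell _ _).compl.preimage (measurable_pi_apply j)) fun x => ?_
    have : {z | Function.update x j z ∈ B0} = (cell (fun k => b k + κ * ℓ) (ℓ - 2 * (κ * ℓ)))ᶜ := by
      ext z; simp [hB0]
    change μ j {z | Function.update x j z ∈ B0} ≤ _
    rw [this, hu j, ← ENNReal.ofReal_mul (by positivity)]
    have hsubc : cell (fun k => b k + κ * ℓ) (ℓ - 2 * (κ * ℓ)) ⊆ cell b ℓ := by
      intro z hz; rw [mem_cell] at hz ⊢
      intro k
      have := hz k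
      have : 0 < κ * ℓ := by positivity
      constructor <;> linarith
    rw [measure_compl (measurableSet_cell _ _) (measure_ne_top _ _), hu j,
      Measure.restrict_apply (measurableSet_cell _ _), Set.inter_eq_left.2 hsubc, volume_cell]
    rcases le_total (2 * κ) 1 with h | h
    · rw [← ENNReal.ofReal_pow (by nlinarith), ← ENNReal.ofReal_sub _ (by
        have : 0 ≤ ℓ - 2 * (κ * ℓ) := by nlinarith
        positivity)]
      apply ENNReal.ofReal_le_ofReal
      have : ℓ ^ 3 - (ℓ - 2 * (κ * ℓ)) ^ 3 = (6 * κ - 12 * κ ^ 2 + 8 * κ ^ 3) * ℓ ^ 3 := by ring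
      rw [this]
      gcongr
      nlinarith [sq_nonneg κ]
    · refine tsub_le_self.trans (ENNReal.ofReal_le_ofReal ?_)
      nlinarith [pow_pos hℓ 3]
  have hm1 : ∀ k, Measure.pi μ (B1 k) ≤ ENNReal.ofReal (64 * κ) * Measure.pi μ Set.univ := by
    intro k
    rcases eq_or_ne k j with rfl | hkj
    · simp [hB1]
    have hset : B1 k = {x | dist (x j) (x k) ≤ 2 * (κ * ℓ)} := by ext x; simp [hB1, hkj]
    rw [hset]
    refine measure_pi_le_of_forall_update μ k (hne k)
      (measurableSet_le (by fun_prop) measurable_const) fun x => ?_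
    have : {z | Function.update x k z ∈ {x : ι → Vec 3 | dist (x j) (x k) ≤ 2 * (κ * ℓ)}}
        = Metric.closedBall (x j) (2 * (κ * ℓ)) := by
      ext z
      simp [Function.update_of_ne hkj.symm, dist_comm]
    rw [this, hu k, ← ENNReal.ofReal_mul (by positivity)]
    refine (Measure.restrict_apply_le _ _).trans ?_
    rw [volume_closedBall_vec _ (by positivity), ← ENNReal.ofReal_pow (by positivity)]
    apply ENNReal.ofReal_le_ofReal
    have h3 : κ ^ 3 ≤ κ := by nlinarith [mul_pos hκ hκ]
    nlinarith [pow_pos hℓ 3, mul_le_mul_of_nonneg_right h3 (pow_pos hℓ 3).le]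
  calc _ ≤ Measure.pi μ B0 + ∑ k, Measure.pi μ (B1 k) := by
        refine (measure_mono hsub).trans ((measure_union_le _ _).trans ?_)
        gcongr
        exact measure_iUnion_fintype_le _ _
    _ ≤ ENNReal.ofReal (6 * κ) * Measure.pi μ Set.univ
        + ∑ k : ι, ENNReal.ofReal (64 * κ) * Measure.pi μ Set.univ := by
        gcongr with k; exact hm1 k
    _ = _ := by
        rw [Finset.sum_const, nsmul_eq_mul, ← mul_assoc, ← add_mul, Finset.card_univ,
          ← ENNReal.ofReal_natCast, ← ENNReal.ofReal_mul (by positivity),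
          ← ENNReal.ofReal_add (by positivity) (by positivity)]
        congr 2; ring

/-- The squared gradient of `φ` with respect to the position of particle `i`. -/
def partialSq {ι : Type*} [Fintype ι] [DecidableEq ι] (φ : (ι → Vec 3) → ℝ) (i : ι)
    (x : ι → Vec 3) : ℝ :=
  ∑ k, fderiv ℝ φ x (Pi.single i (Pi.single k 1)) ^ 2

section

variable {ι : Type*} [Fintype ι] [DecidableEq ι]

lemma partialSq_nonneg (φ : (ι → Vec 3) → ℝ) (i : ι) (x : ι → Vec 3) : 0 ≤ partialSq φ i x :=
  Finset.sum_nonneg fun _ _ => sq_nonneg _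

lemma continuous_partialSq {φ : (ι → Vec 3) → ℝ} (hφ : ContDiff ℝ 1 φ) (i : ι) :
    Continuous (partialSq φ i) := by
  unfold partialSq
  have := hφ.continuous_fderiv (by norm_num)
  fun_prop

lemma gradSq_update {φ : (ι → Vec 3) → ℝ} (hφ : ContDiff ℝ 1 φ) (x : ι → Vec 3) (i : ι)
    (z : Vec 3) :
    gradSq (fun z => φ (Function.update x i z)) z = partialSq φ i (Function.update x i z) := by
  unfold gradSq partialSq
  have h := ((hφ.differentiable (by norm_num)) (Function.update x i z)).hasFDerivAt.comp z
    (hasFDerivAt_update x (i := i) z)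
  have h' : fderiv ℝ (fun z => φ (Function.update x i z)) z = _ := h.fderiv
  rw [h']
  refine Finset.sum_congr rfl fun k _ => ?_
  rw [ContinuousLinearMap.comp_apply]
  congr 2
  funext m
  rcases eq_or_ne m i with rfl | hm
  · simp
  · simp [hm]

lemma closedBall_subset_cell {b : Vec 3} {ℓ R : ℝ} {y : Vec 3}
    (hy : y ∈ cell (fun k => b k + R) (ℓ - 2 * R)) : Metric.closedBall y R ⊆ cell b ℓ := by
  intro z hz
  rw [mem_cell] at hy ⊢
  intro k
  have h1 := hy k
  have h2 : |z k - y k| ≤ R := by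
    rw [← Real.dist_eq]; exact (dist_le_pi_dist z y k).trans (Metric.mem_closedBall.1 hz)
  rw [abs_le] at h2
  constructor <;> linarith

/-- The local energy density of the pair `(i, j)` used in the scattering estimate. -/
def pairDensity (V : Vec 3 → ℝ≥0∞) (φ : (ι → Vec 3) → ℝ) (ε R c : ℝ) (i j : ι)
    (x : ι → Vec 3) : ℝ≥0∞ :=
  ENNReal.ofReal ((1 + ε) * partialSq φ i x + ε / R ^ 2 * (φ x - c) ^ 2)
    + V (x i - x j) * ENNReal.ofReal (φ x ^ 2) / 2

lemma measurable_pairDensity {V : Vec 3 → ℝ≥0∞} (hV : Measurable V) {φ : (ι → Vec 3) → ℝ}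
    (hφ : ContDiff ℝ 1 φ) (ε R c : ℝ) (i j : ι) : Measurable (pairDensity V φ ε R c i j) := by
  unfold pairDensity
  have h1 : Measurable (partialSq φ i) := (continuous_partialSq hφ i).measurable
  have h2 : Measurable φ := hφ.continuous.measurable
  have h3 : Measurable fun x : ι → Vec 3 => V (x i - x j) := hV.comp (by fun_prop)
  fun_prop

lemma pair_estimate {V : Vec 3 → ℝ≥0∞} (hV : Measurable V) {φ : (ι → Vec 3) → ℝ}
    (hφ : ContDiff ℝ (⊤ : ℕ∞) φ) {ε R A : ℝ} {b : Vec 3} {ℓ c : ℝ}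
    (hscat : ∀ g : Vec 3 → ℝ, ContDiff ℝ (⊤ : ℕ∞) g → ∀ (c : ℝ) (y : Vec 3),
      ENNReal.ofReal (A * c ^ 2) ≤ ∫⁻ z in Metric.closedBall y R,
        (ENNReal.ofReal ((1 + ε) * gradSq g z + ε / R ^ 2 * (g z - c) ^ 2)
          + V (z - y) * ENNReal.ofReal (g z ^ 2) / 2))
    {i j : ι} (hij : i ≠ j) :
    ENNReal.ofReal (A * c ^ 2) *
        Measure.pi (fun _ : ι => volume.restrict (cell b ℓ)) (isolatedSet b ℓ R i j)
      ≤ (∫⁻ x, (isolatedSet b ℓ R i j ∩ {x | dist (x i) (x j) ≤ R}).indicator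
          (pairDensity V φ ε R c i j) x ∂Measure.pi (fun _ : ι => volume.restrict (cell b ℓ)))
        * ENNReal.ofReal ℓ ^ 3 := by
  have hφ1 : ContDiff ℝ 1 φ := hφ.of_le (by exact_mod_cast le_top)
  have hpm := measurable_pairDensity hV hφ1 ε R c i j
  have hGm := measurableSet_isolatedSet b ℓ R i j
  have hSm : MeasurableSet (isolatedSet b ℓ R i j ∩ {x | dist (x i) (x j) ≤ R}) :=
    hGm.inter (measurableSet_le (by fun_prop) measurable_const)
  rw [← volume_cell b ℓ, ← Measure.restrict_apply_univ (cell b ℓ),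
    ← lintegral_lintegral_update (fun _ : ι => volume.restrict (cell b ℓ)) i
    (hpm.indicator hSm), ← setLIntegral_const, ← lintegral_indicator hGm]
  refine lintegral_mono fun x => ?_
  by_cases hx : x ∈ isolatedSet b ℓ R i j
  swap
  · simp [hx]
  rw [Set.indicator_of_mem hx]
  have hg := hscat (fun z => φ (Function.update x i z)) (hφ.comp (contDiff_update _ x i)) c (x j)
  refine hg.trans ?_
  rw [← lintegral_indicator Metric.isClosed_closedBall.measurableSet,
    ← lintegral_indicator (measurableSet_cell b ℓ)]
  refine lintegral_mono fun z => ?_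
  by_cases hz : z ∈ Metric.closedBall (x j) R
  swap
  · simp [hz]
  have hzc := closedBall_subset_cell hx.1 hz
  have hup : Function.update x i z ∈ isolatedSet b ℓ R i j ∩ {x | dist (x i) (x j) ≤ R} := by
    refine ⟨⟨?_, fun k hki hkj => ?_⟩, ?_⟩
    · simpa [hij.symm] using hx.1
    · simpa [hij.symm, hki] using hx.2 k hki hkj
    · simpa [hij.symm] using hz
  rw [Set.indicator_of_mem hz, Set.indicator_of_mem hzc, Set.indicator_of_mem hup, pairDensity,
    gradSq_update hφ1]
  simp [hij.symm]

end

section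

variable {ι : Type*} [Fintype ι] [DecidableEq ι]

/-- The sum of `V (x i - x j)` over ordered pairs of distinct particles. -/
def pairPot (V : Vec 3 → ℝ≥0∞) (x : ι → Vec 3) : ℝ≥0∞ :=
  ∑ i, ∑ j ∈ Finset.univ.erase i, V (x i - x j)

lemma measurable_pairPot {V : Vec 3 → ℝ≥0∞} (hV : Measurable V) :
    Measurable (pairPot V : (ι → Vec 3) → ℝ≥0∞) := by
  unfold pairPot
  exact Finset.measurable_sum _ fun i _ => Finset.measurable_sum _ fun j _ =>
    hV.comp (by fun_prop)

lemma fderiv_apply_eq_sum (φ : (ι → Vec 3) → ℝ) (z v : ι → Vec 3) :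
    fderiv ℝ φ z v = ∑ i, ∑ k, v i k * fderiv ℝ φ z (Pi.single i (Pi.single k 1)) := by
  have hv : v = ∑ i, ∑ k, v i k • (Pi.single i (Pi.single k 1) : ι → Vec 3) := by
    funext i k
    simp only [Finset.sum_apply, Pi.smul_apply, smul_eq_mul]
    rw [Finset.sum_eq_single i, Finset.sum_eq_single k]
    · simp
    · intro b _ hb; simp [hb.symm]
    · simp
    · intro b _ hb
      refine Finset.sum_eq_zero fun m _ => ?_
      simp [hb.symm]
    · simp
  conv_lhs => rw [hv]
  simp [map_sum]

lemma sq_fderiv_apply_le (φ : (ι → Vec 3) → ℝ) (z v : ι → Vec 3) {ℓ : ℝ}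
    (hv : ∀ i k, v i k ^ 2 ≤ ℓ ^ 2) :
    fderiv ℝ φ z v ^ 2 ≤ 3 * Fintype.card ι * ℓ ^ 2 * ∑ i, partialSq φ i z := by
  rw [fderiv_apply_eq_sum, ← Finset.sum_product', Finset.univ_product_univ]
  refine (Finset.sum_mul_sq_le_sq_mul_sq _ _ _).trans ?_
  unfold partialSq
  rw [← Finset.sum_product', Finset.univ_product_univ]
  gcongr
  calc ∑ p : ι × Fin 3, v p.1 p.2 ^ 2 ≤ ∑ p : ι × Fin 3, ℓ ^ 2 :=
        Finset.sum_le_sum fun p _ => hv _ _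
    _ = _ := by
        rw [Finset.sum_const, Finset.card_univ, Fintype.card_prod, Fintype.card_fin, nsmul_eq_mul]
        push_cast; ring

lemma pi_restrict_cell (b : Vec 3) (ℓ : ℝ) :
    Measure.pi (fun _ : ι => (volume : Measure (Vec 3)).restrict (cell b ℓ))
      = volume.restrict (Set.pi Set.univ fun _ => cell b ℓ) := by
  rw [← Measure.restrict_pi_pi, ← volume_pi]

lemma pi_restrict_cell_univ (b : Vec 3) (ℓ : ℝ) :
    Measure.pi (fun _ : ι => (volume : Measure (Vec 3)).restrict (cell b ℓ)) Set.univ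
      = (ENNReal.ofReal ℓ ^ 3) ^ Fintype.card ι := by
  rw [Measure.pi_univ]
  simp [volume_cell]

lemma exists_const_poincare_cell {φ : (ι → Vec 3) → ℝ} (hφ : ContDiff ℝ 1 φ) (b : Vec 3)
    {ℓ : ℝ} (hℓ : 0 < ℓ) :
    ∃ c : ℝ, ∫⁻ x, ENNReal.ofReal ((φ x - c) ^ 2)
        ∂Measure.pi (fun _ : ι => volume.restrict (cell b ℓ))
      ≤ ENNReal.ofReal (2 ^ (3 * Fintype.card ι) * (3 * Fintype.card ι) * ℓ ^ 2) *
        ∫⁻ x, ENNReal.ofReal (∑ i, partialSq φ i x)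
          ∂Measure.pi (fun _ : ι => volume.restrict (cell b ℓ)) := by
  have hm : MeasurableSet (Set.pi Set.univ fun _ : ι => cell b ℓ) :=
    MeasurableSet.univ_pi fun _ => measurableSet_cell b ℓ
  have hvol : volume (Set.pi Set.univ fun _ : ι => cell b ℓ)
      = (ENNReal.ofReal ℓ ^ 3) ^ Fintype.card ι := by
    rw [← pi_restrict_cell_univ b ℓ, pi_restrict_cell, Measure.restrict_apply_univ]
  have hcont : Continuous fun x => ∑ i, partialSq φ i x :=
    continuous_finsetSum _ fun i _ => continuous_partialSq hφ i
  obtain ⟨c, hc⟩ := exists_const_poincare volume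
    (convex_pi fun i _ => convex_cell b ℓ) hm
    (by rw [hvol]; simp [hℓ]) (by rw [hvol]; finiteness) hφ
    (G := fun z => ENNReal.ofReal (3 * Fintype.card ι * ℓ ^ 2 * ∑ i, partialSq φ i z))
    (by have := hcont.measurable; fun_prop)
    (fun x hx y hy z => by
      refine ENNReal.ofReal_le_ofReal (sq_fderiv_apply_le φ z _ fun i k => ?_)
      have h1 := mem_cell.1 (hx i trivial) k
      have h2 := mem_cell.1 (hy i trivial) k
      apply sq_le_sq'
      · simp; linarith
      · simp; linarith)
  refine ⟨c, ?_⟩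
  rw [pi_restrict_cell]
  refine hc.trans (le_of_eq ?_)
  have hfr : Module.finrank ℝ (ι → Vec 3) = 3 * Fintype.card ι := by
    rw [Module.finrank_pi_fintype]; simp [mul_comm]
  rw [hfr]
  simp_rw [ENNReal.ofReal_mul (p := 3 * (Fintype.card ι : ℝ) * ℓ ^ 2) (by positivity)]
  rw [lintegral_const_mul _ (by have := hcont.measurable; fun_prop), ← mul_assoc]
  congr 1
  rw [mul_assoc (2 ^ (3 * Fintype.card ι) : ℝ), ENNReal.ofReal_mul (p := 2 ^ _) (by positivity),
    ENNReal.ofReal_pow (by norm_num)]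
  norm_num

lemma sum_indicator_pairDensity_le (V : Vec 3 → ℝ≥0∞) (φ : (ι → Vec 3) → ℝ) {ε R c : ℝ}
    (b : Vec 3) (ℓ : ℝ) (i : ι) (x : ι → Vec 3) :
    ∑ j ∈ Finset.univ.erase i,
        (isolatedSet b ℓ R i j ∩ {x | dist (x i) (x j) ≤ R}).indicator
          (pairDensity V φ ε R c i j) x
      ≤ ENNReal.ofReal ((1 + ε) * partialSq φ i x + ε / R ^ 2 * (φ x - c) ^ 2)
        + (∑ j ∈ Finset.univ.erase i, V (x i - x j)) * ENNReal.ofReal (φ x ^ 2) / 2 := by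
  by_cases h : ∃ j ∈ Finset.univ.erase i,
      x ∈ isolatedSet b ℓ R i j ∩ {x | dist (x i) (x j) ≤ R}
  · obtain ⟨j, hj, hx⟩ := h
    rw [Finset.sum_eq_single j]
    · rw [Set.indicator_of_mem hx, pairDensity]
      gcongr
      exact Finset.single_le_sum (f := fun j => V (x i - x j)) (fun _ _ => zero_le) hj
    · intro j' hj' hne
      refine Set.indicator_of_notMem (fun hx' => ?_) _
      have h1 := hx.1.2 j' (Finset.ne_of_mem_erase hj') hne
      have h2 : dist (x i) (x j) ≤ R := hx.2
      have h3 : dist (x i) (x j') ≤ R := hx'.2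
      have := dist_triangle_left (x j) (x j') (x i)
      linarith
    · intro h; exact absurd hj h
  · push Not at h
    rw [Finset.sum_eq_zero fun j hj => Set.indicator_of_notMem (h j hj) _]
    exact zero_le

lemma sum_pair_estimate {V : Vec 3 → ℝ≥0∞} (hV : Measurable V) {φ : (ι → Vec 3) → ℝ}
    (hφ : ContDiff ℝ (⊤ : ℕ∞) φ) {ε κ A : ℝ} {b : Vec 3} {ℓ c : ℝ} (hε : 0 < ε) (hℓ : 0 < ℓ)
    (hκ : 0 < κ) (hκ1 : κ ≤ 1) (hA : 0 ≤ A)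
    (hscat : ∀ g : Vec 3 → ℝ, ContDiff ℝ (⊤ : ℕ∞) g → ∀ (c : ℝ) (y : Vec 3),
      ENNReal.ofReal (A * c ^ 2) ≤ ∫⁻ z in Metric.closedBall y (κ * ℓ),
        (ENNReal.ofReal ((1 + ε) * gradSq g z + ε / (κ * ℓ) ^ 2 * (g z - c) ^ 2)
          + V (z - y) * ENNReal.ofReal (g z ^ 2) / 2)) :
    ENNReal.ofReal (A * c ^ 2 * (Fintype.card ι * (Fintype.card ι - 1)) *
        (1 - (6 + 64 * Fintype.card ι) * κ) * (ℓ ^ 3) ^ Fintype.card ι)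
      ≤ (∫⁻ x, (ENNReal.ofReal ((1 + ε) * (∑ i, partialSq φ i x)
            + Fintype.card ι * (ε / (κ * ℓ) ^ 2) * (φ x - c) ^ 2)
          + pairPot V x * ENNReal.ofReal (φ x ^ 2) / 2)
          ∂Measure.pi (fun _ : ι => volume.restrict (cell b ℓ))) * ENNReal.ofReal ℓ ^ 3 := by
  set μ := Measure.pi (fun _ : ι => (volume : Measure (Vec 3)).restrict (cell b ℓ)) with hμ
  have hφ1 : ContDiff ℝ 1 φ := hφ.of_le (by exact_mod_cast le_top)
  set η : ℝ := (6 + 64 * Fintype.card ι) * κ with hη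
  have hη0 : 0 ≤ η := by positivity
  have huniv : μ Set.univ = ENNReal.ofReal ((ℓ ^ 3) ^ Fintype.card ι) := by
    rw [hμ, pi_restrict_cell_univ, ENNReal.ofReal_pow (by positivity),
      ENNReal.ofReal_pow hℓ.le]
  have hgood : ∀ i j, ENNReal.ofReal ((1 - η) * (ℓ ^ 3) ^ Fintype.card ι)
      ≤ μ (isolatedSet b ℓ (κ * ℓ) i j) := by
    intro i j
    have h1 := measure_compl_isolatedSet_le b hℓ hκ hκ1 (i := i) (j := j)
    have h2 := measure_add_measure_compl (μ := μ)
      (measurableSet_isolatedSet b ℓ (κ * ℓ) i j)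
    rw [← hμ, ← hη, huniv, ← ENNReal.ofReal_mul hη0] at h1
    rw [one_sub_mul, ENNReal.ofReal_sub _ (by positivity), tsub_le_iff_right, ← huniv, ← h2]
    gcongr
  calc _ = ∑ i : ι, ∑ j ∈ Finset.univ.erase i, ENNReal.ofReal (A * c ^ 2) *
        ENNReal.ofReal ((1 - η) * (ℓ ^ 3) ^ Fintype.card ι) := by
        rw [← ENNReal.ofReal_mul (by positivity)]
        simp only [Finset.sum_const, Finset.card_erase_of_mem (Finset.mem_univ _),
          Finset.card_univ, nsmul_eq_mul]
        rcases Nat.eq_zero_or_pos (Fintype.card ι) with h | h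
        · simp [h]
        rw [← ENNReal.ofReal_natCast, ← ENNReal.ofReal_natCast,
          ← ENNReal.ofReal_mul (by positivity), ← ENNReal.ofReal_mul (by positivity),
          Nat.cast_sub h]
        congr 1
        push_cast
        ring
    _ ≤ ∑ i : ι, ∑ j ∈ Finset.univ.erase i,
        (∫⁻ x, (isolatedSet b ℓ (κ * ℓ) i j ∩ {x | dist (x i) (x j) ≤ κ * ℓ}).indicator
          (pairDensity V φ ε (κ * ℓ) c i j) x ∂μ) * ENNReal.ofReal ℓ ^ 3 := by
        refine Finset.sum_le_sum fun i _ => Finset.sum_le_sum fun j hj => ?_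
        refine le_trans ?_ (pair_estimate hV hφ hscat (Finset.ne_of_mem_erase hj).symm)
        gcongr
        exact hgood i j
    _ = (∫⁻ x, ∑ i : ι, ∑ j ∈ Finset.univ.erase i,
        (isolatedSet b ℓ (κ * ℓ) i j ∩ {x | dist (x i) (x j) ≤ κ * ℓ}).indicator
          (pairDensity V φ ε (κ * ℓ) c i j) x ∂μ) * ENNReal.ofReal ℓ ^ 3 := by
        have hm : ∀ i j : ι, Measurable fun x =>
            (isolatedSet b ℓ (κ * ℓ) i j ∩ {x | dist (x i) (x j) ≤ κ * ℓ}).indicator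
              (pairDensity V φ ε (κ * ℓ) c i j) x := fun i j =>
          (measurable_pairDensity hV hφ1 _ _ _ i j).indicator
            ((measurableSet_isolatedSet _ _ _ i j).inter
              (measurableSet_le (by fun_prop) measurable_const))
        rw [lintegral_finsetSum _ fun i _ => Finset.measurable_sum _ fun j _ => hm i j,
          Finset.sum_mul]
        refine Finset.sum_congr rfl fun i _ => ?_
        rw [lintegral_finsetSum _ fun j _ => hm i j, Finset.sum_mul]
    _ ≤ _ := by
        gcongr with x
        refine (Finset.sum_le_sum fun i _ => sum_indicator_pairDensity_le V φ b ℓ i x).trans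
          (le_of_eq ?_)
        rw [Finset.sum_add_distrib, ← ENNReal.ofReal_sum_of_nonneg]
        · congr 1
          · congr 1
            rw [Finset.sum_add_distrib, ← Finset.mul_sum]
            simp; ring
          · simp_rw [div_eq_mul_inv, pairPot, Finset.sum_mul]
        · intro i _
          have := partialSq_nonneg φ i x
          positivity

end

lemma cell_energy_arith {A c n η ε ε' δ κ ℓ L Q C k d p i : ℝ} (hA : 0 ≤ A)
    (hn : 0 ≤ n * (n - 1)) (hn0 : 0 ≤ n) (hε : 0 < ε) (hε1 : ε < 1) (hε' : 0 < ε') (hδ : δ = ε / 4)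
    (hη : η ≤ ε / 4) (hκ : 0 < κ) (hℓ : 0 < ℓ) (hL : L = ℓ ^ 3) (hQ : 0 ≤ Q) (hC : 0 ≤ C)
    (hk : 0 ≤ k) (hp : 0 ≤ p) (hε'C : ε' * (1 + n * C / κ ^ 2) ≤ ε / 4)
    (hℓC : A * (n * (n - 1)) * (1 + 1 / δ) * C ≤ ε / 4 * ℓ)
    (h1 : A * c ^ 2 * (n * (n - 1)) * (1 - η) * Q
      ≤ ((1 + ε') * k + n * (ε' / (κ * ℓ) ^ 2) * d + p) * L)
    (h2 : d ≤ C * ℓ ^ 2 * k) (h3 : i ≤ (1 + δ) * c ^ 2 * Q + (1 + 1 / δ) * d) :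
    A * (1 - ε) * (n * (n - 1)) / ℓ ^ 3 * i ≤ k + p := by
  subst hδ
  have hL0 : 0 < L := by rw [hL]; positivity
  set X := A * c ^ 2 * (n * (n - 1)) * Q / L with hX
  have hX0 : 0 ≤ X := by positivity
  have e1 : (1 - η) * X ≤ (1 + ε') * k + n * (ε' / (κ * ℓ) ^ 2) * d + p := by
    rw [hX, ← mul_div_assoc, div_le_iff₀ hL0]
    linarith
  have e2 : n * (ε' / (κ * ℓ) ^ 2) * d ≤ ε' * (n * C / κ ^ 2) * k := by
    calc n * (ε' / (κ * ℓ) ^ 2) * d ≤ n * (ε' / (κ * ℓ) ^ 2) * (C * ℓ ^ 2 * k) := by gcongr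
      _ = _ := by field_simp
  have e3 : (1 - η) * X ≤ (1 + ε / 4) * (k + p) := by
    have h7 := mul_le_mul_of_nonneg_right hε'C hk
    have h8 : 0 ≤ ε * p := by positivity
    linarith
  have e4 : A * (1 - ε) * (n * (n - 1)) / ℓ ^ 3 * i
      ≤ (1 - ε) * (1 + ε / 4) * X + ε / 4 * k := by
    have hc : 0 ≤ A * (1 - ε) * (n * (n - 1)) / ℓ ^ 3 := by
      have : 0 ≤ 1 - ε := by linarith
      positivity
    have h5 : 0 ≤ 1 + 1 / (ε / 4) := by positivity
    calc _ ≤ A * (1 - ε) * (n * (n - 1)) / ℓ ^ 3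
          * ((1 + ε / 4) * c ^ 2 * Q + (1 + 1 / (ε / 4)) * (C * ℓ ^ 2 * k)) := by
          refine mul_le_mul_of_nonneg_left (h3.trans ?_) hc
          gcongr
      _ = (1 - ε) * (1 + ε / 4) * X
          + (1 - ε) * (A * (n * (n - 1)) * (1 + 1 / (ε / 4)) * C) / ℓ * k := by
          rw [hX, hL]; field_simp
      _ ≤ (1 - ε) * (1 + ε / 4) * X + ε / 4 * k := by
          refine add_le_add le_rfl (mul_le_mul_of_nonneg_right ?_ hk)
          rw [div_le_iff₀ hℓ]
          have h6 : 0 ≤ A * (n * (n - 1)) * (1 + 1 / (ε / 4)) * C := by positivity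
          have h7 : 0 ≤ ε * (A * (n * (n - 1)) * (1 + 1 / (ε / 4)) * C) := by positivity
          linarith
  have e5 : (1 - ε) * (1 + ε / 4) * X ≤ (1 - ε / 2) * ((1 - η) * X) := by
    have : (1 - ε) * (1 + ε / 4) ≤ (1 - ε / 2) * (1 - η) := by
      have h7 : (1 - ε / 2) * (1 - ε / 4) ≤ (1 - ε / 2) * (1 - η) :=
        mul_le_mul_of_nonneg_left (by linarith) (by linarith)
      have : 0 ≤ ε ^ 2 := sq_nonneg ε
      linarith
    rw [← mul_assoc]
    exact mul_le_mul_of_nonneg_right this hX0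
  have e6 : (1 - ε / 2) * ((1 - η) * X) ≤ (1 - ε / 2) * ((1 + ε / 4) * (k + p)) :=
    mul_le_mul_of_nonneg_left e3 (by linarith)
  have e7 : 0 ≤ ε ^ 2 * (k + p) := by positivity
  have e8 : 0 ≤ ε * p := by positivity
  linarith

lemma sq_le_add_sq {δ x c : ℝ} (hδ : 0 < δ) :
    x ^ 2 ≤ (1 + δ) * c ^ 2 + (1 + 1 / δ) * (x - c) ^ 2 := by
  have h : (1 + δ) * c ^ 2 + (1 + 1 / δ) * (x - c) ^ 2 - x ^ 2
      = (δ * c - (x - c)) ^ 2 / δ := by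
    field_simp; ring
  have : 0 ≤ (δ * c - (x - c)) ^ 2 / δ := by positivity
  linarith

lemma cell_energy {V : Vec 3 → ℝ≥0∞} (hV : Measurable V) (hVc : HasCompactSupport V) {a : ℝ}
    (ha : 0 < a) (hscat : sInf (scatSet3 V) = ENNReal.ofReal (4 * π * a)) (n : ℕ) {ε : ℝ}
    (hε : 0 < ε) (hε1 : ε < 1) :
    ∃ ℓ₀ : ℝ, 0 < ℓ₀ ∧ ∀ ℓ ≥ ℓ₀, ∀ (ι : Type) [Fintype ι] [DecidableEq ι], Fintype.card ι = n →
      ∀ (b : Vec 3) (φ : (ι → Vec 3) → ℝ), ContDiff ℝ (⊤ : ℕ∞) φ →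
      ENNReal.ofReal (4 * π * a * (1 - ε) * (n * (n - 1)) / ℓ ^ 3) *
          ∫⁻ x, ENNReal.ofReal (φ x ^ 2) ∂Measure.pi (fun _ : ι => volume.restrict (cell b ℓ))
        ≤ ∫⁻ x, (ENNReal.ofReal (∑ i, partialSq φ i x)
            + pairPot V x * ENNReal.ofReal (φ x ^ 2) / 2)
          ∂Measure.pi (fun _ : ι => volume.restrict (cell b ℓ)) := by
  set A : ℝ := 4 * π * a with hAdef
  have hA : 0 < A := by positivity
  set κ : ℝ := ε / (4 * (6 + 64 * n)) with hκdef
  have hκ : 0 < κ := by positivity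
  have hκ1 : κ ≤ 1 := by
    rw [hκdef, div_le_one (by positivity)]
    have : (0 : ℝ) ≤ n := by positivity
    linarith
  set C : ℝ := 2 ^ (3 * n) * (3 * n) with hCdef
  have hC : 0 ≤ C := by positivity
  set ε' : ℝ := ε / 4 / (1 + n * C / κ ^ 2) with hε'def
  have hε' : 0 < ε' := by positivity
  have hn0 : (0 : ℝ) ≤ n := by positivity
  have hnn : (0 : ℝ) ≤ n * (n - 1) := by
    rcases Nat.eq_zero_or_pos n with h | h
    · simp [h]
    · have : (1 : ℝ) ≤ n := by exact_mod_cast h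
      nlinarith
  obtain ⟨R₀, hR₀, hloc⟩ := scattering_local hV hVc hscat hε'
  set B : ℝ := A * (n * (n - 1)) * (1 + 1 / (ε / 4)) * C with hBdef
  refine ⟨max (R₀ / κ) (max (B / (ε / 4)) 1), by positivity, ?_⟩
  intro ℓ hℓ ι _ _ hcard b φ hφ
  have hℓ1 : R₀ ≤ κ * ℓ := by
    have := (le_max_left _ _).trans hℓ
    rwa [div_le_iff₀ hκ, mul_comm] at this
  have hℓ2 : B ≤ ε / 4 * ℓ := by
    have := ((le_max_left _ _).trans (le_max_right _ _)).trans hℓ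
    rwa [div_le_iff₀ (by positivity), mul_comm] at this
  have hℓ0 : 0 < ℓ := by
    have := ((le_max_right _ _).trans (le_max_right _ _)).trans hℓ
    linarith
  have hφ1 : ContDiff ℝ 1 φ := hφ.of_le (by exact_mod_cast le_top)
  have hφm : Measurable φ := hφ.continuous.measurable
  set μ := Measure.pi (fun _ : ι => (volume : Measure (Vec 3)).restrict (cell b ℓ)) with hμ
  have huniv : μ Set.univ = ENNReal.ofReal ((ℓ ^ 3) ^ n) := by
    rw [hμ, pi_restrict_cell_univ, ENNReal.ofReal_pow (by positivity),
      ENNReal.ofReal_pow hℓ0.le, hcard]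
  have hgm : Measurable fun x : ι → Vec 3 => ∑ i, partialSq φ i x :=
    (continuous_finsetSum _ fun i _ => continuous_partialSq hφ1 i).measurable
  have hpm : Measurable (pairPot V : (ι → Vec 3) → ℝ≥0∞) := measurable_pairPot hV
  obtain ⟨c, hc⟩ := exists_const_poincare_cell hφ1 b hℓ0
  have hsum := sum_pair_estimate hV hφ (c := c) (b := b) hε' hℓ0 hκ hκ1 hA.le (hloc _ hℓ1)
  rw [← hμ, hcard] at hc
  rw [← hμ, hcard] at hsum
  rw [lintegral_add_left (by fun_prop)]
  set K := ∫⁻ x, ENNReal.ofReal (∑ i, partialSq φ i x) ∂μ with hK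
  set D := ∫⁻ x, ENNReal.ofReal ((φ x - c) ^ 2) ∂μ with hD
  set P := ∫⁻ x, pairPot V x * ENNReal.ofReal (φ x ^ 2) / 2 ∂μ with hP
  set I := ∫⁻ x, ENNReal.ofReal (φ x ^ 2) ∂μ with hI
  by_cases hKt : K = ⊤
  · simp [hKt]
  by_cases hPt : P = ⊤
  · simp [hPt]
  have hDt : D ≠ ⊤ := ne_top_of_le_ne_top (by finiteness) hc
  have hI3 : I ≤ ENNReal.ofReal ((1 + ε / 4) * c ^ 2 * (ℓ ^ 3) ^ n)
      + ENNReal.ofReal (1 + 1 / (ε / 4)) * D := by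
    calc I ≤ ∫⁻ x, (ENNReal.ofReal ((1 + ε / 4) * c ^ 2)
          + ENNReal.ofReal (1 + 1 / (ε / 4)) * ENNReal.ofReal ((φ x - c) ^ 2)) ∂μ := by
          refine lintegral_mono fun x => ?_
          rw [← ENNReal.ofReal_mul (by positivity), ← ENNReal.ofReal_add (by positivity)
            (by positivity)]
          exact ENNReal.ofReal_le_ofReal (sq_le_add_sq (by positivity))
      _ = _ := by
          rw [lintegral_add_left measurable_const, lintegral_const,
            lintegral_const_mul _ (by fun_prop), huniv, ← ENNReal.ofReal_mul (by positivity)]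
  have hIt : I ≠ ⊤ := ne_top_of_le_ne_top (by finiteness) hI3
  have hsum' : ENNReal.ofReal (A * c ^ 2 * (n * (n - 1)) * (1 - (6 + 64 * n) * κ) * (ℓ ^ 3) ^ n)
      ≤ (ENNReal.ofReal (1 + ε') * K + ENNReal.ofReal (n * (ε' / (κ * ℓ) ^ 2)) * D + P)
        * ENNReal.ofReal (ℓ ^ 3) := by
    refine hsum.trans (le_of_eq ?_)
    rw [ENNReal.ofReal_pow hℓ0.le]
    congr 1
    rw [lintegral_add_left (by fun_prop)]
    congr 1
    rw [← lintegral_const_mul _ (by fun_prop), ← lintegral_const_mul _ (by fun_prop),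
      ← lintegral_add_left (by fun_prop)]
    refine lintegral_congr fun x => ?_
    have : 0 ≤ ∑ i, partialSq φ i x := Finset.sum_nonneg fun i _ => partialSq_nonneg φ i x
    rw [ENNReal.ofReal_add (by positivity) (by positivity), ENNReal.ofReal_mul (by positivity),
      ENNReal.ofReal_mul (by positivity)]
  lift K to ℝ≥0 using hKt with k
  lift D to ℝ≥0 using hDt with d
  lift P to ℝ≥0 using hPt with p
  lift I to ℝ≥0 using hIt with i
  have hr1 : A * c ^ 2 * (n * (n - 1)) * (1 - (6 + 64 * n) * κ) * (ℓ ^ 3) ^ n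
      ≤ ((1 + ε') * k + n * (ε' / (κ * ℓ) ^ 2) * d + p) * ℓ ^ 3 := by
    rw [← ENNReal.ofReal_coe_nnreal, ← ENNReal.ofReal_coe_nnreal, ← ENNReal.ofReal_coe_nnreal,
      ← ENNReal.ofReal_mul (by positivity), ← ENNReal.ofReal_mul (by positivity),
      ← ENNReal.ofReal_add (by positivity) (by positivity),
      ← ENNReal.ofReal_add (by positivity) (by positivity),
      ← ENNReal.ofReal_mul (by positivity)] at hsum'
    exact (ENNReal.ofReal_le_ofReal_iff (by positivity)).1 hsum'
  have hr2 : (d : ℝ) ≤ C * ℓ ^ 2 * k := by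
    rw [← ENNReal.ofReal_coe_nnreal, ← ENNReal.ofReal_coe_nnreal,
      ← ENNReal.ofReal_mul (by positivity)] at hc
    exact (ENNReal.ofReal_le_ofReal_iff (by positivity)).1 hc
  have hr3 : (i : ℝ) ≤ (1 + ε / 4) * c ^ 2 * (ℓ ^ 3) ^ n + (1 + 1 / (ε / 4)) * d := by
    rw [← ENNReal.ofReal_coe_nnreal, ← ENNReal.ofReal_coe_nnreal,
      ← ENNReal.ofReal_mul (by positivity), ← ENNReal.ofReal_add (by positivity)
      (by positivity)] at hI3
    exact (ENNReal.ofReal_le_ofReal_iff (by positivity)).1 hI3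
  have := cell_energy_arith hA.le hnn hn0 hε hε1 hε' rfl (η := (6 + 64 * n) * κ)
    (le_of_eq (by rw [hκdef]; field_simp)) hκ hℓ0 rfl (Q := (ℓ ^ 3) ^ n) (by positivity) hC
    k.2 p.2 (le_of_eq (by rw [hε'def]; field_simp)) hℓ2 hr1 hr2 hr3
  rw [← ENNReal.ofReal_coe_nnreal, ← ENNReal.ofReal_coe_nnreal, ← ENNReal.ofReal_coe_nnreal,
    ← ENNReal.ofReal_mul (by have : 0 ≤ 1 - ε := by linarith
                             positivity),
    ← ENNReal.ofReal_add (by positivity) (by positivity)]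
  exact ENNReal.ofReal_le_ofReal this

section

variable {ι : Type} [Fintype ι] [DecidableEq ι]

/-- The energy density of the particles in `S`, including their mutual interaction. -/
def subsetDensity (V : Vec 3 → ℝ≥0∞) (φ : (ι → Vec 3) → ℝ) (S : Finset ι) (x : ι → Vec 3) :
    ℝ≥0∞ :=
  ENNReal.ofReal (∑ i ∈ S, partialSq φ i x)
    + (∑ i ∈ S, ∑ j ∈ S.erase i, V (x i - x j)) * ENNReal.ofReal (φ x ^ 2) / 2

lemma measurable_subsetDensity {V : Vec 3 → ℝ≥0∞} (hV : Measurable V) {φ : (ι → Vec 3) → ℝ}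
    (hφ : ContDiff ℝ 1 φ) (S : Finset ι) : Measurable (subsetDensity V φ S) := by
  have h1 : Measurable fun x => ∑ i ∈ S, partialSq φ i x :=
    (continuous_finsetSum _ fun i _ => continuous_partialSq hφ i).measurable
  have h2 : Measurable φ := hφ.continuous.measurable
  have h3 : Measurable fun x : ι → Vec 3 => ∑ i ∈ S, ∑ j ∈ S.erase i, V (x i - x j) :=
    Finset.measurable_sum _ fun i _ => Finset.measurable_sum _ fun j _ => hV.comp (by fun_prop)
  unfold subsetDensity
  fun_prop

lemma subsetDensity_add_le (V : Vec 3 → ℝ≥0∞) (φ : (ι → Vec 3) → ℝ) {S S' : Finset ι}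
    (h : Disjoint S S') (x : ι → Vec 3) :
    subsetDensity V φ S x + subsetDensity V φ S' x ≤ subsetDensity V φ (S ∪ S') x := by
  unfold subsetDensity
  rw [add_add_add_comm, ← ENNReal.ofReal_add, ← Finset.sum_union h, ← ENNReal.add_div, ← add_mul,
    Finset.sum_union h (f := fun i => ∑ j ∈ (S ∪ S').erase i, V (x i - x j))]
  · gcongr <;> simp
  all_goals exact Finset.sum_nonneg fun i _ => partialSq_nonneg φ i x

lemma hasFDerivAt_updateFinset (x : ι → Vec 3) (S : Finset ι) (y : S → Vec 3) :
    HasFDerivAt (fun y : S → Vec 3 => Function.updateFinset x S y)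
      (ContinuousLinearMap.pi fun i =>
        if h : i ∈ S then ContinuousLinearMap.proj (R := ℝ) (φ := fun _ : S => Vec 3) ⟨i, h⟩ else 0)
      y := by
  rw [hasFDerivAt_pi]
  intro i
  by_cases h : i ∈ S
  · simp only [Function.updateFinset, h, dif_pos]
    exact hasFDerivAt_apply _ _
  · simp only [Function.updateFinset, h, dif_neg, not_false_eq_true]
    exact hasFDerivAt_const _ _

lemma contDiff_updateFinset (x : ι → Vec 3) (S : Finset ι) :
    ContDiff ℝ (⊤ : ℕ∞) fun y : S → Vec 3 => Function.updateFinset x S y := by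
  rw [contDiff_pi]
  intro i
  by_cases h : i ∈ S
  · simp only [Function.updateFinset, h, dif_pos]
    exact contDiff_apply _ _ _
  · simp only [Function.updateFinset, h, dif_neg, not_false_eq_true]
    exact contDiff_const

lemma partialSq_updateFinset {φ : (ι → Vec 3) → ℝ} (hφ : ContDiff ℝ 1 φ) (x : ι → Vec 3)
    (S : Finset ι) (i : S) (y : S → Vec 3) :
    partialSq (fun y : S → Vec 3 => φ (Function.updateFinset x S y)) i y
      = partialSq φ i (Function.updateFinset x S y) := by
  unfold partialSq
  have h := ((hφ.differentiable (by norm_num)) (Function.updateFinset x S y)).hasFDerivAt.comp y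
    (hasFDerivAt_updateFinset x S y)
  have h' : fderiv ℝ (fun y : S → Vec 3 => φ (Function.updateFinset x S y)) y = _ := h.fderiv
  rw [h']
  refine Finset.sum_congr rfl fun k _ => ?_
  rw [ContinuousLinearMap.comp_apply]
  congr 2
  funext j
  by_cases hj : j ∈ S
  · rcases eq_or_ne j i with rfl | hne
    · simp
    · have : (⟨j, hj⟩ : S) ≠ i := fun h => hne (congrArg Subtype.val h)
      simp [hj, hne, this]
  · have : j ≠ i := fun h => hj (h ▸ i.2)
    simp [hj, this]

lemma sum_subtype_erase (S : Finset ι) (i : S) (f : ι → ℝ≥0∞) :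
    ∑ j ∈ Finset.univ.erase i, f j = ∑ j ∈ S.erase i, f j := by
  have : S.erase (i : ι) = (Finset.univ.erase i).map (Function.Embedding.subtype _) := by
    ext j; simp [and_comm]
  rw [this, Finset.sum_map]
  rfl

lemma subsetDensity_updateFinset (V : Vec 3 → ℝ≥0∞) {φ : (ι → Vec 3) → ℝ}
    (hφ : ContDiff ℝ 1 φ) (x : ι → Vec 3) (S : Finset ι) (y : S → Vec 3) :
    subsetDensity V φ S (Function.updateFinset x S y)
      = ENNReal.ofReal (∑ i, partialSq (fun y : S → Vec 3 => φ (Function.updateFinset x S y)) i y)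
        + pairPot V y * ENNReal.ofReal (φ (Function.updateFinset x S y) ^ 2) / 2 := by
  unfold subsetDensity pairPot
  simp_rw [partialSq_updateFinset hφ]
  have hy : ∀ i : S, Function.updateFinset x S y i = y i := fun i => by
    simp [Function.updateFinset]
  congr 1
  · rw [← Finset.sum_coe_sort S]
  · congr 2
    rw [← Finset.sum_coe_sort S]
    refine Finset.sum_congr rfl fun i _ => ?_
    rw [← sum_subtype_erase S i fun j => V (Function.updateFinset x S y i
      - Function.updateFinset x S y j)]
    simp_rw [hy]

lemma subset_energy {V : Vec 3 → ℝ≥0∞} (hV : Measurable V) {c : ℝ} {ℓ : ℝ} {S : Finset ι}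
    (hcell : ∀ (b : Vec 3) (φ : (S → Vec 3) → ℝ), ContDiff ℝ (⊤ : ℕ∞) φ →
      ENNReal.ofReal c *
          ∫⁻ x, ENNReal.ofReal (φ x ^ 2) ∂Measure.pi (fun _ : S => volume.restrict (cell b ℓ))
        ≤ ∫⁻ x, (ENNReal.ofReal (∑ i, partialSq φ i x)
            + pairPot V x * ENNReal.ofReal (φ x ^ 2) / 2)
          ∂Measure.pi (fun _ : S => volume.restrict (cell b ℓ)))
    {β : ι → Vec 3} {b : Vec 3} (hβ : ∀ i ∈ S, β i = b) {φ : (ι → Vec 3) → ℝ}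
    (hφ : ContDiff ℝ (⊤ : ℕ∞) φ) :
    ENNReal.ofReal c *
        ∫⁻ x, ENNReal.ofReal (φ x ^ 2) ∂Measure.pi (fun i => volume.restrict (cell (β i) ℓ))
      ≤ ∫⁻ x, subsetDensity V φ S x ∂Measure.pi (fun i => volume.restrict (cell (β i) ℓ)) := by
  have hφ1 : ContDiff ℝ 1 φ := hφ.of_le (by exact_mod_cast le_top)
  have hφm : Measurable φ := hφ.continuous.measurable
  rw [← lintegral_const_mul _ (by fun_prop)]
  refine lintegral_le_of_lmarginal_le S (by fun_prop) (measurable_subsetDensity hV hφ1 S) ?_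
  intro x
  unfold lmarginal
  have hμ : (fun i : S => (volume : Measure (Vec 3)).restrict (cell (β i) ℓ))
      = fun _ => volume.restrict (cell b ℓ) := by
    funext i; rw [hβ i i.2]
  rw [hμ]
  have := hcell b (fun y : S → Vec 3 => φ (Function.updateFinset x S y))
    (hφ.comp (contDiff_updateFinset x S))
  simp_rw [subsetDensity_updateFinset V hφ1]
  rw [lintegral_const_mul]
  · exact this
  · have : Measurable fun y : S → Vec 3 => φ (Function.updateFinset x S y) :=
      hφm.comp measurable_updateFinset
    fun_prop

end

section

variable {ι : Type} [Fintype ι] [DecidableEq ι]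

lemma cluster_energy {V : Vec 3 → ℝ≥0∞} (hV : Measurable V) {φ : (ι → Vec 3) → ℝ}
    (hφ : ContDiff ℝ 1 φ) (μ : Measure (ι → Vec 3)) {κ m : ℝ} (hκ : 0 ≤ κ) (hm : 1 ≤ m) {p : ℕ}
    (hp : 2 * m ≤ p) (S : Finset ι)
    (hS : ∀ S' ⊆ S, S'.card ≤ p → ENNReal.ofReal (κ * (S'.card * (S'.card - 1))) *
        ∫⁻ x, ENNReal.ofReal (φ x ^ 2) ∂μ ≤ ∫⁻ x, subsetDensity V φ S' x ∂μ) :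
    ENNReal.ofReal ((2 * m - 1) * S.card * κ) * ∫⁻ x, ENNReal.ofReal (φ x ^ 2) ∂μ
      ≤ (∫⁻ x, subsetDensity V φ S x ∂μ)
        + ENNReal.ofReal (m ^ 2 * κ) * ∫⁻ x, ENNReal.ofReal (φ x ^ 2) ∂μ := by
  induction S using Finset.strongInduction with
  | H S ih =>
  set I := ∫⁻ x, ENNReal.ofReal (φ x ^ 2) ∂μ with hI
  by_cases hc : S.card ≤ p
  · have h1 := hS S subset_rfl hc
    refine le_trans ?_ (add_le_add_left h1 _)
    have h2 : (0 : ℝ) ≤ S.card * (S.card - 1) := by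
      rcases Nat.eq_zero_or_pos S.card with h | h
      · simp [h]
      · have : (1 : ℝ) ≤ S.card := by exact_mod_cast h
        nlinarith
    rw [← add_mul, ← ENNReal.ofReal_add (by positivity) (by positivity)]
    gcongr
    nlinarith [mul_nonneg hκ (sq_nonneg (S.card - m))]
  · obtain ⟨S', hS'S, hS'c⟩ := Finset.exists_subset_card_eq (not_le.1 hc).le
    have hp0 : 0 < S'.card := by
      rw [hS'c]
      have : (0 : ℝ) < p := by linarith
      exact_mod_cast this
    have hssub : S \ S' ⊂ S := Finset.sdiff_ssubset hS'S (Finset.card_pos.1 hp0)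
    have h1 := ih (S \ S') hssub fun S'' h'' => hS S'' (h''.trans Finset.sdiff_subset)
    have h2 := hS S' hS'S hS'c.le
    have hcard : (S.card : ℝ) = S'.card + (S \ S').card := by
      rw [Finset.card_sdiff_of_subset hS'S, Nat.cast_sub (Finset.card_le_card hS'S)]
      ring
    have h3 : (∫⁻ x, subsetDensity V φ S' x ∂μ) + ∫⁻ x, subsetDensity V φ (S \ S') x ∂μ
        ≤ ∫⁻ x, subsetDensity V φ S x ∂μ := by
      rw [← lintegral_add_left (measurable_subsetDensity hV hφ S')]
      refine lintegral_mono fun x => ?_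
      have := subsetDensity_add_le V φ (Finset.disjoint_sdiff (s := S') (t := S)) x
      rwa [Finset.union_sdiff_of_subset hS'S] at this
    calc _ = ENNReal.ofReal ((2 * m - 1) * S'.card * κ) * I
          + ENNReal.ofReal ((2 * m - 1) * (S \ S').card * κ) * I := by
          have : 0 ≤ 2 * m - 1 := by linarith
          rw [← add_mul, ← ENNReal.ofReal_add (by positivity) (by positivity), hcard]
          congr 2; ring
      _ ≤ ENNReal.ofReal (κ * (S'.card * (S'.card - 1))) * I
          + ((∫⁻ x, subsetDensity V φ (S \ S') x ∂μ) + ENNReal.ofReal (m ^ 2 * κ) * I) := by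
          refine add_le_add (mul_le_mul_left (ENNReal.ofReal_le_ofReal ?_) _) h1
          rw [hS'c]
          have : (0 : ℝ) ≤ κ * p := by positivity
          nlinarith
      _ ≤ _ := by
          rw [← add_assoc]
          exact add_le_add_left ((add_le_add_left h2 _).trans h3) _

lemma sum_subsetDensity_fiber_le (V : Vec 3 → ℝ≥0∞) (φ : (ι → Vec 3) → ℝ) {γ : Type}
    [Fintype γ] [DecidableEq γ] (α : ι → γ) (x : ι → Vec 3) :
    ∑ g, subsetDensity V φ (Finset.univ.filter fun i => α i = g) x
      ≤ subsetDensity V φ Finset.univ x := by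
  have key : ∀ Γ : Finset γ, ∑ g ∈ Γ, subsetDensity V φ (Finset.univ.filter fun i => α i = g) x
      ≤ subsetDensity V φ (Finset.univ.filter fun i => α i ∈ Γ) x := by
    intro Γ
    induction Γ using Finset.induction_on with
    | empty => simp
    | insert g Γ hg ih =>
      rw [Finset.sum_insert hg]
      have hd : Disjoint (Finset.univ.filter fun i => α i = g)
          (Finset.univ.filter fun i => α i ∈ Γ) := by
        rw [Finset.disjoint_filter]
        rintro i - rfl
        exact hg
      have hu : (Finset.univ.filter fun i => α i = g) ∪ (Finset.univ.filter fun i => α i ∈ Γ)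
          = Finset.univ.filter fun i => α i ∈ insert g Γ := by
        ext i; simp
      rw [← hu]
      exact (add_le_add_right ih _).trans (subsetDensity_add_le V φ hd x)
  simpa using key Finset.univ

lemma region_energy {V : Vec 3 → ℝ≥0∞} (hV : Measurable V) {φ : (ι → Vec 3) → ℝ}
    (hφ : ContDiff ℝ (⊤ : ℕ∞) φ) {κ m ℓ : ℝ} (hκ : 0 ≤ κ) (hm : 1 ≤ m) {p : ℕ}
    (hp : 2 * m ≤ p)
    (hcell : ∀ n ≤ p, ∀ (ι : Type) [Fintype ι] [DecidableEq ι], Fintype.card ι = n →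
      ∀ (b : Vec 3) (φ : (ι → Vec 3) → ℝ), ContDiff ℝ (⊤ : ℕ∞) φ →
      ENNReal.ofReal (κ * (n * (n - 1))) *
          ∫⁻ x, ENNReal.ofReal (φ x ^ 2) ∂Measure.pi (fun _ : ι => volume.restrict (cell b ℓ))
        ≤ ∫⁻ x, (ENNReal.ofReal (∑ i, partialSq φ i x)
            + pairPot V x * ENNReal.ofReal (φ x ^ 2) / 2)
          ∂Measure.pi (fun _ : ι => volume.restrict (cell b ℓ)))
    {γ : Type} [Fintype γ] [DecidableEq γ] (b : γ → Vec 3) (α : ι → γ) :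
    ENNReal.ofReal ((2 * m - 1) * Fintype.card ι * κ) *
        ∫⁻ x, ENNReal.ofReal (φ x ^ 2) ∂Measure.pi (fun i => volume.restrict (cell (b (α i)) ℓ))
      ≤ (∫⁻ x, subsetDensity V φ Finset.univ x
          ∂Measure.pi (fun i => volume.restrict (cell (b (α i)) ℓ)))
        + ENNReal.ofReal (Fintype.card γ * (m ^ 2 * κ)) *
          ∫⁻ x, ENNReal.ofReal (φ x ^ 2)
            ∂Measure.pi (fun i => volume.restrict (cell (b (α i)) ℓ)) := by
  have hφ1 : ContDiff ℝ 1 φ := hφ.of_le (by exact_mod_cast le_top)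
  set μ := Measure.pi (fun i => (volume : Measure (Vec 3)).restrict (cell (b (α i)) ℓ)) with hμ
  set I := ∫⁻ x, ENNReal.ofReal (φ x ^ 2) ∂μ with hI
  have h2m : 0 ≤ 2 * m - 1 := by linarith
  have h1 : ∀ g, ENNReal.ofReal ((2 * m - 1) *
      (Finset.univ.filter fun i => α i = g).card * κ) * I
      ≤ (∫⁻ x, subsetDensity V φ (Finset.univ.filter fun i => α i = g) x ∂μ)
        + ENNReal.ofReal (m ^ 2 * κ) * I := by
    intro g
    refine cluster_energy hV hφ1 μ hκ hm hp _ fun S' hS' hc => ?_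
    refine subset_energy hV (hcell _ hc S' (by simp)) (β := fun i => b (α i)) (b := b g)
      (fun i hi => ?_) hφ
    rw [(Finset.mem_filter.1 (hS' hi)).2]
  calc _ = ∑ g, ENNReal.ofReal ((2 * m - 1) *
          (Finset.univ.filter fun i => α i = g).card * κ) * I := by
        rw [← Finset.sum_mul, ← ENNReal.ofReal_sum_of_nonneg fun g _ => by positivity,
          ← Finset.sum_mul, ← Finset.mul_sum, ← Nat.cast_sum,
          ← Finset.card_eq_sum_card_fiberwise fun i _ => Finset.mem_univ (α i), Finset.card_univ]
    _ ≤ ∑ g, ((∫⁻ x, subsetDensity V φ (Finset.univ.filter fun i => α i = g) x ∂μ)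
          + ENNReal.ofReal (m ^ 2 * κ) * I) := Finset.sum_le_sum fun g _ => h1 g
    _ = (∫⁻ x, ∑ g, subsetDensity V φ (Finset.univ.filter fun i => α i = g) x ∂μ)
          + ENNReal.ofReal (Fintype.card γ * (m ^ 2 * κ)) * I := by
        rw [Finset.sum_add_distrib, lintegral_finsetSum _ fun g _ =>
          measurable_subsetDensity hV hφ1 _, Finset.sum_const, Finset.card_univ, nsmul_eq_mul,
          ENNReal.ofReal_mul (p := (Fintype.card γ : ℝ)) (by positivity), ENNReal.ofReal_natCast, mul_assoc]
    _ ≤ _ := by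
        gcongr with x
        exact sum_subsetDensity_fiber_le V φ α x

end

/-- The lower corner of the subcube with index `α`. -/
def subCorner (b : Vec 3) (ℓ : ℝ) {M : ℕ} (α : Fin 3 → Fin M) : Vec 3 := fun k => b k + α k * ℓ

lemma mem_cell_subCorner_iff {b : Vec 3} {ℓ : ℝ} (hℓ : 0 < ℓ) {M : ℕ} (α : Fin 3 → Fin M)
    {z : Vec 3} :
    z ∈ cell (subCorner b ℓ α) ℓ
      ↔ ∀ k, 0 ≤ (z k - b k) / ℓ ∧ ⌊(z k - b k) / ℓ⌋₊ = α k := by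
  rw [mem_cell]
  refine forall_congr' fun k => ?_
  unfold subCorner
  have h1 : b k + α k * ℓ ≤ z k ↔ (α k : ℝ) ≤ (z k - b k) / ℓ := by
    rw [le_div_iff₀ hℓ, le_sub_iff_add_le']
  have h2 : z k < b k + α k * ℓ + ℓ ↔ (z k - b k) / ℓ < α k + 1 := by
    rw [div_lt_iff₀ hℓ, sub_lt_iff_lt_add', add_mul, one_mul, add_assoc]
  rw [h1, h2]
  constructor
  · rintro ⟨h3, h4⟩
    have h0 : 0 ≤ (z k - b k) / ℓ := le_trans (by positivity) h3
    exact ⟨h0, (Nat.floor_eq_iff h0).2 ⟨h3, h4⟩⟩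
  · rintro ⟨h0, h3⟩
    exact (Nat.floor_eq_iff h0).1 h3

lemma mem_cell_iff_exists_subCorner {b : Vec 3} {ℓ : ℝ} (hℓ : 0 < ℓ) {M : ℕ} {z : Vec 3} :
    z ∈ cell b (M * ℓ) ↔ ∃ α : Fin 3 → Fin M, z ∈ cell (subCorner b ℓ α) ℓ := by
  simp_rw [mem_cell_subCorner_iff hℓ]
  rw [mem_cell]
  have key : ∀ k, (b k ≤ z k ∧ z k < b k + M * ℓ)
      ↔ (0 ≤ (z k - b k) / ℓ ∧ ⌊(z k - b k) / ℓ⌋₊ < M) := by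
    intro k
    have h1 : b k ≤ z k ↔ 0 ≤ (z k - b k) / ℓ := by
      rw [le_div_iff₀ hℓ, zero_mul, sub_nonneg]
    rw [h1]
    refine and_congr_right fun h0 => ?_
    rw [Nat.floor_lt h0, div_lt_iff₀ hℓ, sub_lt_iff_lt_add']
  simp_rw [key]
  constructor
  · intro h
    exact ⟨fun k => ⟨_, (h k).2⟩, fun k => ⟨(h k).1, rfl⟩⟩
  · rintro ⟨α, h⟩ k
    exact ⟨(h k).1, by rw [(h k).2]; exact (α k).2⟩

lemma lintegral_pi_cell_eq_sum {ι : Type} [Fintype ι] [DecidableEq ι] (b : Vec 3) {ℓ : ℝ}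
    (hℓ : 0 < ℓ) {M : ℕ} (f : (ι → Vec 3) → ℝ≥0∞) :
    ∫⁻ x in Set.pi Set.univ fun _ => cell b (M * ℓ), f x
      = ∑ α : ι → Fin 3 → Fin M, ∫⁻ x, f x
        ∂Measure.pi (fun i => volume.restrict (cell (subCorner b ℓ (α i)) ℓ)) := by
  have hU : (Set.pi Set.univ fun _ : ι => cell b (M * ℓ))
      = ⋃ α : ι → Fin 3 → Fin M, Set.pi Set.univ fun i => cell (subCorner b ℓ (α i)) ℓ := by
    ext x
    simp only [Set.mem_pi, Set.mem_univ, true_imp_iff, Set.mem_iUnion,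
      mem_cell_iff_exists_subCorner hℓ]
    exact ⟨fun h => ⟨fun i => (h i).choose, fun i => (h i).choose_spec⟩,
      fun ⟨α, h⟩ i => ⟨α i, h i⟩⟩
  rw [hU, lintegral_iUnion, tsum_fintype]
  · refine Finset.sum_congr rfl fun α _ => ?_
    rw [← Measure.restrict_pi_pi, ← volume_pi]
  · exact fun α => MeasurableSet.univ_pi fun i => measurableSet_cell _ _
  · intro α α' hne
    rw [Function.onFun, Set.disjoint_left]
    intro x hx hx'
    apply hne
    funext i k
    have h1 := ((mem_cell_subCorner_iff hℓ _).1 (hx i trivial) k).2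
    have h2 := ((mem_cell_subCorner_iff hℓ _).1 (hx' i trivial) k).2
    exact Fin.ext (h1.symm.trans h2)

lemma torus_lower_real {V : Vec 3 → ℝ≥0∞} (hV : Measurable V) (hVc : HasCompactSupport V) {a : ℝ}
    (ha : 0 < a) (hscat : sInf (scatSet3 V) = ENNReal.ofReal (4 * π * a)) (p : ℕ) {ε : ℝ}
    (hε : 0 < ε) (hε1 : ε < 1) :
    ∃ ℓ₀ : ℝ, 0 < ℓ₀ ∧ ∀ ℓ ≥ ℓ₀, ∀ m : ℝ, 1 ≤ m → 2 * m ≤ p → ∀ (N M : ℕ) (b : Vec 3)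
      (φ : (Fin N → Vec 3) → ℝ), ContDiff ℝ (⊤ : ℕ∞) φ →
      ENNReal.ofReal ((2 * m - 1) * N * (4 * π * a * (1 - ε) / ℓ ^ 3)) *
          ∫⁻ x in Set.pi Set.univ fun _ => cell b (M * ℓ), ENNReal.ofReal (φ x ^ 2)
        ≤ (∫⁻ x in Set.pi Set.univ fun _ => cell b (M * ℓ), subsetDensity V φ Finset.univ x)
          + ENNReal.ofReal ((M : ℝ) ^ 3 * (m ^ 2 * (4 * π * a * (1 - ε) / ℓ ^ 3))) *
            ∫⁻ x in Set.pi Set.univ fun _ => cell b (M * ℓ), ENNReal.ofReal (φ x ^ 2) := by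
  choose ℓ₁ hℓ₁ hcell using fun n => cell_energy hV hVc ha hscat n hε hε1
  have hex : ∃ ℓ₀ : ℝ, 0 < ℓ₀ ∧ ∀ n ≤ p, ℓ₁ n ≤ ℓ₀ := by
    refine ⟨∑ n ∈ Finset.range (p + 1), ℓ₁ n,
      Finset.sum_pos (fun n _ => hℓ₁ n) ⟨0, by simp⟩, fun n hn => ?_⟩
    exact Finset.single_le_sum (f := ℓ₁) (fun n _ => (hℓ₁ n).le) (by simp; omega)
  obtain ⟨ℓ₀, hℓ₀, hle⟩ := hex
  refine ⟨ℓ₀, hℓ₀, fun ℓ hℓ m hm hp N M b φ hφ => ?_⟩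
  have hℓpos : 0 < ℓ := hℓ₀.trans_le hℓ
  have hκ : 0 ≤ 4 * π * a * (1 - ε) / ℓ ^ 3 := by
    have : 0 ≤ 1 - ε := by linarith
    positivity
  simp_rw [lintegral_pi_cell_eq_sum b hℓpos]
  rw [Finset.mul_sum, Finset.mul_sum, ← Finset.sum_add_distrib]
  refine Finset.sum_le_sum fun α _ => ?_
  have := region_energy hV hφ hκ hm hp (ℓ := ℓ) (fun n hn ι _ _ hc b φ hφ => by
    have := hcell n ℓ ((hle n hn).trans hℓ) ι hc b φ hφ
    rwa [mul_div_right_comm] at this) (subCorner b ℓ) α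
  simpa using this

lemma sum_sum_erase_eq_two_mul {N : ℕ} (F : Fin N → Fin N → ℝ≥0∞) (hF : ∀ i j, F i j = F j i) :
    ∑ i, ∑ j ∈ Finset.univ.erase i, F i j = 2 * ∑ i, ∑ j, if i < j then F i j else 0 := by
  have h1 : ∀ i, ∑ j ∈ Finset.univ.erase i, F i j
      = (∑ j, if i < j then F i j else 0) + ∑ j, if j < i then F j i else 0 := by
    intro i
    rw [← Finset.sum_add_distrib, ← Finset.filter_ne', Finset.sum_filter]
    refine Finset.sum_congr rfl fun j _ => ?_
    rcases lt_trichotomy i j with h | h | h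
    · simp [h, h.ne', h.not_gt]
    · simp [h]
    · simp [h, h.ne, h.not_gt, hF i j]
  simp_rw [h1]
  rw [Finset.sum_add_distrib, two_mul]
  congr 1
  exact Finset.sum_comm

lemma le_periodize (d : ℕ) (V : Vec d → ℝ≥0∞) (T : ℝ) (z : Vec d) : V z ≤ periodize d V T z := by
  refine le_trans (le_of_eq ?_) (ENNReal.le_tsum (0 : Fin d → ℤ))
  simp

lemma measurable_periodize {d : ℕ} {V : Vec d → ℝ≥0∞} (hV : Measurable V) (T : ℝ) :
    Measurable (periodize d V T) := by
  refine Measurable.tsum fun n => hV.comp ?_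
  fun_prop

lemma even_of_radial {V : Vec 3 → ℝ≥0∞}
    (hVrad : ∀ x y : Vec 3, ∑ k, (x k) ^ 2 = ∑ k, (y k) ^ 2 → V x = V y) (z : Vec 3) :
    V (-z) = V z := hVrad _ _ (by simp)

lemma box_ae_eq_pi_cell (N : ℕ) (T : ℝ) :
    box 3 N T =ᵐ[volume] Set.pi Set.univ fun _ => cell (fun _ => -T / 2) T := by
  have h : box 3 N T = Set.pi Set.univ fun _ => Set.pi Set.univ fun _ =>
      Set.Icc (-T / 2) (T / 2) := by
    ext x
    exact ⟨fun h i _ k _ => h i k, fun h i k => h i trivial k trivial⟩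
  rw [h, volume_pi]
  refine Measure.ae_eq_set_pi fun i _ => ?_
  unfold cell
  rw [volume_pi]
  refine Measure.ae_eq_set_pi fun k _ => ?_
  rw [show -T / 2 + T = T / 2 by ring]
  exact Ico_ae_eq_Icc.symm

lemma enorm_sq_eq_re_add_im (z : ℂ) :
    (‖z‖₊ : ℝ≥0∞) ^ 2 = ENNReal.ofReal (z.re ^ 2) + ENNReal.ofReal (z.im ^ 2) := by
  rw [← ENNReal.ofReal_add (sq_nonneg _) (sq_nonneg _), ← enorm_eq_nnnorm, ← ofReal_norm,
    ← ENNReal.ofReal_pow (norm_nonneg _), Complex.sq_norm, Complex.normSq_apply]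
  ring_nf

lemma fderiv_re_apply {E : Type*} [NormedAddCommGroup E] [NormedSpace ℝ E] {ψ : E → ℂ} {x : E}
    (h : DifferentiableAt ℝ ψ x) (v : E) :
    fderiv ℝ (fun y => (ψ y).re) x v = (fderiv ℝ ψ x v).re := by
  have := (Complex.reCLM.hasFDerivAt (x := ψ x)).comp x h.hasFDerivAt
  rw [show (fun y => (ψ y).re) = Complex.reCLM ∘ ψ from rfl, this.fderiv]
  rfl

lemma fderiv_im_apply {E : Type*} [NormedAddCommGroup E] [NormedSpace ℝ E] {ψ : E → ℂ} {x : E}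
    (h : DifferentiableAt ℝ ψ x) (v : E) :
    fderiv ℝ (fun y => (ψ y).im) x v = (fderiv ℝ ψ x v).im := by
  have := (Complex.imCLM.hasFDerivAt (x := ψ x)).comp x h.hasFDerivAt
  rw [show (fun y => (ψ y).im) = Complex.imCLM ∘ ψ from rfl, this.fderiv]
  rfl

/-- The energy density of a wave function on configuration space. -/
def stateDensity {N : ℕ} (T : ℝ) (V : Vec 3 → ℝ≥0∞) (ψ : (Fin N → Vec 3) → ℂ)
    (x : Fin N → Vec 3) : ℝ≥0∞ :=
  (∑ i : Fin N, ∑ k : Fin 3, (‖fderiv ℝ ψ x (Pi.single i (Pi.single k 1))‖₊ : ℝ≥0∞) ^ 2)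
    + ∑ i : Fin N, ∑ j : Fin N,
      if i < j then periodize 3 V T (fun k => x i k - x j k) * (‖ψ x‖₊ : ℝ≥0∞) ^ 2 else 0

lemma energy_eq_lintegral {N : ℕ} {T : ℝ} {V : Vec 3 → ℝ≥0∞} (hV : Measurable V)
    {ψ : (Fin N → Vec 3) → ℂ} (hψ : ContDiff ℝ 1 ψ) :
    kineticE 3 N T ψ + interE 3 N T V ψ = ∫⁻ x in box 3 N T, stateDensity T V ψ x := by
  have hm : ∀ (i : Fin N) (k : Fin 3), Measurable fun x =>
      (‖fderiv ℝ ψ x (Pi.single i (Pi.single k 1))‖₊ : ℝ≥0∞) ^ 2 := by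
    intro i k
    have : Continuous fun x => fderiv ℝ ψ x (Pi.single i (Pi.single k 1)) :=
      (hψ.continuous_fderiv (by norm_num)).clm_apply continuous_const
    exact (this.measurable.nnnorm.coe_nnreal_ennreal).pow_const 2
  have hm2 : ∀ i j : Fin N, Measurable fun x : Fin N → Vec 3 =>
      if i < j then periodize 3 V T (fun k => x i k - x j k) * (‖ψ x‖₊ : ℝ≥0∞) ^ 2 else 0 := by
    intro i j
    split_ifs
    · refine ((measurable_periodize hV T).comp (by fun_prop)).mul ?_
      exact (hψ.continuous.measurable.nnnorm.coe_nnreal_ennreal).pow_const 2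
    · exact measurable_const
  unfold stateDensity kineticE interE
  rw [lintegral_add_left (Finset.measurable_sum _ fun i _ => Finset.measurable_sum _ fun k _ =>
    hm i k)]
  congr 1
  · rw [lintegral_finsetSum _ fun i _ => Finset.measurable_sum _ fun k _ => hm i k]
    exact Finset.sum_congr rfl fun i _ => (lintegral_finsetSum _ fun k _ => hm i k).symm
  · rw [lintegral_finsetSum _ fun i _ => Finset.measurable_sum _ fun k _ => hm2 i k]
    refine Finset.sum_congr rfl fun i _ => ?_
    rw [lintegral_finsetSum _ fun k _ => hm2 i k]
    refine Finset.sum_congr rfl fun j _ => ?_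
    split_ifs <;> simp

lemma subsetDensity_re_add_im_le {N : ℕ} (T : ℝ) {V : Vec 3 → ℝ≥0∞}
    (hVe : ∀ z, V (-z) = V z) {ψ : (Fin N → Vec 3) → ℂ} (hψ : Differentiable ℝ ψ)
    (x : Fin N → Vec 3) :
    subsetDensity V (fun y => (ψ y).re) Finset.univ x
      + subsetDensity V (fun y => (ψ y).im) Finset.univ x ≤ stateDensity T V ψ x := by
  unfold subsetDensity stateDensity
  have h1 : ENNReal.ofReal (∑ i, partialSq (fun y => (ψ y).re) i x)
      + ENNReal.ofReal (∑ i, partialSq (fun y => (ψ y).im) i x)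
      = ∑ i : Fin N, ∑ k : Fin 3,
        (‖fderiv ℝ ψ x (Pi.single i (Pi.single k 1))‖₊ : ℝ≥0∞) ^ 2 := by
    rw [ENNReal.ofReal_sum_of_nonneg fun i _ => partialSq_nonneg _ _ _,
      ENNReal.ofReal_sum_of_nonneg fun i _ => partialSq_nonneg _ _ _, ← Finset.sum_add_distrib]
    refine Finset.sum_congr rfl fun i _ => ?_
    unfold partialSq
    rw [ENNReal.ofReal_sum_of_nonneg fun i _ => sq_nonneg _,
      ENNReal.ofReal_sum_of_nonneg fun i _ => sq_nonneg _, ← Finset.sum_add_distrib]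
    refine Finset.sum_congr rfl fun k _ => ?_
    rw [enorm_sq_eq_re_add_im, fderiv_re_apply (hψ x), fderiv_im_apply (hψ x)]
  have h2 : (∑ i, ∑ j ∈ Finset.univ.erase i, V (x i - x j)) *
        ENNReal.ofReal ((ψ x).re ^ 2) / 2
      + (∑ i, ∑ j ∈ Finset.univ.erase i, V (x i - x j)) *
        ENNReal.ofReal ((ψ x).im ^ 2) / 2
      ≤ ∑ i : Fin N, ∑ j : Fin N,
      if i < j then periodize 3 V T (fun k => x i k - x j k) * (‖ψ x‖₊ : ℝ≥0∞) ^ 2 else 0 := by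
    rw [← ENNReal.add_div, ← mul_add, ← enorm_sq_eq_re_add_im,
      sum_sum_erase_eq_two_mul (fun i j => V (x i - x j)) fun i j => by
        rw [← hVe, neg_sub], mul_assoc, mul_div_assoc]
    refine (ENNReal.mul_div_le).trans ?_
    rw [Finset.sum_mul]
    gcongr with i
    rw [Finset.sum_mul]
    gcongr with j
    split_ifs
    · gcongr
      exact le_periodize 3 V T _
    · simp
  calc _ = _ := add_add_add_comm _ _ _ _
    _ ≤ _ := add_le_add h1.le h2

lemma trial_energy_lower {V : Vec 3 → ℝ≥0∞} (hV : Measurable V) (hVc : HasCompactSupport V)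
    (hVe : ∀ z, V (-z) = V z) {a : ℝ}
    (ha : 0 < a) (hscat : sInf (scatSet3 V) = ENNReal.ofReal (4 * π * a)) (p : ℕ) {ε : ℝ}
    (hε : 0 < ε) (hε1 : ε < 1) :
    ∃ ℓ₀ : ℝ, 0 < ℓ₀ ∧ ∀ ℓ ≥ ℓ₀, ∀ m : ℝ, 1 ≤ m → 2 * m ≤ p → ∀ (N M : ℕ)
      (ψ : (Fin N → Vec 3) → ℂ), IsTrialState 3 N (M * ℓ) ψ →
      ENNReal.ofReal ((2 * m - 1) * N * (4 * π * a * (1 - ε) / ℓ ^ 3))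
        ≤ (kineticE 3 N (M * ℓ) ψ + interE 3 N (M * ℓ) V ψ)
          + ENNReal.ofReal ((M : ℝ) ^ 3 * (m ^ 2 * (4 * π * a * (1 - ε) / ℓ ^ 3))) := by
  obtain ⟨ℓ₀, hℓ₀, h⟩ := torus_lower_real hV hVc ha hscat p hε hε1
  refine ⟨ℓ₀, hℓ₀, fun ℓ hℓ m hm hmp N M ψ hψ => ?_⟩
  obtain ⟨hs, -, -, hn⟩ := hψ
  have hre : ContDiff ℝ (⊤ : ℕ∞) fun y => (ψ y).re := Complex.reCLM.contDiff.comp hs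
  have him : ContDiff ℝ (⊤ : ℕ∞) fun y => (ψ y).im := Complex.imCLM.contDiff.comp hs
  have h1 := add_le_add (h ℓ hℓ m hm hmp N M (fun _ => -(M * ℓ) / 2) _ hre)
    (h ℓ hℓ m hm hmp N M (fun _ => -(M * ℓ) / 2) _ him)
  simp_rw [← Measure.restrict_congr_set (box_ae_eq_pi_cell N (M * ℓ))] at h1
  rw [← mul_add, add_add_add_comm, ← mul_add, ← lintegral_add_left, ← lintegral_add_left] at h1
  rotate_left
  · exact measurable_subsetDensity hV (hre.of_le (by exact_mod_cast le_top)) _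
  · exact (hre.continuous.pow 2).measurable.ennreal_ofReal
  simp_rw [← enorm_sq_eq_re_add_im, hn, mul_one] at h1
  refine h1.trans ?_
  rw [energy_eq_lintegral hV (hs.of_le (by exact_mod_cast le_top))]
  gcongr with x
  exact subsetDensity_re_add_im_le _ hVe (hs.differentiable (by simp)) x

lemma sideLength_pow_three {ρ : ℝ} (hρ : 0 < ρ) (N : ℕ) : sideLength 3 ρ N ^ 3 = N / ρ := by
  have h : (0 : ℝ) ≤ N / ρ := by positivity
  unfold sideLength
  rw [← rpow_natCast, ← rpow_mul h]
  norm_num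

lemma sideLength_nonneg {ρ : ℝ} (hρ : 0 < ρ) (N : ℕ) : 0 ≤ sideLength 3 ρ N := by
  unfold sideLength
  positivity

lemma sideLength_energy_lower {V : Vec 3 → ℝ≥0∞} (hV : Measurable V) (hVc : HasCompactSupport V)
    (hVe : ∀ z, V (-z) = V z) {a : ℝ}
    (ha : 0 < a) (hscat : sInf (scatSet3 V) = ENNReal.ofReal (4 * π * a)) {ε : ℝ}
    (hε : 0 < ε) (hε1 : ε < 1) :
    ∃ ρ₀ : ℝ, 0 < ρ₀ ∧ ∀ ρ, 0 < ρ → ρ < ρ₀ → ∀ᶠ N : ℕ in atTop,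
      ∀ ψ, IsTrialState 3 N (sideLength 3 ρ N) ψ →
        ENNReal.ofReal (4 * π * a * (1 - ε) * ρ ^ 2 * sideLength 3 ρ N ^ 3)
          ≤ kineticE 3 N (sideLength 3 ρ N) ψ + interE 3 N (sideLength 3 ρ N) V ψ := by
  obtain ⟨q, hq⟩ := exists_nat_gt (2 / ε)
  have hq0 : (0 : ℝ) < q := lt_trans (by positivity) hq
  have hq1 : (1 : ℝ) ≤ q := by
    have : 0 < q := by exact_mod_cast hq0
    exact_mod_cast this
  obtain ⟨ℓ₀, hℓ₀, h⟩ := trial_energy_lower hV hVc hVe ha hscat (16 * q) (half_pos hε)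
    (by linarith)
  refine ⟨q / ℓ₀ ^ 3, by positivity, fun ρ hρ hρ0 => ?_⟩
  filter_upwards [eventually_ge_atTop q] with N hN ψ hψ
  set T := sideLength 3 ρ N with hT
  have hT3 : T ^ 3 = N / ρ := sideLength_pow_three hρ N
  have hTn : 0 ≤ T := sideLength_nonneg hρ N
  set L := sideLength 3 ρ q with hL
  have hL3 : L ^ 3 = q / ρ := sideLength_pow_three hρ q
  have hLn : 0 ≤ L := sideLength_nonneg hρ q
  have hL0 : 0 < L := by
    refine lt_of_le_of_ne hLn fun h0 => ?_
    rw [← h0] at hL3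
    have : (0 : ℝ) < q / ρ := by positivity
    rw [← hL3] at this
    norm_num at this
  have hNq : (q : ℝ) ≤ N := by exact_mod_cast hN
  have hLT : L ≤ T := by
    refine le_of_pow_le_pow_left₀ (n := 3) (by norm_num) hTn ?_
    rw [hT3, hL3]
    gcongr
  have hT0 : 0 < T := hL0.trans_le hLT
  have hℓL : ℓ₀ ≤ L := by
    refine le_of_pow_le_pow_left₀ (n := 3) (by norm_num) hLn ?_
    rw [hL3, le_div_iff₀ hρ]
    rw [lt_div_iff₀ (by positivity)] at hρ0
    linarith
  have hx1 : 1 ≤ T / L := (one_le_div hL0).2 hLT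
  set M := ⌊T / L⌋₊ with hM
  have hM1 : 1 ≤ M := Nat.le_floor (by simpa using hx1)
  have hM1' : (1 : ℝ) ≤ M := by exact_mod_cast hM1
  have hM0 : (0 : ℝ) < M := by linarith
  have hMle : (M : ℝ) ≤ T / L := Nat.floor_le (by positivity)
  have hMge : T / L ≤ 2 * M := by
    have := Nat.lt_floor_add_one (T / L)
    linarith
  set ℓ := T / M with hℓ
  have hMℓ : (M : ℝ) * ℓ = T := by rw [hℓ]; field_simp
  have hℓ0 : 0 < ℓ := by positivity
  have hLℓ : L ≤ ℓ := by
    rw [hℓ, le_div_iff₀ hM0, mul_comm, ← le_div_iff₀ hL0]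
    exact hMle
  have hℓ2L : ℓ ≤ 2 * L := by
    rw [hℓ, div_le_iff₀ hM0]
    rw [div_le_iff₀ hL0] at hMge
    linarith
  set m := ρ * ℓ ^ 3 with hm
  have hmq : (q : ℝ) ≤ m := by
    calc (q : ℝ) = ρ * L ^ 3 := by rw [hL3]; field_simp
      _ ≤ _ := by rw [hm]; gcongr
  have hm8 : m ≤ 8 * q := by
    calc m ≤ ρ * (2 * L) ^ 3 := by rw [hm]; gcongr
      _ = 8 * (ρ * L ^ 3) := by ring
      _ = _ := by rw [hL3]; field_simp
  have hNm : (N : ℝ) = M ^ 3 * m := by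
    have : ρ * T ^ 3 = N := by rw [hT3]; field_simp
    rw [← this, ← hMℓ, hm]
    ring
  have key := h ℓ (hℓL.trans hLℓ) m (hq1.trans hmq) (by push_cast; linarith) N M ψ
    (by rw [hMℓ]; exact hψ)
  rw [hMℓ] at key
  have hm0 : 0 < m := by linarith
  have hκ : 0 ≤ 4 * π * a * (1 - ε / 2) / ℓ ^ 3 := by
    have : 0 ≤ 1 - ε / 2 := by linarith
    positivity
  rw [← tsub_le_iff_right, ← ENNReal.ofReal_sub _ (by positivity)] at key
  refine le_trans (ENNReal.ofReal_le_ofReal ?_) key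
  have hρm : ρ ^ 2 = m ^ 2 / (ℓ ^ 3) ^ 2 := by
    rw [hm]; field_simp
  have e1 : (2 * m - 1) * N * (4 * π * a * (1 - ε / 2) / ℓ ^ 3)
      - M ^ 3 * (m ^ 2 * (4 * π * a * (1 - ε / 2) / ℓ ^ 3))
      = 4 * π * a * M ^ 3 / ℓ ^ 3 * ((1 - ε / 2) * (m * (m - 1))) := by
    rw [hNm]; ring
  have e2 : 4 * π * a * (1 - ε) * ρ ^ 2 * T ^ 3
      = 4 * π * a * M ^ 3 / ℓ ^ 3 * ((1 - ε) * (m * m)) := by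
    rw [hρm, ← hMℓ]; field_simp
  rw [e1, e2]
  refine mul_le_mul_of_nonneg_left ?_ (by positivity)
  have h2 : 2 ≤ m * ε := by
    rw [div_lt_iff₀ hε] at hq
    nlinarith
  have h3 : (1 - ε) * m ≤ (1 - ε / 2) * (m - 1) := by nlinarith
  calc (1 - ε) * (m * m) = m * ((1 - ε) * m) := by ring
    _ ≤ m * ((1 - ε / 2) * (m - 1)) := by gcongr
    _ = _ := by ring

/-- A smooth truncation of the real line to `[-1, 1]` that fixes `1`. -/
lemma exists_smooth_clamp {c : ℝ} (hc : 0 < c) (hc1 : c < 1) :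
    ∃ g : ℝ → ℝ, ContDiff ℝ (⊤ : ℕ∞) g ∧ g 1 = 1 ∧ (∀ t, |g t| ≤ 1) ∧
      (∀ t, c * |g t| ≤ |t|) ∧ ∀ t, c * |deriv g t| ≤ 1 := by
  let B : ContDiffBump (0 : ℝ) := ⟨c, 1, hc, hc1⟩
  have hB0 : ∀ t, 0 ≤ B t := fun t => B.nonneg
  have hB1 : ∀ t, B t ≤ 1 := fun t => B.le_one
  have hBc : Continuous B := B.continuous
  have hInt : ∀ x y, IntervalIntegrable B volume x y := fun x y => hBc.intervalIntegrable x y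
  set C := ∫ s in (0 : ℝ)..1, B s with hC
  have hcC : c ≤ C := by
    have h1 : ∫ s in (0 : ℝ)..c, B s = c := by
      have : ∫ s in (0 : ℝ)..c, B s = ∫ s in (0 : ℝ)..c, (1 : ℝ) := by
        refine intervalIntegral.integral_congr fun s hs => ?_
        rw [Set.uIcc_of_le hc.le] at hs
        exact B.one_of_mem_closedBall (by
          rw [mem_closedBall_zero_iff, Real.norm_eq_abs, abs_of_nonneg hs.1]; exact hs.2)
      rw [this]; simp
    have h2 : 0 ≤ ∫ s in c..1, B s := intervalIntegral.integral_nonneg hc1.le fun s _ => hB0 s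
    have h3 := intervalIntegral.integral_add_adjacent_intervals (hInt 0 c) (hInt c 1)
    linarith
  have hC0 : 0 < C := hc.trans_le hcC
  let g : ℝ → ℝ := fun t => (∫ s in (0 : ℝ)..t, B s) / C
  have hderiv : ∀ t, HasDerivAt g (B t / C) t := fun t =>
    (intervalIntegral.integral_hasDerivAt_right (hInt 0 t)
      (hBc.stronglyMeasurableAtFilter _ _) hBc.continuousAt).div_const C
  have hderiv' : deriv g = fun t => B t / C := funext fun t => (hderiv t).deriv
  have hneg : ∀ t, g (-t) = -g t := by
    intro t
    have h1 := intervalIntegral.integral_comp_neg (a := 0) (b := t) (fun s => B s)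
    simp only [B.neg, neg_zero] at h1
    simp only [g]
    rw [h1, intervalIntegral.integral_symm 0 (-t), neg_div, neg_neg]
  have hpos : ∀ t, 0 ≤ t → 0 ≤ g t := fun t ht =>
    div_nonneg (intervalIntegral.integral_nonneg ht fun s _ => hB0 s) hC0.le
  have hle1 : ∀ t, 0 ≤ t → g t ≤ 1 := by
    intro t ht
    rw [div_le_one hC0, hC]
    rcases le_total t 1 with h | h
    · have h2 : 0 ≤ ∫ s in t..1, B s := intervalIntegral.integral_nonneg h fun s _ => hB0 s
      have h3 := intervalIntegral.integral_add_adjacent_intervals (hInt 0 t) (hInt t 1)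
      linarith
    · have h2 : ∫ s in (1 : ℝ)..t, B s = 0 := by
        have : ∫ s in (1 : ℝ)..t, B s = ∫ s in (1 : ℝ)..t, (0 : ℝ) := by
          refine intervalIntegral.integral_congr fun s hs => ?_
          rw [Set.uIcc_of_le h] at hs
          refine B.zero_of_le_dist ?_
          rw [dist_zero_right, Real.norm_eq_abs, abs_of_nonneg (by linarith [hs.1])]
          exact hs.1
        rw [this]; simp
      have h3 := intervalIntegral.integral_add_adjacent_intervals (hInt 0 1) (hInt 1 t)
      linarith
  have hlet : ∀ t, 0 ≤ t → c * g t ≤ t := by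
    intro t ht
    have h1 : ∫ s in (0 : ℝ)..t, B s ≤ t := by
      have := intervalIntegral.integral_mono_on ht (hInt 0 t)
        (continuous_const.intervalIntegrable (μ := volume) (0 : ℝ) t) fun s _ => hB1 s
      simpa using this
    have h2 : C * g t = ∫ s in (0 : ℝ)..t, B s := by
      simp only [g]; field_simp
    calc c * g t ≤ C * g t := mul_le_mul_of_nonneg_right hcC (hpos t ht)
      _ ≤ t := h2.trans_le h1
  have habs : ∀ t, |g t| = g |t| := by
    intro t
    rcases le_total 0 t with h | h
    · rw [abs_of_nonneg h, abs_of_nonneg (hpos t h)]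
    · rw [abs_of_nonpos h, hneg, abs_of_nonpos]
      have := hpos (-t) (by linarith)
      rw [hneg] at this
      linarith
  refine ⟨g, ?_, ?_, fun t => ?_, fun t => ?_, fun t => ?_⟩
  · rw [contDiff_infty_iff_deriv]
    refine ⟨fun t => (hderiv t).differentiableAt, ?_⟩
    rw [hderiv']
    exact B.contDiff.div_const C
  · simp only [g]
    exact div_self hC0.ne'
  · rw [habs]; exact hle1 _ (abs_nonneg t)
  · rw [habs]; exact hlet _ (abs_nonneg t)
  · rw [hderiv', abs_of_nonneg (div_nonneg (hB0 t) hC0.le), ← mul_div_assoc, div_le_one hC0]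
    calc c * B t ≤ c * 1 := mul_le_mul_of_nonneg_left (hB1 t) hc.le
      _ ≤ C := by linarith

/-- The scattering energy density. -/
def scatDensity (V : Vec 3 → ℝ≥0∞) (f : Vec 3 → ℝ) (x : Vec 3) : ℝ≥0∞ :=
  ENNReal.ofReal (gradSq f x) + V x * ENNReal.ofReal (f x ^ 2) / 2

lemma scatSet3_density (V : Vec 3 → ℝ≥0∞) (f : Vec 3 → ℝ) (x : Vec 3) :
    (∑ k, ((‖fderiv ℝ f x (Pi.single k 1)‖₊ : ℝ≥0∞)) ^ 2) + V x * (‖f x‖₊ : ℝ≥0∞) ^ 2 / 2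
      = scatDensity V f x := by
  unfold scatDensity gradSq
  rw [ENNReal.ofReal_sum_of_nonneg fun i _ => sq_nonneg _]
  simp_rw [enorm_sq_eq_ofReal]

lemma gradSq_average_neg_le {f : Vec 3 → ℝ} (hf : Differentiable ℝ f) (x : Vec 3) :
    gradSq (fun y => (f y + f (-y)) / 2) x ≤ (gradSq f x + gradSq f (-x)) / 2 := by
  have h1 : ∀ v, fderiv ℝ (fun y => (f y + f (-y)) / 2) x v
      = (fderiv ℝ f x v - fderiv ℝ f (-x) v) / 2 := by
    intro v
    have h2 : HasFDerivAt (fun y : Vec 3 => f (-y)) ((fderiv ℝ f (-x)).comp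
        (-ContinuousLinearMap.id ℝ (Vec 3))) x :=
      (hf (-x)).hasFDerivAt.comp x (hasFDerivAt_id x).neg
    have h3 := ((hf x).hasFDerivAt.add h2).const_mul (1 / 2 : ℝ)
    rw [show (fun y => (f y + f (-y)) / 2) = fun y => 1 / 2 * (f y + f (-y)) from
      funext fun y => by ring]
    have h4 := h3.fderiv
    simp only [Pi.add_apply] at h4
    rw [show (fun y => 1 / 2 * (f y + f (-y))) = fun y => 1 / 2 * (f + fun y => f (-y)) y from rfl]
    simp only [Pi.add_apply]
    rw [h4]
    simp
    ring
  unfold gradSq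
  rw [← Finset.sum_add_distrib, Finset.sum_div]
  refine Finset.sum_le_sum fun k _ => ?_
  rw [h1]
  nlinarith [sq_nonneg (fderiv ℝ f x (Pi.single k 1) + fderiv ℝ f (-x) (Pi.single k 1))]

lemma gradSq_comp {g : ℝ → ℝ} {f : Vec 3 → ℝ} (hg : Differentiable ℝ g)
    (hf : Differentiable ℝ f) (x : Vec 3) :
    gradSq (fun y => g (f y)) x = deriv g (f x) ^ 2 * gradSq f x := by
  have h := (hg (f x)).hasDerivAt.comp_hasFDerivAt x (hf x).hasFDerivAt
  unfold gradSq
  rw [Finset.mul_sum]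
  refine Finset.sum_congr rfl fun k _ => ?_
  rw [show (fun y => g (f y)) = g ∘ f from rfl, h.fderiv]
  simp
  ring

/-- Trial functions for the scattering length can be taken even and bounded by one. -/
lemma exists_scattering_trial {V : Vec 3 → ℝ≥0∞} (hV : Measurable V)
    (hVe : ∀ z, V (-z) = V z) {A B : ℝ} (hA : 0 < A) (hAB : A < B)
    (hscat : sInf (scatSet3 V) = ENNReal.ofReal A) :
    ∃ f : Vec 3 → ℝ, ContDiff ℝ (⊤ : ℕ∞) f ∧ (∀ z, f (-z) = f z) ∧ (∀ z, f z ^ 2 ≤ 1) ∧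
      (∃ R, 0 < R ∧ ∀ z, (∃ k, R ≤ |z k|) → f z = 1) ∧
      ∫⁻ x, scatDensity V f x ≤ ENNReal.ofReal B := by
  set A' := (A + B) / 2 with hA'
  have hA'0 : 0 < A' := by linarith
  have hA'B : A' < B := by linarith
  have hlt : sInf (scatSet3 V) < ENNReal.ofReal A' := by
    rw [hscat]
    exact (ENNReal.ofReal_lt_ofReal_iff hA'0).2 (by linarith)
  obtain ⟨E, ⟨f, hf, hfc, hE⟩, hElt⟩ := sInf_lt_iff.1 hlt
  simp_rw [scatSet3_density] at hE
  have hfd : Differentiable ℝ f := hf.differentiable (by simp)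
  set c := √(A' / B) with hc
  have hB0 : 0 < B := by linarith
  have hc0 : 0 < c := Real.sqrt_pos.2 (by positivity)
  have hc2 : c ^ 2 = A' / B := Real.sq_sqrt (by positivity)
  have hc1 : c < 1 := by
    rw [hc, Real.sqrt_lt' one_pos, one_pow, div_lt_one hB0]
    exact hA'B
  obtain ⟨g, hg, hg1, hgle, hgt, hgd⟩ := exists_smooth_clamp hc0 hc1
  set F : Vec 3 → ℝ := fun y => (f y + f (-y)) / 2 with hF
  have hFs : ContDiff ℝ (⊤ : ℕ∞) F := (hf.add (hf.comp contDiff_neg)).div_const 2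
  have hFd : Differentiable ℝ F := hFs.differentiable (by simp)
  have hsq : ∀ {y t : ℝ}, c * |y| ≤ |t| → y ^ 2 ≤ (c ^ 2)⁻¹ * t ^ 2 := by
    intro y t h
    rw [← div_eq_inv_mul, le_div_iff₀ (by positivity), ← sq_abs y, ← sq_abs t, mul_comm, ← mul_pow]
    gcongr
  refine ⟨fun y => g (F y), hg.comp hFs, fun z => ?_, fun z => ?_, ?_, ?_⟩
  · simp only [hF, neg_neg, add_comm]
  · rw [← sq_abs]
    exact pow_le_one₀ (abs_nonneg _) (hgle _)
  · obtain ⟨R, hR⟩ := hfc.isCompact.isBounded.subset_closedBall 0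
    have hf1 : ∀ z, max R 0 < ‖z‖ → f z = 1 := by
      intro z hz
      by_contra hne
      have : z ∈ tsupport fun x => f x - 1 := subset_tsupport _ (sub_ne_zero.2 hne)
      have := hR this
      rw [mem_closedBall_zero_iff] at this
      exact absurd (this.trans (le_max_left R 0)) (not_le.2 hz)
    refine ⟨max R 0 + 1, by positivity, fun z ⟨k, hk⟩ => ?_⟩
    have hz : max R 0 < ‖z‖ := by
      have := norm_le_pi_norm z k
      rw [Real.norm_eq_abs] at this
      linarith
    simp only [hF]
    rw [hf1 z hz, hf1 (-z) (by rwa [norm_neg])]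
    norm_num [hg1]
  · have hmeas : Measurable fun x => scatDensity V f x := by
      unfold scatDensity
      refine ((continuous_gradSq (hf.of_le (by exact_mod_cast le_top))).measurable.ennreal_ofReal).add ?_
      exact (hV.mul (hf.continuous.pow 2).measurable.ennreal_ofReal).div_const 2
    have hpt : ∀ x, scatDensity V (fun y => g (F y)) x
        ≤ ENNReal.ofReal (c ^ 2)⁻¹ * ((scatDensity V f x + scatDensity V f (-x)) / 2) := by
      intro x
      have h1 : gradSq (fun y => g (F y)) x
          ≤ (c ^ 2)⁻¹ * ((gradSq f x + gradSq f (-x)) / 2) := by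
        rw [gradSq_comp (hg.differentiable (by simp)) hFd]
        have h2 : deriv g (F x) ^ 2 ≤ (c ^ 2)⁻¹ * 1 ^ 2 := hsq (by simpa using hgd (F x))
        calc _ ≤ ((c ^ 2)⁻¹ * 1 ^ 2) * gradSq F x :=
              mul_le_mul_of_nonneg_right h2 (gradSq_nonneg _ _)
          _ = (c ^ 2)⁻¹ * gradSq F x := by ring
          _ ≤ _ := mul_le_mul_of_nonneg_left (gradSq_average_neg_le hfd x) (by positivity)
      have h3 : g (F x) ^ 2 ≤ (c ^ 2)⁻¹ * ((f x ^ 2 + f (-x) ^ 2) / 2) := by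
        refine (hsq (hgt (F x))).trans (mul_le_mul_of_nonneg_left ?_ (by positivity))
        simp only [hF]
        nlinarith [sq_nonneg (f x - f (-x))]
      unfold scatDensity
      rw [hVe]
      calc _ ≤ ENNReal.ofReal ((c ^ 2)⁻¹ * ((gradSq f x + gradSq f (-x)) / 2))
            + V x * ENNReal.ofReal ((c ^ 2)⁻¹ * ((f x ^ 2 + f (-x) ^ 2) / 2)) / 2 := by
              gcongr
        _ = _ := by
              have e : ∀ r s : ℝ, 0 ≤ r → 0 ≤ s → ENNReal.ofReal ((c ^ 2)⁻¹ * ((r + s) / 2))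
                  = ENNReal.ofReal (c ^ 2)⁻¹ * ((ENNReal.ofReal r + ENNReal.ofReal s) / 2) := by
                intro r s hr hs
                rw [ENNReal.ofReal_mul (by positivity), ENNReal.ofReal_div_of_pos two_pos,
                  ENNReal.ofReal_add hr hs]
                simp
              rw [e _ _ (gradSq_nonneg _ _) (gradSq_nonneg _ _), e _ _ (sq_nonneg _) (sq_nonneg _)]
              simp only [div_eq_mul_inv]
              ring
    calc _ ≤ ∫⁻ x, ENNReal.ofReal (c ^ 2)⁻¹ *
          ((scatDensity V f x + scatDensity V f (-x)) / 2) := lintegral_mono hpt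
      _ = ENNReal.ofReal (c ^ 2)⁻¹ * ((E + E) / 2) := by
          have hm2 : Measurable fun x => scatDensity V f (-x) := hmeas.comp measurable_neg
          have hadd : Measurable fun x => scatDensity V f x + scatDensity V f (-x) :=
            hmeas.add hm2
          rw [lintegral_const_mul _ (hadd.div_const 2)]
          simp only [div_eq_mul_inv]
          rw [lintegral_mul_const _ hadd, lintegral_add_left hmeas,
            lintegral_neg_eq_self (fun x => scatDensity V f x), ← hE]
      _ = ENNReal.ofReal (c ^ 2)⁻¹ * E := by
          rw [← two_mul, mul_div_assoc, ENNReal.mul_div_cancel (by simp) (by simp)]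
      _ ≤ ENNReal.ofReal (c ^ 2)⁻¹ * ENNReal.ofReal A' := by gcongr
      _ = ENNReal.ofReal B := by
          rw [← ENNReal.ofReal_mul (by positivity), hc2]
          congr 1
          field_simp

/-- The `T`-periodic extension of the restriction of `f` to a fundamental cube at the origin. -/
def perExt (f : Vec 3 → ℝ) (T : ℝ) (z : Vec 3) : ℝ :=
  f fun k => z k - T * (round (z k / T) : ℤ)

section perExt

variable {f : Vec 3 → ℝ} {R T : ℝ}

lemma abs_sub_mul_round_le (hT : 0 < T) (t : ℝ) : |t - T * (round (t / T) : ℤ)| ≤ T / 2 := by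
  have h := abs_sub_round (t / T)
  have h2 : t - T * (round (t / T) : ℤ) = T * (t / T - (round (t / T) : ℤ)) := by
    field_simp
  rw [h2, abs_mul, abs_of_pos hT]
  calc _ ≤ T * (1 / 2) := mul_le_mul_of_nonneg_left h hT.le
    _ = _ := by ring

lemma le_abs_sub_of_ne_round (hT : 0 < T) {t : ℝ} {n : ℤ} (hn : n ≠ round (t / T)) :
    T / 2 ≤ |t - T * n| := by
  have h1 := abs_sub_mul_round_le hT t
  have h2 : (1 : ℝ) ≤ |(n : ℝ) - (round (t / T) : ℤ)| := by
    have : (1 : ℤ) ≤ |n - round (t / T)| := Int.one_le_abs (sub_ne_zero.2 hn)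
    exact_mod_cast this
  have h3 : T ≤ |T * n - T * (round (t / T) : ℤ)| := by
    rw [← mul_sub, abs_mul, abs_of_pos hT]
    nlinarith
  have h4 : |T * n - T * (round (t / T) : ℤ)|
      ≤ |t - T * n| + |t - T * (round (t / T) : ℤ)| := by
    rw [show T * n - T * (round (t / T) : ℤ)
      = -(t - T * n) + (t - T * (round (t / T) : ℤ)) by ring]
    refine (abs_add_le _ _).trans ?_
    rw [abs_neg]
  linarith

lemma perExt_eq_of_abs_lt (hf1 : ∀ z, (∃ k, R ≤ |z k|) → f z = 1) (hT : 0 < T)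
    (hRT : 2 * R < T) (z : Vec 3) (n : Fin 3 → ℤ) (h : ∀ k, |z k - T * n k| ≤ T - R) :
    perExt f T z = f fun k => z k - T * n k := by
  by_cases hn : ∀ k, n k = round (z k / T)
  · unfold perExt
    congr 1
    funext k
    rw [hn]
  · push Not at hn
    obtain ⟨k, hk⟩ := hn
    rw [hf1 _ ⟨k, ?_⟩]
    · refine hf1 _ ⟨k, ?_⟩
      have h2 : (1 : ℝ) ≤ |(n k : ℝ) - (round (z k / T) : ℤ)| := by
        have : (1 : ℤ) ≤ |n k - round (z k / T)| := Int.one_le_abs (sub_ne_zero.2 hk)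
        exact_mod_cast this
      have h3 : T ≤ |T * n k - T * (round (z k / T) : ℤ)| := by
        rw [← mul_sub, abs_mul, abs_of_pos hT]
        nlinarith
      have h4 : |T * n k - T * (round (z k / T) : ℤ)|
          ≤ |z k - T * n k| + |z k - T * (round (z k / T) : ℤ)| := by
        rw [show T * n k - T * (round (z k / T) : ℤ)
          = -(z k - T * n k) + (z k - T * (round (z k / T) : ℤ)) by ring]
        refine (abs_add_le _ _).trans ?_
        rw [abs_neg]
      have := h k
      linarith
    · have := le_abs_sub_of_ne_round hT hk
      linarith

lemma perExt_eventuallyEq (hf1 : ∀ z, (∃ k, R ≤ |z k|) → f z = 1) (hT : 0 < T)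
    (hRT : 2 * R < T) (z : Vec 3) :
    perExt f T =ᶠ[nhds z] fun y => f fun k => y k - T * (round (z k / T) : ℤ) := by
  have hδ : 0 < T / 2 - R := by linarith
  filter_upwards [Metric.ball_mem_nhds z hδ] with y hy
  refine perExt_eq_of_abs_lt hf1 hT hRT y _ fun k => ?_
  have h1 := abs_sub_mul_round_le hT (z k)
  have h2 : |y k - z k| ≤ T / 2 - R := by
    have := norm_le_pi_norm (y - z) k
    rw [Real.norm_eq_abs, Pi.sub_apply] at this
    rw [Metric.mem_ball, dist_eq_norm] at hy
    linarith
  rw [show y k - T * (round (z k / T) : ℤ) = (y k - z k) + (z k - T * (round (z k / T) : ℤ)) by ring]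
  refine (abs_add_le _ _).trans ?_
  linarith

lemma contDiff_perExt (hf : ContDiff ℝ (⊤ : ℕ∞) f) (hf1 : ∀ z, (∃ k, R ≤ |z k|) → f z = 1)
    (hT : 0 < T) (hRT : 2 * R < T) : ContDiff ℝ (⊤ : ℕ∞) (perExt f T) := by
  rw [contDiff_iff_contDiffAt]
  intro z
  refine ContDiffAt.congr_of_eventuallyEq ?_ (perExt_eventuallyEq hf1 hT hRT z)
  refine ContDiff.contDiffAt (hf.comp ?_)
  exact contDiff_pi.2 fun k => (contDiff_apply ℝ ℝ k).sub contDiff_const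

lemma fderiv_perExt (hf1 : ∀ z, (∃ k, R ≤ |z k|) → f z = 1)
    (hT : 0 < T) (hRT : 2 * R < T) (z : Vec 3) :
    fderiv ℝ (perExt f T) z = fderiv ℝ f fun k => z k - T * (round (z k / T) : ℤ) := by
  rw [(perExt_eventuallyEq hf1 hT hRT z).fderiv_eq]
  exact fderiv_comp_sub (f := f) (fun k => T * (round (z k / T) : ℤ))

lemma perExt_neg (hfe : ∀ z, f (-z) = f z) (hf1 : ∀ z, (∃ k, R ≤ |z k|) → f z = 1)
    (hT : 0 < T) (hRT : 2 * R < T) (z : Vec 3) : perExt f T (-z) = perExt f T z := by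
  rw [perExt_eq_of_abs_lt hf1 hT hRT (-z) (fun k => -round (z k / T)) fun k => ?_, perExt, ← hfe]
  · congr 1
    funext k
    simp
    ring
  · have h := abs_sub_mul_round_le hT (z k)
    rw [show (-z) k - T * ((-round (z k / T) : ℤ) : ℝ) = -(z k - T * (round (z k / T) : ℤ)) by
      simp; ring, abs_neg]
    linarith

lemma perExt_add_period (hT : 0 < T) (z : Vec 3) (n : Fin 3 → ℤ) :
    perExt f T (fun k => z k + T * n k) = perExt f T z := by
  unfold perExt
  congr 1
  funext k
  rw [show (z k + T * n k) / T = z k / T + n k by field_simp, round_add_intCast]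
  push_cast
  ring

lemma perExt_sq_le_one (hf : ∀ z, f z ^ 2 ≤ 1) (z : Vec 3) : perExt f T z ^ 2 ≤ 1 := hf _

/-- A single term of the periodization. -/
lemma apply_sub_round_le_periodize (F : Vec 3 → ℝ≥0∞) (T : ℝ) (z : Vec 3) :
    F (fun k => z k - T * (round (z k / T) : ℤ)) ≤ periodize 3 F T z := by
  refine le_trans (le_of_eq ?_) (ENNReal.le_tsum fun k => -round (z k / T))
  congr 1
  funext k
  push_cast
  ring

lemma scatDensity_perExt_le (V : Vec 3 → ℝ≥0∞)
    (hfle : ∀ z, f z ^ 2 ≤ 1)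
    (hf1 : ∀ z, (∃ k, R ≤ |z k|) → f z = 1) (hT : 0 < T) (hRT : 2 * R < T) (z : Vec 3) :
    scatDensity (periodize 3 V T) (perExt f T) z ≤ periodize 3 (scatDensity V f) T z := by
  have h1 : ENNReal.ofReal (gradSq (perExt f T) z)
      ≤ periodize 3 (fun y => ENNReal.ofReal (gradSq f y)) T z := by
    refine le_trans (le_of_eq ?_)
      (apply_sub_round_le_periodize (fun y => ENNReal.ofReal (gradSq f y)) T z)
    unfold gradSq
    rw [fderiv_perExt hf1 hT hRT]
  have h2 : periodize 3 V T z * ENNReal.ofReal (perExt f T z ^ 2) / 2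
      ≤ periodize 3 (fun y => V y * ENNReal.ofReal (f y ^ 2) / 2) T z := by
    unfold periodize
    rw [mul_div_assoc, ← ENNReal.tsum_mul_right]
    refine ENNReal.tsum_le_tsum fun n => ?_
    simp only []
    rw [mul_div_assoc (V _)]
    gcongr _ * (ENNReal.ofReal ?_ / 2)
    by_cases hn : ∀ k, n k = -round (z k / T)
    · unfold perExt
      refine le_of_eq ?_
      congr 2
      funext k
      rw [hn]
      push_cast
      ring
    · push Not at hn
      obtain ⟨k, hk⟩ := hn
      have h3 := le_abs_sub_of_ne_round (n := -n k) hT (t := z k) fun h => hk (by omega)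
      rw [hf1 (fun k => z k + T * n k) ⟨k, ?_⟩, one_pow]
      · exact hfle _
      · push_cast at h3
        rw [mul_neg, sub_neg_eq_add] at h3
        linarith
  refine (add_le_add h1 h2).trans ?_
  unfold periodize scatDensity
  rw [← ENNReal.tsum_add]

end perExt

lemma lintegral_cell_periodize_le {F : Vec 3 → ℝ≥0∞} (hF : Measurable F) {T : ℝ} (hT : 0 < T)
    (b w : Vec 3) :
    ∫⁻ z in cell b T, periodize 3 F T (z - w) ≤ ∫⁻ z, F z := by
  let c : (Fin 3 → ℤ) → Vec 3 := fun n k => b k - w k + T * n k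
  have h1 : ∀ n : Fin 3 → ℤ, ∫⁻ z in cell b T, F (fun k => (z - w) k + T * n k)
      = ∫⁻ z in cell (c n) T, F z := by
    intro n
    rw [← lintegral_indicator (measurableSet_cell _ _), ← lintegral_indicator
      (measurableSet_cell _ _),
      ← lintegral_add_right_eq_self (fun z => (cell (c n) T).indicator F z)
        (fun k => -w k + T * n k)]
    refine lintegral_congr fun z => ?_
    have hmem : (z + fun k => -w k + T * n k) ∈ cell (c n) T ↔ z ∈ cell b T := by
      simp only [mem_cell, c, Pi.add_apply]
      refine forall_congr' fun k => ?_
      constructor <;> rintro ⟨h1, h2⟩ <;> constructor <;> linarith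
    have harg : (fun k => (z - w) k + T * n k) = z + fun k => -w k + T * n k := by
      funext k
      simp only [Pi.add_apply, Pi.sub_apply]
      ring
    by_cases hz : z ∈ cell b T
    · rw [Set.indicator_of_mem hz, Set.indicator_of_mem (hmem.2 hz), harg]
    · rw [Set.indicator_of_notMem hz, Set.indicator_of_notMem fun h => hz (hmem.1 h)]
  unfold periodize
  have hm : ∀ n : Fin 3 → ℤ, Measurable fun z : Vec 3 => F fun k => (z - w) k + T * n k :=
    fun n => hF.comp (by fun_prop)
  rw [lintegral_tsum fun n => (hm n).aemeasurable]
  simp_rw [h1]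
  rw [← lintegral_iUnion (fun n => measurableSet_cell _ _)]
  · exact setLIntegral_le_lintegral _ _
  · intro n n' hnn
    rw [Function.onFun, Set.disjoint_left]
    intro z hz hz'
    refine hnn (funext fun k => ?_)
    rw [mem_cell] at hz hz'
    obtain ⟨h1, h2⟩ := hz k
    obtain ⟨h3, h4⟩ := hz' k
    simp only [c] at h1 h2 h3 h4
    have h5 : (n k : ℝ) < n' k + 1 := by
      by_contra! h
      nlinarith
    have h6 : (n' k : ℝ) < n k + 1 := by
      by_contra! h
      nlinarith
    have h5' : n k < n' k + 1 := by exact_mod_cast h5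
    have h6' : n' k < n k + 1 := by exact_mod_cast h6
    omega

lemma periodize_neg (F : Vec 3 → ℝ≥0∞) (T : ℝ) (z : Vec 3) :
    periodize 3 F T (-z) = periodize 3 (fun y => F (-y)) T z := by
  unfold periodize
  rw [← (Equiv.neg (Fin 3 → ℤ)).tsum_eq]
  refine tsum_congr fun n => ?_
  congr 1
  funext k
  simp
  ring

lemma lintegral_cell_periodize_sub_le {F : Vec 3 → ℝ≥0∞} (hF : Measurable F) {T : ℝ} (hT : 0 < T)
    (b w : Vec 3) :
    ∫⁻ z in cell b T, periodize 3 F T (w - z) ≤ ∫⁻ z, F z := by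
  rw [← lintegral_neg_eq_self F]
  refine le_trans (le_of_eq ?_) (lintegral_cell_periodize_le (hF.comp measurable_neg) hT b w)
  refine lintegral_congr fun z => ?_
  rw [← neg_sub, periodize_neg]
  rfl

/-- The Jastrow product over all unordered pairs of particles with labels in `S`. -/
def jastrow {N : ℕ} (u : Vec 3 → ℝ) (S : Finset (Fin N)) (x : Fin N → Vec 3) : ℝ :=
  ∏ i ∈ S, ∏ j ∈ S, if i < j then u (x i - x j) else 1

lemma prod_prod_lt_insert {ι M : Type*} [LinearOrder ι] [CommMonoid M] (F : ι → ι → M)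
    (hF : ∀ i j, F i j = F j i) (S : Finset ι) {a : ι} (ha : a ∉ S) :
    (∏ i ∈ insert a S, ∏ j ∈ insert a S, if i < j then F i j else 1)
      = (∏ j ∈ S, F a j) * ∏ i ∈ S, ∏ j ∈ S, if i < j then F i j else 1 := by
  rw [Finset.prod_insert ha]
  simp_rw [Finset.prod_insert ha]
  rw [if_neg (lt_irrefl a), one_mul, Finset.prod_mul_distrib, ← mul_assoc,
    ← Finset.prod_mul_distrib]
  congr 1
  refine Finset.prod_congr rfl fun j hj => ?_
  have hne : a ≠ j := fun h => ha (h ▸ hj)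
  rcases lt_or_gt_of_ne hne with h | h
  · simp [h, h.not_gt]
  · simp [h, h.not_gt, hF a j]

section jastrow

variable {N : ℕ} {u : Vec 3 → ℝ}

lemma jastrow_insert (hue : ∀ z, u (-z) = u z) (S : Finset (Fin N)) {a : Fin N} (ha : a ∉ S)
    (x : Fin N → Vec 3) :
    jastrow u (insert a S) x = (∏ j ∈ S, u (x a - x j)) * jastrow u S x :=
  prod_prod_lt_insert (fun i j => u (x i - x j)) (fun i j => by rw [← hue, neg_sub]) S ha

lemma jastrow_eq_prod_mul_erase (hue : ∀ z, u (-z) = u z) (S : Finset (Fin N)) {a : Fin N}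
    (ha : a ∈ S) (x : Fin N → Vec 3) :
    jastrow u S x = (∏ j ∈ S.erase a, u (x a - x j)) * jastrow u (S.erase a) x := by
  conv_lhs => rw [← Finset.insert_erase ha]
  exact jastrow_insert hue _ (Finset.notMem_erase a S) x

lemma jastrow_comp (hue : ∀ z, u (-z) = u z) (σ : Equiv.Perm (Fin N)) (S : Finset (Fin N))
    (x : Fin N → Vec 3) : jastrow u S (x ∘ σ) = jastrow u (S.map σ.toEmbedding) x := by
  induction S using Finset.induction_on with
  | empty => simp [jastrow]
  | insert a S ha ih =>
    rw [jastrow_insert hue S ha, Finset.map_insert, jastrow_insert hue _ (by simpa using ha), ih,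
      Finset.prod_map]
    rfl

lemma jastrow_update (S : Finset (Fin N)) {a : Fin N} (ha : a ∉ S) (x : Fin N → Vec 3)
    (z : Vec 3) : jastrow u S (Function.update x a z) = jastrow u S x := by
  unfold jastrow
  refine Finset.prod_congr rfl fun i hi => Finset.prod_congr rfl fun j hj => ?_
  have hia : i ≠ a := fun h => ha (h ▸ hi)
  have hja : j ≠ a := fun h => ha (h ▸ hj)
  rw [Function.update_of_ne hia, Function.update_of_ne hja]

lemma contDiff_jastrow (hu : ContDiff ℝ (⊤ : ℕ∞) u) (S : Finset (Fin N)) :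
    ContDiff ℝ (⊤ : ℕ∞) (jastrow u S) := by
  unfold jastrow
  refine contDiff_prod fun i _ => contDiff_prod fun j _ => ?_
  split_ifs
  · exact hu.comp ((contDiff_apply ℝ (Vec 3) i).sub (contDiff_apply ℝ (Vec 3) j))
  · exact contDiff_const

lemma prod_sq_le_one (hu1 : ∀ z, u z ^ 2 ≤ 1) {ι : Type*} (S : Finset ι) (y : ι → Vec 3) :
    (∏ j ∈ S, u (y j)) ^ 2 ≤ 1 := by
  rw [← Finset.prod_pow]
  exact Finset.prod_le_one (fun _ _ => sq_nonneg _) fun _ _ => hu1 _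

lemma jastrow_sq_le_erase (hue : ∀ z, u (-z) = u z) (hu1 : ∀ z, u z ^ 2 ≤ 1)
    (S : Finset (Fin N)) (a : Fin N) (x : Fin N → Vec 3) :
    jastrow u S x ^ 2 ≤ jastrow u (S.erase a) x ^ 2 := by
  by_cases ha : a ∈ S
  · rw [jastrow_eq_prod_mul_erase hue S ha, mul_pow]
    exact mul_le_of_le_one_left (sq_nonneg _) (prod_sq_le_one hu1 _ _)
  · rw [Finset.erase_eq_of_notMem ha]

lemma jastrow_univ_sq_le (hue : ∀ z, u (-z) = u z) (hu1 : ∀ z, u z ^ 2 ≤ 1)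
    {i j : Fin N} (hij : j ≠ i) (x : Fin N → Vec 3) :
    jastrow u Finset.univ x ^ 2
      ≤ u (x i - x j) ^ 2 * jastrow u (Finset.univ.erase i) x ^ 2 := by
  rw [jastrow_eq_prod_mul_erase hue _ (Finset.mem_univ i), mul_pow]
  refine mul_le_mul_of_nonneg_right ?_ (sq_nonneg _)
  rw [← Finset.mul_prod_erase _ _ (Finset.mem_erase.2 ⟨hij, Finset.mem_univ j⟩), mul_pow]
  exact mul_le_of_le_one_right (sq_nonneg _) (prod_sq_le_one hu1 _ _)

/-- The `ℓ¹` norm of the gradient. -/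
def gradAbs (f : Vec 3 → ℝ) (x : Vec 3) : ℝ := ∑ k, |fderiv ℝ f x (Pi.single k 1)|

lemma gradAbs_nonneg (f : Vec 3 → ℝ) (x : Vec 3) : 0 ≤ gradAbs f x :=
  Finset.sum_nonneg fun _ _ => abs_nonneg _

lemma continuous_gradAbs {f : Vec 3 → ℝ} (hf : ContDiff ℝ 1 f) : Continuous (gradAbs f) := by
  unfold gradAbs
  refine continuous_finsetSum _ fun k _ => Continuous.abs ?_
  exact (hf.continuous_fderiv (by norm_num)).clm_apply continuous_const

lemma gradSq_const_mul_prod_le (hu : Differentiable ℝ u) (hu1 : ∀ z, u z ^ 2 ≤ 1)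
    {ι : Type*} [DecidableEq ι] (S : Finset ι) (y : ι → Vec 3) (c : ℝ) (z : Vec 3) :
    gradSq (fun z => (∏ j ∈ S, u (z - y j)) * c) z
      ≤ ((∑ j ∈ S, gradSq u (z - y j))
        + ∑ j ∈ S, ∑ j' ∈ S.erase j, gradAbs u (z - y j) * gradAbs u (z - y j')) * c ^ 2 := by
  set D : ι → Fin 3 → ℝ := fun j k => |fderiv ℝ u (z - y j) (Pi.single k 1)| with hD
  have hh : ∀ j ∈ S, HasFDerivAt (fun z => u (z - y j)) (fderiv ℝ u (z - y j)) z := by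
    intro j _
    exact (hu (z - y j)).hasFDerivAt.comp z ((hasFDerivAt_id z).sub_const (y j))
  have h := (HasFDerivAt.finsetProd hh).mul_const c
  have h1 : ∀ k, fderiv ℝ (fun z => (∏ j ∈ S, u (z - y j)) * c) z (Pi.single k 1) ^ 2
      ≤ (∑ j ∈ S, D j k) ^ 2 * c ^ 2 := by
    intro k
    rw [h.fderiv]
    simp only [smul_apply, sum_apply, smul_eq_mul]
    rw [mul_comm, mul_pow]
    refine mul_le_mul_of_nonneg_right ?_ (sq_nonneg _)
    rw [← sq_abs]
    refine pow_le_pow_left₀ (abs_nonneg _) ((Finset.abs_sum_le_sum_abs _ _).trans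
      (Finset.sum_le_sum fun j _ => ?_)) 2
    rw [abs_mul]
    refine mul_le_of_le_one_left (abs_nonneg _) ?_
    rw [← sq_le_one_iff_abs_le_one]
    exact prod_sq_le_one hu1 _ _
  have h2 : ∀ k, (∑ j ∈ S, D j k) ^ 2
      = (∑ j ∈ S, D j k ^ 2) + ∑ j ∈ S, ∑ j' ∈ S.erase j, D j k * D j' k := by
    intro k
    rw [sq, Finset.sum_mul_sum, ← Finset.sum_add_distrib]
    refine Finset.sum_congr rfl fun j hj => ?_
    rw [← Finset.add_sum_erase _ _ hj, sq]
  unfold gradSq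
  calc _ ≤ ∑ k, (∑ j ∈ S, D j k) ^ 2 * c ^ 2 := Finset.sum_le_sum fun k _ => h1 k
    _ = ((∑ k, ∑ j ∈ S, D j k ^ 2)
        + ∑ k, ∑ j ∈ S, ∑ j' ∈ S.erase j, D j k * D j' k) * c ^ 2 := by
        rw [← Finset.sum_mul, ← Finset.sum_add_distrib]
        simp_rw [h2]
    _ ≤ _ := by
        refine mul_le_mul_of_nonneg_right (add_le_add ?_ ?_) (sq_nonneg _)
        · rw [Finset.sum_comm]
          simp only [hD, sq_abs]
          exact le_rfl
        · rw [Finset.sum_comm]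
          refine Finset.sum_le_sum fun j _ => ?_
          rw [Finset.sum_comm]
          refine Finset.sum_le_sum fun j' _ => ?_
          unfold gradAbs
          rw [Finset.sum_mul]
          refine Finset.sum_le_sum fun k _ => ?_
          exact mul_le_mul_of_nonneg_left
            (Finset.single_le_sum (f := fun k => D j' k) (fun _ _ => abs_nonneg _)
              (Finset.mem_univ k)) (abs_nonneg _)

lemma partialSq_jastrow_le (hu : ContDiff ℝ (⊤ : ℕ∞) u) (hue : ∀ z, u (-z) = u z)
    (hu1 : ∀ z, u z ^ 2 ≤ 1) (i : Fin N) (x : Fin N → Vec 3) :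
    partialSq (jastrow u Finset.univ) i x
      ≤ ((∑ j ∈ Finset.univ.erase i, gradSq u (x i - x j))
        + ∑ j ∈ Finset.univ.erase i, ∑ j' ∈ (Finset.univ.erase i).erase j,
          gradAbs u (x i - x j) * gradAbs u (x i - x j'))
        * jastrow u (Finset.univ.erase i) x ^ 2 := by
  have h := gradSq_update (φ := jastrow u (Finset.univ : Finset (Fin N)))
    ((contDiff_jastrow hu _).of_le (by exact_mod_cast le_top)) x i (x i)
  rw [Function.update_eq_self] at h
  rw [← h]
  refine le_trans (le_of_eq ?_) (gradSq_const_mul_prod_le (hu.differentiable (by simp)) hu1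
    (Finset.univ.erase i) x (jastrow u (Finset.univ.erase i) x) (x i))
  congr 1
  funext z
  rw [jastrow_eq_prod_mul_erase hue _ (Finset.mem_univ i),
    jastrow_update _ (Finset.notMem_erase i _)]
  congr 1
  refine Finset.prod_congr rfl fun j hj => ?_
  rw [Function.update_self, Function.update_of_ne (Finset.ne_of_mem_erase hj)]

lemma stateDensity_jastrow_le (T : ℝ) {V : Vec 3 → ℝ≥0∞} (hVe : ∀ z, V (-z) = V z)
    (hu : ContDiff ℝ (⊤ : ℕ∞) u) (hue : ∀ z, u (-z) = u z)
    (hu1 : ∀ z, u z ^ 2 ≤ 1) (x : Fin N → Vec 3) :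
    stateDensity T V (fun y => (jastrow u Finset.univ y : ℂ)) x
      ≤ (∑ i, ∑ j ∈ Finset.univ.erase i, scatDensity (periodize 3 V T) u (x i - x j)
          * ENNReal.ofReal (jastrow u (Finset.univ.erase i) x ^ 2))
        + ∑ i, ∑ j ∈ Finset.univ.erase i, ∑ j' ∈ (Finset.univ.erase i).erase j,
          ENNReal.ofReal (gradAbs u (x i - x j)) * (ENNReal.ofReal (gradAbs u (x i - x j'))
          * ENNReal.ofReal (jastrow u ((Finset.univ.erase i).erase j) x ^ 2)) := by
  have hφ := contDiff_jastrow hu (Finset.univ : Finset (Fin N))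
  have hφd : Differentiable ℝ (jastrow u (Finset.univ : Finset (Fin N))) :=
    hφ.differentiable (by simp)
  set J : Finset (Fin N) → ℝ≥0∞ := fun S => ENNReal.ofReal (jastrow u S x ^ 2) with hJ
  have hkin : (∑ i : Fin N, ∑ k : Fin 3,
      (‖fderiv ℝ (fun y => (jastrow u Finset.univ y : ℂ)) x
        (Pi.single i (Pi.single k 1))‖₊ : ℝ≥0∞) ^ 2)
      = ∑ i, ENNReal.ofReal (partialSq (jastrow u Finset.univ) i x) := by
    refine Finset.sum_congr rfl fun i _ => ?_
    unfold partialSq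
    rw [ENNReal.ofReal_sum_of_nonneg fun k _ => sq_nonneg _]
    refine Finset.sum_congr rfl fun k _ => ?_
    have h := (Complex.ofRealCLM.hasFDerivAt (x := jastrow u Finset.univ x)).comp x
      (hφd x).hasFDerivAt
    rw [show (fun y => (jastrow u Finset.univ y : ℂ)) = Complex.ofRealCLM ∘ jastrow u Finset.univ
      from rfl, h.fderiv, enorm_sq_eq_re_add_im]
    simp
  have hInt : (∑ i : Fin N, ∑ j : Fin N,
      if i < j then periodize 3 V T (fun k => x i k - x j k)
        * (‖(jastrow u Finset.univ x : ℂ)‖₊ : ℝ≥0∞) ^ 2 else 0)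
      = ∑ i, ∑ j ∈ Finset.univ.erase i, periodize 3 V T (x i - x j) * J Finset.univ / 2 := by
    have h := sum_sum_erase_eq_two_mul
      (fun i j : Fin N => periodize 3 V T (x i - x j) * J Finset.univ) fun i j => by
        rw [← neg_sub, periodize_neg]
        simp_rw [hVe]
    have h2 : (∑ i, ∑ j ∈ Finset.univ.erase i, periodize 3 V T (x i - x j) * J Finset.univ / 2)
        = (∑ i, ∑ j ∈ Finset.univ.erase i, periodize 3 V T (x i - x j) * J Finset.univ) / 2 := by
      simp only [div_eq_mul_inv, Finset.sum_mul]
    rw [h2, h, mul_comm, mul_div_assoc, ENNReal.div_self (by simp) (by simp), mul_one]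
    refine Finset.sum_congr rfl fun i _ => Finset.sum_congr rfl fun j _ => ?_
    split_ifs
    · rw [enorm_sq_eq_re_add_im]
      simp [hJ]
      rfl
    · rfl
  unfold stateDensity
  rw [hkin, hInt, ← Finset.sum_add_distrib, ← Finset.sum_add_distrib]
  refine Finset.sum_le_sum fun i _ => ?_
  have h1 : ENNReal.ofReal (partialSq (jastrow u Finset.univ) i x)
      ≤ (∑ j ∈ Finset.univ.erase i, ENNReal.ofReal (gradSq u (x i - x j))
          * J (Finset.univ.erase i))
        + ∑ j ∈ Finset.univ.erase i, ∑ j' ∈ (Finset.univ.erase i).erase j,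
          ENNReal.ofReal (gradAbs u (x i - x j)) * (ENNReal.ofReal (gradAbs u (x i - x j'))
          * J ((Finset.univ.erase i).erase j)) := by
    refine (ENNReal.ofReal_le_ofReal (partialSq_jastrow_le hu hue hu1 i x)).trans ?_
    rw [ENNReal.ofReal_mul (add_nonneg (Finset.sum_nonneg fun _ _ => gradSq_nonneg _ _)
      (Finset.sum_nonneg fun _ _ => Finset.sum_nonneg fun _ _ =>
        mul_nonneg (gradAbs_nonneg _ _) (gradAbs_nonneg _ _))),
      ENNReal.ofReal_add (Finset.sum_nonneg fun _ _ => gradSq_nonneg _ _)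
      (Finset.sum_nonneg fun _ _ => Finset.sum_nonneg fun _ _ =>
        mul_nonneg (gradAbs_nonneg _ _) (gradAbs_nonneg _ _)), add_mul]
    refine add_le_add (le_of_eq ?_) ?_
    · rw [ENNReal.ofReal_sum_of_nonneg fun _ _ => gradSq_nonneg _ _, Finset.sum_mul]
    · rw [ENNReal.ofReal_sum_of_nonneg fun _ _ => Finset.sum_nonneg fun _ _ =>
        mul_nonneg (gradAbs_nonneg _ _) (gradAbs_nonneg _ _), Finset.sum_mul]
      refine Finset.sum_le_sum fun j _ => ?_
      rw [ENNReal.ofReal_sum_of_nonneg fun _ _ =>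
        mul_nonneg (gradAbs_nonneg _ _) (gradAbs_nonneg _ _), Finset.sum_mul]
      refine Finset.sum_le_sum fun j' _ => ?_
      rw [ENNReal.ofReal_mul (gradAbs_nonneg _ _), mul_assoc]
      gcongr
      exact ENNReal.ofReal_le_ofReal (jastrow_sq_le_erase hue hu1 _ _ _)
  have h2 : (∑ j ∈ Finset.univ.erase i, periodize 3 V T (x i - x j) * J Finset.univ / 2)
      ≤ ∑ j ∈ Finset.univ.erase i, periodize 3 V T (x i - x j)
        * ENNReal.ofReal (u (x i - x j) ^ 2) / 2 * J (Finset.univ.erase i) := by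
    refine Finset.sum_le_sum fun j hj => ?_
    have h3 : J Finset.univ ≤ ENNReal.ofReal (u (x i - x j) ^ 2) * J (Finset.univ.erase i) := by
      rw [hJ, ← ENNReal.ofReal_mul (sq_nonneg _)]
      exact ENNReal.ofReal_le_ofReal
        (jastrow_univ_sq_le hue hu1 (Finset.ne_of_mem_erase hj) x)
    calc _ ≤ periodize 3 V T (x i - x j) *
          (ENNReal.ofReal (u (x i - x j) ^ 2) * J (Finset.univ.erase i)) / 2 := by gcongr
      _ = _ := by simp only [div_eq_mul_inv]; ring
  refine (add_le_add h1 h2).trans (le_of_eq ?_)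
  rw [add_right_comm, ← Finset.sum_add_distrib]
  congr 1
  refine Finset.sum_congr rfl fun j _ => ?_
  rw [scatDensity, add_mul]

end jastrow

lemma lintegral_mul_of_update {ι : Type*} [Fintype ι] [DecidableEq ι] (μ : Measure (Vec 3))
    [SigmaFinite μ] (i : ι) {K W : (ι → Vec 3) → ℝ≥0∞} (hK : Measurable K) (hW : Measurable W)
    (hWi : ∀ x z, W (Function.update x i z) = W x) {c : ℝ≥0∞}
    (hc : ∀ x, ∫⁻ z, K (Function.update x i z) ∂μ ≤ c) :
    (∫⁻ x, K x * W x ∂Measure.pi fun _ => μ) * μ Set.univ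
      ≤ c * ∫⁻ x, W x ∂Measure.pi fun _ => μ := by
  have hKW : Measurable fun x => K x * W x := hK.mul hW
  rw [← lintegral_lintegral_update (fun _ : ι => μ) i hKW, ← lintegral_const_mul _ hW]
  refine lintegral_mono fun x => ?_
  simp_rw [hWi]
  have hKu : Measurable fun z => K (Function.update x i z) := hK.comp (measurable_update x)
  rw [lintegral_mul_const _ hKu]
  gcongr
  exact hc x

lemma one_le_prod_add_sum_one_sub {ι : Type*} (S : Finset ι) (v : ι → ℝ) (h0 : ∀ i, 0 ≤ v i)
    (h1 : ∀ i, v i ≤ 1) : 1 ≤ ∏ i ∈ S, v i + ∑ i ∈ S, (1 - v i) := by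
  classical
  induction S using Finset.induction_on with
  | empty => simp
  | insert a S ha ih =>
    rw [Finset.prod_insert ha, Finset.sum_insert ha]
    have hp0 : 0 ≤ ∏ i ∈ S, v i := Finset.prod_nonneg fun i _ => h0 i
    have hp1 : ∏ i ∈ S, v i ≤ 1 := Finset.prod_le_one (fun i _ => h0 i) fun i _ => h1 i
    nlinarith [mul_nonneg (sub_nonneg.2 (h1 a)) (sub_nonneg.2 hp1)]

section jastrow

variable {N : ℕ} {u : Vec 3 → ℝ} (μ : Measure (Vec 3)) [IsFiniteMeasure μ]

/-- The squared norm of a Jastrow product. -/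
def jastrowMass (u : Vec 3 → ℝ) (S : Finset (Fin N)) : ℝ≥0∞ :=
  ∫⁻ x, ENNReal.ofReal (jastrow u S x ^ 2) ∂Measure.pi fun _ => μ

lemma measurable_jastrow_sq (hu : ContDiff ℝ (⊤ : ℕ∞) u) (S : Finset (Fin N)) :
    Measurable fun x => ENNReal.ofReal (jastrow u S x ^ 2) :=
  ((contDiff_jastrow hu S).continuous.pow 2).measurable.ennreal_ofReal

lemma jastrowMass_insert (hu : ContDiff ℝ (⊤ : ℕ∞) u) (hue : ∀ z, u (-z) = u z)
    (hu1 : ∀ z, u z ^ 2 ≤ 1) (S : Finset (Fin N)) {a : Fin N} (ha : a ∉ S) {β : ℝ≥0∞}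
    (hβ : ∀ w, ∫⁻ z, ENNReal.ofReal (1 - u (z - w) ^ 2) ∂μ ≤ β) :
    jastrowMass μ u S * μ Set.univ
      ≤ jastrowMass μ u (insert a S) * μ Set.univ + N * β * jastrowMass μ u S := by
  have hm : ∀ j, Measurable fun x : Fin N → Vec 3 =>
      ENNReal.ofReal (1 - u (x a - x j) ^ 2) := by
    intro j
    have : Continuous fun x : Fin N → Vec 3 => 1 - u (x a - x j) ^ 2 :=
      continuous_const.sub ((hu.continuous.comp (by fun_prop)).pow 2)
    exact this.measurable.ennreal_ofReal
  have hmm : ∀ j, Measurable fun x : Fin N → Vec 3 =>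
      ENNReal.ofReal (1 - u (x a - x j) ^ 2) * ENNReal.ofReal (jastrow u S x ^ 2) :=
    fun j => (hm j).mul (measurable_jastrow_sq hu S)
  have hpt : ∀ x : Fin N → Vec 3, ENNReal.ofReal (jastrow u S x ^ 2)
      ≤ ENNReal.ofReal (jastrow u (insert a S) x ^ 2)
        + ∑ j ∈ S, ENNReal.ofReal (1 - u (x a - x j) ^ 2) * ENNReal.ofReal (jastrow u S x ^ 2) := by
    intro x
    have h := one_le_prod_add_sum_one_sub S (fun j => u (x a - x j) ^ 2) (fun _ => sq_nonneg _)
      fun _ => hu1 _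
    have hs : ∀ j ∈ S, 0 ≤ 1 - u (x a - x j) ^ 2 := fun j _ => sub_nonneg.2 (hu1 _)
    rw [← Finset.sum_mul, ← ENNReal.ofReal_sum_of_nonneg hs, ← ENNReal.ofReal_mul
      (Finset.sum_nonneg hs), ← ENNReal.ofReal_add (sq_nonneg _)
      (mul_nonneg (Finset.sum_nonneg hs) (sq_nonneg _)), jastrow_insert hue S ha, mul_pow,
      ← Finset.prod_pow, ← add_mul]
    exact ENNReal.ofReal_le_ofReal (le_mul_of_one_le_left (sq_nonneg _) h)
  have h1 : jastrowMass μ u S ≤ jastrowMass μ u (insert a S)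
      + ∑ j ∈ S, ∫⁻ x, ENNReal.ofReal (1 - u (x a - x j) ^ 2)
          * ENNReal.ofReal (jastrow u S x ^ 2) ∂Measure.pi fun _ => μ := by
    refine (lintegral_mono hpt).trans ?_
    rw [lintegral_add_left (measurable_jastrow_sq hu _),
      lintegral_finsetSum _ fun j _ => hmm j]
    rfl
  calc _ ≤ (jastrowMass μ u (insert a S)
      + ∑ j ∈ S, ∫⁻ x, ENNReal.ofReal (1 - u (x a - x j) ^ 2)
          * ENNReal.ofReal (jastrow u S x ^ 2) ∂Measure.pi fun _ => μ) * μ Set.univ := by gcongr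
    _ ≤ jastrowMass μ u (insert a S) * μ Set.univ + ∑ j ∈ S, β * jastrowMass μ u S := by
        rw [add_mul, Finset.sum_mul]
        refine add_le_add le_rfl (Finset.sum_le_sum fun j hj => ?_)
        refine lintegral_mul_of_update μ a (hm j) (measurable_jastrow_sq hu _)
          (fun x z => by rw [jastrow_update S ha]) fun x => ?_
        have hja : j ≠ a := fun h => ha (h ▸ hj)
        simp only [Function.update_self, Function.update_of_ne hja]
        exact hβ _
    _ ≤ _ := by
        rw [Finset.sum_const, nsmul_eq_mul, mul_assoc]
        gcongr
        simpa using Finset.card_le_univ S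

lemma jastrowMass_ne_top (hu1 : ∀ z, u z ^ 2 ≤ 1) (hue : ∀ z, u (-z) = u z)
    (S : Finset (Fin N)) : jastrowMass μ u S ≠ ⊤ := by
  have h1 : ∀ x, jastrow u S x ^ 2 ≤ 1 := by
    intro x
    induction S using Finset.induction_on with
    | empty => simp [jastrow]
    | insert a S ha ih =>
      rw [jastrow_insert hue S ha, mul_pow]
      exact mul_le_one₀ (prod_sq_le_one hu1 _ _) (sq_nonneg _) ih
  have : jastrowMass μ u S ≤ ∫⁻ _, 1 ∂Measure.pi fun _ : Fin N => μ :=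
    lintegral_mono fun x => ENNReal.ofReal_le_one.2 (h1 x)
  refine ne_top_of_le_ne_top ?_ this
  simp

lemma mul_jastrowMass_le_insert (hu : ContDiff ℝ (⊤ : ℕ∞) u) (hue : ∀ z, u (-z) = u z)
    (hu1 : ∀ z, u z ^ 2 ≤ 1) (hμ : μ Set.univ ≠ 0) (S : Finset (Fin N)) {a : Fin N} (ha : a ∉ S)
    {β : ℝ≥0∞} (hβ : ∀ w, ∫⁻ z, ENNReal.ofReal (1 - u (z - w) ^ 2) ∂μ ≤ β)
    {θ : ℝ} (hθ0 : 0 ≤ θ) (hθ1 : θ ≤ 1) (hθ : N * β ≤ ENNReal.ofReal (1 - θ) * μ Set.univ) :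
    ENNReal.ofReal θ * jastrowMass μ u S ≤ jastrowMass μ u (insert a S) := by
  set Z := jastrowMass μ u S with hZ
  have hZt : Z ≠ ⊤ := jastrowMass_ne_top μ hu1 hue S
  have hτ : μ Set.univ ≠ ⊤ := measure_ne_top μ _
  have h := jastrowMass_insert μ hu hue hu1 S ha hβ
  have h2 : (ENNReal.ofReal θ * Z + ENNReal.ofReal (1 - θ) * Z) * μ Set.univ
      ≤ (jastrowMass μ u (insert a S) + ENNReal.ofReal (1 - θ) * Z) * μ Set.univ := by
    rw [← add_mul, ← ENNReal.ofReal_add hθ0 (by linarith), add_sub_cancel, ENNReal.ofReal_one,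
      one_mul]
    refine h.trans ?_
    rw [add_mul]
    refine add_le_add le_rfl ?_
    calc (N : ℝ≥0∞) * β * Z ≤ ENNReal.ofReal (1 - θ) * μ Set.univ * Z := by gcongr
      _ = _ := by ring
  rw [ENNReal.mul_le_mul_iff_left hμ hτ] at h2
  exact (ENNReal.add_le_add_iff_right (ENNReal.mul_ne_top ENNReal.ofReal_ne_top hZt)).1 h2

lemma jastrowMass_pos (hu : ContDiff ℝ (⊤ : ℕ∞) u) (hue : ∀ z, u (-z) = u z)
    (hu1 : ∀ z, u z ^ 2 ≤ 1) (hμ : μ Set.univ ≠ 0) (S : Finset (Fin N))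
    {β : ℝ≥0∞} (hβ : ∀ w, ∫⁻ z, ENNReal.ofReal (1 - u (z - w) ^ 2) ∂μ ≤ β)
    {θ : ℝ} (hθ0 : 0 < θ) (hθ1 : θ ≤ 1) (hθ : N * β ≤ ENNReal.ofReal (1 - θ) * μ Set.univ) :
    0 < jastrowMass μ u S := by
  induction S using Finset.induction_on with
  | empty =>
    rw [pos_iff_ne_zero]
    simp only [jastrowMass, jastrow, Finset.prod_empty, one_pow, ENNReal.ofReal_one,
      lintegral_one, Measure.pi_univ]
    exact Finset.prod_ne_zero_iff.2 fun _ _ => hμ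
  | insert a S ha ih =>
    refine lt_of_lt_of_le ?_
      (mul_jastrowMass_le_insert μ hu hue hu1 hμ S ha hβ hθ0.le hθ1 hθ)
    exact ENNReal.mul_pos (ENNReal.ofReal_pos.2 hθ0).ne' ih.ne'

lemma lintegral_stateDensity_jastrow_le {T : ℝ} {V : Vec 3 → ℝ≥0∞} (hV : Measurable V)
    (hVe : ∀ z, V (-z) = V z)
    (hu : ContDiff ℝ (⊤ : ℕ∞) u) (hue : ∀ z, u (-z) = u z)
    (hu1 : ∀ z, u z ^ 2 ≤ 1) (hμ : μ Set.univ ≠ 0)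
    {β : ℝ≥0∞} (hβ : ∀ w, ∫⁻ z, ENNReal.ofReal (1 - u (z - w) ^ 2) ∂μ ≤ β)
    {θ : ℝ} (hθ0 : 0 < θ) (hθ1 : θ ≤ 1) (hθ : N * β ≤ ENNReal.ofReal (1 - θ) * μ Set.univ)
    {e g : ℝ≥0∞} (he : ∀ w, ∫⁻ z, scatDensity (periodize 3 V T) u (z - w) ∂μ ≤ e)
    (hg : ∀ w, ∫⁻ z, ENNReal.ofReal (gradAbs u (z - w)) ∂μ ≤ g)
    (hg2 : ∀ w, ∫⁻ z, ENNReal.ofReal (gradAbs u (w - z)) ∂μ ≤ g) :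
    ENNReal.ofReal θ ^ 2 * μ Set.univ ^ 2 *
        (∫⁻ x, stateDensity T V (fun y => (jastrow u Finset.univ y : ℂ)) x
          ∂Measure.pi fun _ : Fin N => μ)
      ≤ ((N : ℝ≥0∞) ^ 2 * e * μ Set.univ + (N : ℝ≥0∞) ^ 3 * g ^ 2)
        * jastrowMass μ u (Finset.univ : Finset (Fin N)) := by
  set τ := μ Set.univ with hτ
  set t := ENNReal.ofReal θ with ht
  have ht1 : t ≤ 1 := ENNReal.ofReal_le_one.2 hθ1
  set Z := jastrowMass μ u (Finset.univ : Finset (Fin N)) with hZ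
  set ν := Measure.pi fun _ : Fin N => μ with hν
  have hu' : ContDiff ℝ 1 u := hu.of_le (by exact_mod_cast le_top)
  have hmP : ∀ i j, Measurable fun x : Fin N → Vec 3 =>
      scatDensity (periodize 3 V T) u (x i - x j) := by
    intro i j
    have h1 : Measurable (scatDensity (periodize 3 V T) u) := by
      unfold scatDensity
      refine ((continuous_gradSq hu').measurable.ennreal_ofReal).add ?_
      exact ((measurable_periodize hV T).mul
        (hu.continuous.pow 2).measurable.ennreal_ofReal).div_const 2
    exact h1.comp (by fun_prop)
  have hmG : ∀ i j, Measurable fun x : Fin N → Vec 3 =>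
      ENNReal.ofReal (gradAbs u (x i - x j)) := by
    intro i j
    exact (((continuous_gradAbs hu').comp (by fun_prop :
      Continuous fun x : Fin N → Vec 3 => x i - x j)).measurable).ennreal_ofReal
  have hZ1 : ∀ i : Fin N, t * jastrowMass μ u (Finset.univ.erase i) ≤ Z := by
    intro i
    have := mul_jastrowMass_le_insert μ hu hue hu1 hμ (Finset.univ.erase i)
      (Finset.notMem_erase i _) hβ hθ0.le hθ1 hθ
    rwa [Finset.insert_erase (Finset.mem_univ i)] at this
  have hZ2 : ∀ i j : Fin N, j ∈ Finset.univ.erase i →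
      t ^ 2 * jastrowMass μ u ((Finset.univ.erase i).erase j) ≤ Z := by
    intro i j hj
    have := mul_jastrowMass_le_insert μ hu hue hu1 hμ ((Finset.univ.erase i).erase j)
      (Finset.notMem_erase j _) hβ hθ0.le hθ1 hθ
    rw [Finset.insert_erase hj] at this
    calc _ = t * (t * jastrowMass μ u ((Finset.univ.erase i).erase j)) := by ring
      _ ≤ t * jastrowMass μ u (Finset.univ.erase i) := by gcongr
      _ ≤ Z := hZ1 i
  have hdiag : ∀ i j : Fin N, j ∈ Finset.univ.erase i →
      t ^ 2 * τ ^ 2 * ∫⁻ x, scatDensity (periodize 3 V T) u (x i - x j)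
          * ENNReal.ofReal (jastrow u (Finset.univ.erase i) x ^ 2) ∂ν ≤ e * τ * Z := by
    intro i j hj
    have hji : j ≠ i := Finset.ne_of_mem_erase hj
    have h := lintegral_mul_of_update μ i (hmP i j) (measurable_jastrow_sq hu (Finset.univ.erase i))
      (fun x z => by rw [jastrow_update _ (Finset.notMem_erase i _)]) (c := e) fun x => by
        simp only [Function.update_self, Function.update_of_ne hji]
        exact he _
    calc _ = t ^ 2 * τ * ((∫⁻ x, scatDensity (periodize 3 V T) u (x i - x j)
          * ENNReal.ofReal (jastrow u (Finset.univ.erase i) x ^ 2) ∂ν) * τ) := by ring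
      _ ≤ t ^ 2 * τ * (e * jastrowMass μ u (Finset.univ.erase i)) := mul_le_mul_right h _
      _ = t * (e * τ * (t * jastrowMass μ u (Finset.univ.erase i))) := by ring
      _ ≤ 1 * (e * τ * Z) := by gcongr; exact hZ1 i
      _ = _ := one_mul _
  have hoff : ∀ i j j' : Fin N, j ∈ Finset.univ.erase i → j' ∈ (Finset.univ.erase i).erase j →
      t ^ 2 * τ ^ 2 * ∫⁻ x, ENNReal.ofReal (gradAbs u (x i - x j))
          * (ENNReal.ofReal (gradAbs u (x i - x j'))
          * ENNReal.ofReal (jastrow u ((Finset.univ.erase i).erase j) x ^ 2)) ∂ν ≤ g ^ 2 * Z := by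
    intro i j j' hj hj'
    have hji : j ≠ i := Finset.ne_of_mem_erase hj
    have hj'j : j' ≠ j := Finset.ne_of_mem_erase hj'
    have hj'i : j' ≠ i := Finset.ne_of_mem_erase (Finset.mem_of_mem_erase hj')
    have hJ := measurable_jastrow_sq hu ((Finset.univ.erase i).erase j)
    have hGJ : Measurable fun x : Fin N → Vec 3 => ENNReal.ofReal (gradAbs u (x i - x j'))
        * ENNReal.ofReal (jastrow u ((Finset.univ.erase i).erase j) x ^ 2) := (hmG i j').mul hJ
    have h1 := lintegral_mul_of_update μ j (hmG i j) hGJ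
      (fun x z => by
        rw [jastrow_update _ (Finset.notMem_erase j _), Function.update_of_ne hji.symm,
          Function.update_of_ne hj'j]) (c := g) fun x => by
        simp only [Function.update_self, Function.update_of_ne hji.symm]
        exact hg2 _
    have h2 := lintegral_mul_of_update μ i (hmG i j') hJ
      (fun x z => by
        rw [jastrow_update _ fun h => Finset.notMem_erase i _ (Finset.mem_of_mem_erase h)])
      (c := g) fun x => by
        simp only [Function.update_self, Function.update_of_ne hj'i]
        exact hg _
    calc _ = t ^ 2 * τ * ((∫⁻ x, ENNReal.ofReal (gradAbs u (x i - x j))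
          * (ENNReal.ofReal (gradAbs u (x i - x j'))
          * ENNReal.ofReal (jastrow u ((Finset.univ.erase i).erase j) x ^ 2)) ∂ν) * τ) := by ring
      _ ≤ t ^ 2 * τ * (g * ∫⁻ x, ENNReal.ofReal (gradAbs u (x i - x j'))
          * ENNReal.ofReal (jastrow u ((Finset.univ.erase i).erase j) x ^ 2) ∂ν) :=
          mul_le_mul_right h1 _
      _ = t ^ 2 * g * ((∫⁻ x, ENNReal.ofReal (gradAbs u (x i - x j'))
          * ENNReal.ofReal (jastrow u ((Finset.univ.erase i).erase j) x ^ 2) ∂ν) * τ) := by ring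
      _ ≤ t ^ 2 * g * (g * jastrowMass μ u ((Finset.univ.erase i).erase j)) :=
          mul_le_mul_right h2 _
      _ = g ^ 2 * (t ^ 2 * jastrowMass μ u ((Finset.univ.erase i).erase j)) := by ring
      _ ≤ _ := by gcongr; exact hZ2 i j hj
  have hcard1 : ∀ i : Fin N, (Finset.univ.erase i).card ≤ N := fun i =>
     (Finset.card_erase_le).trans (by simp)
  have hcard2 : ∀ i j : Fin N, ((Finset.univ.erase i).erase j).card ≤ N := fun i j =>
     (Finset.card_erase_le).trans ((Finset.card_erase_le).trans (by simp))
  have hmd : ∀ i j : Fin N, Measurable fun x : Fin N → Vec 3 =>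
      scatDensity (periodize 3 V T) u (x i - x j)
          * ENNReal.ofReal (jastrow u (Finset.univ.erase i) x ^ 2) :=
    fun i j => (hmP i j).mul (measurable_jastrow_sq hu _)
  have hmo : ∀ i j j' : Fin N, Measurable fun x : Fin N → Vec 3 =>
      ENNReal.ofReal (gradAbs u (x i - x j)) * (ENNReal.ofReal (gradAbs u (x i - x j'))
          * ENNReal.ofReal (jastrow u ((Finset.univ.erase i).erase j) x ^ 2)) :=
    fun i j j' => (hmG i j).mul ((hmG i j').mul (measurable_jastrow_sq hu _))
  calc _ ≤ t ^ 2 * τ ^ 2 * ∫⁻ x, ((∑ i, ∑ j ∈ Finset.univ.erase i,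
          scatDensity (periodize 3 V T) u (x i - x j)
          * ENNReal.ofReal (jastrow u (Finset.univ.erase i) x ^ 2))
        + ∑ i, ∑ j ∈ Finset.univ.erase i, ∑ j' ∈ (Finset.univ.erase i).erase j,
          ENNReal.ofReal (gradAbs u (x i - x j)) * (ENNReal.ofReal (gradAbs u (x i - x j'))
          * ENNReal.ofReal (jastrow u ((Finset.univ.erase i).erase j) x ^ 2))) ∂ν := by
        gcongr with x
        exact stateDensity_jastrow_le T hVe hu hue hu1 x
    _ = (∑ i, ∑ j ∈ Finset.univ.erase i, t ^ 2 * τ ^ 2 *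
          ∫⁻ x, scatDensity (periodize 3 V T) u (x i - x j)
          * ENNReal.ofReal (jastrow u (Finset.univ.erase i) x ^ 2) ∂ν)
        + ∑ i, ∑ j ∈ Finset.univ.erase i, ∑ j' ∈ (Finset.univ.erase i).erase j,
          t ^ 2 * τ ^ 2 * ∫⁻ x, ENNReal.ofReal (gradAbs u (x i - x j)) *
          (ENNReal.ofReal (gradAbs u (x i - x j'))
          * ENNReal.ofReal (jastrow u ((Finset.univ.erase i).erase j) x ^ 2)) ∂ν := by
        rw [lintegral_add_left (Finset.measurable_sum _ fun i _ =>
          Finset.measurable_sum _ fun j _ => hmd i j), mul_add,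
          lintegral_finsetSum _ fun i _ => Finset.measurable_sum _ fun j _ => hmd i j,
          lintegral_finsetSum _ fun i _ => Finset.measurable_sum _ fun j _ =>
            Finset.measurable_sum _ fun j' _ => hmo i j j', Finset.mul_sum, Finset.mul_sum]
        congr 1
        · refine Finset.sum_congr rfl fun i _ => ?_
          rw [lintegral_finsetSum _ fun j _ => hmd i j, Finset.mul_sum]
        · refine Finset.sum_congr rfl fun i _ => ?_
          rw [lintegral_finsetSum _ fun j _ => Finset.measurable_sum _ fun j' _ => hmo i j j',
            Finset.mul_sum]
          refine Finset.sum_congr rfl fun j _ => ?_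
          rw [lintegral_finsetSum _ fun j' _ => hmo i j j', Finset.mul_sum]
    _ ≤ (∑ i : Fin N, ∑ j ∈ Finset.univ.erase i, e * τ * Z)
        + ∑ i : Fin N, ∑ j ∈ Finset.univ.erase i, ∑ j' ∈ (Finset.univ.erase i).erase j,
          g ^ 2 * Z := by
        refine add_le_add ?_ ?_
        · exact Finset.sum_le_sum fun i _ => Finset.sum_le_sum fun j hj => hdiag i j hj
        · exact Finset.sum_le_sum fun i _ => Finset.sum_le_sum fun j hj =>
            Finset.sum_le_sum fun j' hj' => hoff i j j' hj hj'
    _ ≤ (∑ _i : Fin N, N * (e * τ * Z)) + ∑ _i : Fin N, N * (N * (g ^ 2 * Z)) := by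
        refine add_le_add ?_ ?_
        · refine Finset.sum_le_sum fun i _ => ?_
          rw [Finset.sum_const, nsmul_eq_mul]
          gcongr
          exact hcard1 i
        · refine Finset.sum_le_sum fun i _ => ?_
          calc _ ≤ ∑ j ∈ Finset.univ.erase i, (N : ℝ≥0∞) * (g ^ 2 * Z) := by
                refine Finset.sum_le_sum fun j _ => ?_
                rw [Finset.sum_const, nsmul_eq_mul]
                gcongr
                exact hcard2 i j
            _ ≤ _ := by
                rw [Finset.sum_const, nsmul_eq_mul]
                gcongr
                exact hcard1 i
    _ = _ := by
        rw [Finset.sum_const, Finset.sum_const, nsmul_eq_mul, nsmul_eq_mul, Finset.card_univ,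
          Fintype.card_fin]
        ring

end jastrow

lemma stateDensity_const_smul {N : ℕ} (T : ℝ) (V : Vec 3 → ℝ≥0∞) {φ : (Fin N → Vec 3) → ℂ}
    (hφ : Differentiable ℝ φ) (c : ℝ) (x : Fin N → Vec 3) :
    stateDensity T V (fun y => c • φ y) x = ENNReal.ofReal (c ^ 2) * stateDensity T V φ x := by
  have hc : (‖c‖₊ : ℝ≥0∞) ^ 2 = ENNReal.ofReal (c ^ 2) := enorm_sq_eq_ofReal c
  have h : ∀ z : ℂ, (‖c • z‖₊ : ℝ≥0∞) ^ 2 = ENNReal.ofReal (c ^ 2) * (‖z‖₊ : ℝ≥0∞) ^ 2 := by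
    intro z
    rw [nnnorm_smul, ENNReal.coe_mul, mul_pow, hc]
  have hd : fderiv ℝ (fun y => c • φ y) x = c • fderiv ℝ φ x :=
    fderiv_fun_const_smul (hφ x) c
  unfold stateDensity
  rw [hd, mul_add, Finset.mul_sum, Finset.mul_sum]
  congr 1
  · refine Finset.sum_congr rfl fun i _ => ?_
    rw [Finset.mul_sum]
    refine Finset.sum_congr rfl fun k _ => ?_
    rw [smul_apply, h]
  · refine Finset.sum_congr rfl fun i _ => ?_
    rw [Finset.mul_sum]
    refine Finset.sum_congr rfl fun j _ => ?_
    rw [h, mul_ite, mul_zero]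
    congr 1
    ring

lemma jastrow_comp_univ {N : ℕ} {u : Vec 3 → ℝ} (hue : ∀ z, u (-z) = u z)
    (σ : Equiv.Perm (Fin N)) (x : Fin N → Vec 3) :
    jastrow u Finset.univ (x ∘ σ) = jastrow u Finset.univ x := by
  rw [jastrow_comp hue, Finset.map_univ_equiv]

lemma jastrow_add_period {N : ℕ} {u : Vec 3 → ℝ} {T : ℝ}
    (hup : ∀ (z : Vec 3) (n : Fin 3 → ℤ), u (fun k => z k + T * n k) = u z)
    (S : Finset (Fin N)) (x : Fin N → Vec 3) (v : Fin N → Fin 3 → ℤ) :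
    jastrow u S (fun i k => x i k + T * v i k) = jastrow u S x := by
  unfold jastrow
  refine Finset.prod_congr rfl fun i _ => Finset.prod_congr rfl fun j _ => ?_
  congr 1
  rw [← hup (x i - x j) (v i - v j)]
  congr 1
  funext k
  simp
  ring

/-- A normalized Jastrow product is a trial state, with energy given by its density. -/
lemma exists_trialState_jastrow {N : ℕ} {u : Vec 3 → ℝ} {T : ℝ} {V : Vec 3 → ℝ≥0∞}
    (hV : Measurable V) (hu : ContDiff ℝ (⊤ : ℕ∞) u) (hue : ∀ z, u (-z) = u z)
    (hup : ∀ (z : Vec 3) (n : Fin 3 → ℤ), u (fun k => z k + T * n k) = u z)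
    {μ : Measure (Vec 3)} (hμ : μ = volume.restrict (cell (fun _ => -T / 2) T))
    (hZ0 : jastrowMass μ u (Finset.univ : Finset (Fin N)) ≠ 0)
    (hZt : jastrowMass μ u (Finset.univ : Finset (Fin N)) ≠ ⊤) :
    ∃ ψ : (Fin N → Vec 3) → ℂ, IsTrialState 3 N T ψ ∧
      (kineticE 3 N T ψ + interE 3 N T V ψ) * jastrowMass μ u (Finset.univ : Finset (Fin N))
        = ∫⁻ x, stateDensity T V (fun y => (jastrow u Finset.univ y : ℂ)) x
          ∂Measure.pi fun _ : Fin N => μ := by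
  set Z := jastrowMass μ u (Finset.univ : Finset (Fin N)) with hZ
  have hν : Measure.pi (fun _ : Fin N => μ)
      = (volume : Measure (Fin N → Vec 3)).restrict (box 3 N T) := by
    rw [hμ, pi_restrict_cell, Measure.restrict_congr_set (box_ae_eq_pi_cell N T)]
  have hJ : ContDiff ℝ (⊤ : ℕ∞) fun x : Fin N → Vec 3 => jastrow u Finset.univ x :=
    contDiff_jastrow hu _
  have hJc : ContDiff ℝ (⊤ : ℕ∞) fun x : Fin N → Vec 3 => (jastrow u Finset.univ x : ℂ) :=
    Complex.ofRealCLM.contDiff.comp hJ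
  set c : ℝ := (√Z.toReal)⁻¹ with hc
  have hZp : 0 < Z.toReal := ENNReal.toReal_pos hZ0 hZt
  have hcZ : ENNReal.ofReal (c ^ 2) * Z = 1 := by
    rw [← ENNReal.ofReal_toReal hZt, ← ENNReal.ofReal_mul (sq_nonneg c), hc, inv_pow,
      Real.sq_sqrt hZp.le, inv_mul_cancel₀ hZp.ne', ENNReal.ofReal_one]
  have hψ : ContDiff ℝ (⊤ : ℕ∞) fun x : Fin N → Vec 3 =>
      c • (jastrow u Finset.univ x : ℂ) := hJc.const_smul c
  have h1 : (1 : WithTop ℕ∞) ≤ ((⊤ : ℕ∞) : WithTop ℕ∞) := by exact_mod_cast le_top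
  refine ⟨_, ⟨hψ, fun x v => ?_, fun σ x => ?_, ?_⟩, ?_⟩
  · simp only [jastrow_add_period hup]
  · simp only [jastrow_comp_univ hue]
  · rw [← hcZ, hZ, jastrowMass, hν, ← lintegral_const_mul _ (measurable_jastrow_sq hu _)]
    refine lintegral_congr fun x => ?_
    rw [nnnorm_smul, ENNReal.coe_mul, mul_pow, enorm_sq_eq_re_add_im]
    have hcc : (‖c‖₊ : ℝ≥0∞) ^ 2 = ENNReal.ofReal (c ^ 2) := enorm_sq_eq_ofReal c
    rw [hcc]
    simp
  · rw [energy_eq_lintegral hV (hψ.of_le h1), hν]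
    have h2 : ∀ x, stateDensity T V (fun y : Fin N → Vec 3 => c • (jastrow u Finset.univ y : ℂ)) x
        = ENNReal.ofReal (c ^ 2) *
          stateDensity T V (fun y => (jastrow u Finset.univ y : ℂ)) x :=
      stateDensity_const_smul T V (hJc.differentiable (by simp)) c
    simp_rw [h2]
    rw [lintegral_const_mul' _ _ ENNReal.ofReal_ne_top, mul_right_comm, hcZ, one_mul]

section cutoff

variable {f : Vec 3 → ℝ} {R : ℝ}

lemma hasCompactSupport_of_eq_zero {g : Vec 3 → ℝ}
    (hg : ∀ z, (∃ k, R ≤ |z k|) → g z = 0) : HasCompactSupport g := by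
  refine HasCompactSupport.intro (K := Set.pi Set.univ fun _ => Set.Icc (-R) R)
    (isCompact_univ_pi fun _ => isCompact_Icc) fun z hz => hg z ?_
  by_contra! h
  exact hz fun k _ => abs_le.1 (h k).le

lemma lintegral_one_sub_sq_ne_top (hf : ContDiff ℝ (⊤ : ℕ∞) f)
    (hf1 : ∀ z, (∃ k, R ≤ |z k|) → f z = 1) : ∫⁻ z, ENNReal.ofReal (1 - f z ^ 2) ≠ ⊤ := by
  have hc : Continuous fun z => 1 - f z ^ 2 := continuous_const.sub (hf.continuous.pow 2)
  have hs : HasCompactSupport fun z => 1 - f z ^ 2 :=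
    hasCompactSupport_of_eq_zero fun z hz => by rw [hf1 z hz]; norm_num
  exact (hc.integrable_of_hasCompactSupport hs).lintegral_lt_top.ne

lemma lintegral_gradAbs_ne_top (hf : ContDiff ℝ (⊤ : ℕ∞) f)
    (hf1 : ∀ z, (∃ k, R ≤ |z k|) → f z = 1) : ∫⁻ z, ENNReal.ofReal (gradAbs f z) ≠ ⊤ := by
  have hc : Continuous (gradAbs f) := continuous_gradAbs (hf.of_le (by exact_mod_cast le_top))
  have hs1 : HasCompactSupport fun z => f z - 1 :=
    hasCompactSupport_of_eq_zero fun z hz => by rw [hf1 z hz]; norm_num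
  have hs2 : HasCompactSupport (fderiv ℝ f) := by
    have h := hs1.fderiv (𝕜 := ℝ)
    have he : fderiv ℝ (fun z => f z - 1) = fderiv ℝ f := funext fun z => fderiv_sub_const 1
    rwa [he] at h
  have hs : HasCompactSupport (gradAbs f) :=
    hs2.comp_left (g := fun L : Vec 3 →L[ℝ] ℝ => ∑ k, |L (Pi.single k 1)|) (by simp)
  exact (hc.integrable_of_hasCompactSupport hs).lintegral_lt_top.ne

lemma gradAbs_perExt_le (hf1 : ∀ z, (∃ k, R ≤ |z k|) → f z = 1) {T : ℝ} (hT : 0 < T)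
    (hRT : 2 * R < T) (z : Vec 3) :
    ENNReal.ofReal (gradAbs (perExt f T) z)
      ≤ periodize 3 (fun y => ENNReal.ofReal (gradAbs f y)) T z := by
  refine le_trans (le_of_eq ?_)
    (apply_sub_round_le_periodize (fun y => ENNReal.ofReal (gradAbs f y)) T z)
  unfold gradAbs
  rw [fderiv_perExt hf1 hT hRT]

end cutoff

lemma exists_trialState_perExt {f : Vec 3 → ℝ} {R : ℝ} {V : Vec 3 → ℝ≥0∞} (hV : Measurable V)
    (hVe : ∀ z, V (-z) = V z)
    (hf : ContDiff ℝ (⊤ : ℕ∞) f) (hfe : ∀ z, f (-z) = f z) (hfle : ∀ z, f z ^ 2 ≤ 1)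
    (hf1 : ∀ z, (∃ k, R ≤ |z k|) → f z = 1) {N : ℕ} {T : ℝ} (hT : 0 < T) (hRT : 2 * R < T)
    {B β g : ℝ} (hB0 : 0 ≤ B) (hg0 : 0 ≤ g)
    (hB : ∫⁻ x, scatDensity V f x ≤ ENNReal.ofReal B)
    (hβ : ∫⁻ z, ENNReal.ofReal (1 - f z ^ 2) ≤ ENNReal.ofReal β)
    (hg : ∫⁻ z, ENNReal.ofReal (gradAbs f z) ≤ ENNReal.ofReal g)
    {θ : ℝ} (hθ0 : 0 < θ) (hθ1 : θ ≤ 1) (hθ : N * β ≤ (1 - θ) * T ^ 3) {X : ℝ}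
    (hX : N ^ 2 * B * T ^ 3 + N ^ 3 * g ^ 2 ≤ θ ^ 2 * (T ^ 3) ^ 2 * X) :
    ∃ ψ : (Fin N → Vec 3) → ℂ, IsTrialState 3 N T ψ ∧
      kineticE 3 N T ψ + interE 3 N T V ψ ≤ ENNReal.ofReal X := by
  set u := perExt f T with hu
  have huc : ContDiff ℝ (⊤ : ℕ∞) u := contDiff_perExt hf hf1 hT hRT
  have hue : ∀ z, u (-z) = u z := perExt_neg hfe hf1 hT hRT
  have hu1 : ∀ z, u z ^ 2 ≤ 1 := perExt_sq_le_one hfle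
  set μ : Measure (Vec 3) := volume.restrict (cell (fun _ => -T / 2) T) with hμ
  have hτ : μ Set.univ = ENNReal.ofReal (T ^ 3) := by
    rw [hμ, Measure.restrict_apply_univ, volume_cell, ENNReal.ofReal_pow hT.le]
  have hμ0 : μ Set.univ ≠ 0 := by
    rw [hτ]
    exact (ENNReal.ofReal_pos.2 (by positivity)).ne'
  have hf' : ContDiff ℝ 1 f := hf.of_le (by exact_mod_cast le_top)
  have hmβ : Measurable fun z => ENNReal.ofReal (1 - f z ^ 2) :=
    (continuous_const.sub (hf.continuous.pow 2)).measurable.ennreal_ofReal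
  have hmg : Measurable fun z => ENNReal.ofReal (gradAbs f z) :=
    (continuous_gradAbs hf').measurable.ennreal_ofReal
  have hmB : Measurable (scatDensity V f) := by
    unfold scatDensity
    refine ((continuous_gradSq hf').measurable.ennreal_ofReal).add ?_
    exact (hV.mul (hf.continuous.pow 2).measurable.ennreal_ofReal).div_const 2
  have hβ' : ∀ w, ∫⁻ z, ENNReal.ofReal (1 - u (z - w) ^ 2) ∂μ ≤ ENNReal.ofReal β := fun w =>
    (lintegral_mono fun z => apply_sub_round_le_periodize
      (fun y => ENNReal.ofReal (1 - f y ^ 2)) T (z - w)).trans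
      ((lintegral_cell_periodize_le hmβ hT _ w).trans hβ)
  have he' : ∀ w, ∫⁻ z, scatDensity (periodize 3 V T) u (z - w) ∂μ ≤ ENNReal.ofReal B := fun w =>
    (lintegral_mono fun z => scatDensity_perExt_le V hfle hf1 hT hRT (z - w)).trans
      ((lintegral_cell_periodize_le hmB hT _ w).trans hB)
  have hg' : ∀ w, ∫⁻ z, ENNReal.ofReal (gradAbs u (z - w)) ∂μ ≤ ENNReal.ofReal g := fun w =>
    (lintegral_mono fun z => gradAbs_perExt_le hf1 hT hRT (z - w)).trans
      ((lintegral_cell_periodize_le hmg hT _ w).trans hg)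
  have hg2' : ∀ w, ∫⁻ z, ENNReal.ofReal (gradAbs u (w - z)) ∂μ ≤ ENNReal.ofReal g := fun w =>
    (lintegral_mono fun z => gradAbs_perExt_le hf1 hT hRT (w - z)).trans
      ((lintegral_cell_periodize_sub_le hmg hT _ w).trans hg)
  have hθ' : (N : ℝ≥0∞) * ENNReal.ofReal β ≤ ENNReal.ofReal (1 - θ) * μ Set.univ := by
    rw [hτ, ← ENNReal.ofReal_natCast, ← ENNReal.ofReal_mul (Nat.cast_nonneg _),
      ← ENNReal.ofReal_mul (by linarith)]
    exact ENNReal.ofReal_le_ofReal hθ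
  have hZ0 := (jastrowMass_pos μ huc hue hu1 hμ0 (Finset.univ : Finset (Fin N)) hβ' hθ0 hθ1 hθ').ne'
  have hZt := jastrowMass_ne_top μ hu1 hue (Finset.univ : Finset (Fin N))
  have hmain := lintegral_stateDensity_jastrow_le μ hV hVe huc hue hu1 hμ0 hβ' hθ0 hθ1 hθ'
    he' hg' hg2'
  obtain ⟨ψ, hψ, hE⟩ := exists_trialState_jastrow hV huc hue (perExt_add_period hT) hμ hZ0 hZt
  refine ⟨ψ, hψ, ?_⟩
  rw [← hE, ← mul_assoc, ENNReal.mul_le_mul_iff_left hZ0 hZt, hτ,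
    ← ENNReal.ofReal_pow hθ0.le, ← ENNReal.ofReal_pow (by positivity),
    ← ENNReal.ofReal_pow hg0, ← ENNReal.ofReal_natCast,
    ← ENNReal.ofReal_pow (Nat.cast_nonneg _), ← ENNReal.ofReal_pow (Nat.cast_nonneg _),
    ← ENNReal.ofReal_mul (by positivity), ← ENNReal.ofReal_mul (by positivity),
    ← ENNReal.ofReal_mul (by positivity), ← ENNReal.ofReal_mul (by positivity),
    ← ENNReal.ofReal_add (by positivity) (by positivity)] at hmain
  have h := hmain.trans (ENNReal.ofReal_le_ofReal hX)
  rw [ENNReal.ofReal_mul (p := θ ^ 2 * (T ^ 3) ^ 2) (by positivity)] at h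
  exact (ENNReal.mul_le_mul_iff_right (ENNReal.ofReal_pos.2 (by positivity)).ne'
    ENNReal.ofReal_ne_top).1 h

lemma tendsto_sideLength {ρ : ℝ} (hρ : 0 < ρ) :
    Tendsto (fun N : ℕ => sideLength 3 ρ N) atTop atTop := by
  unfold sideLength
  exact (tendsto_rpow_atTop (by norm_num)).comp
    (tendsto_natCast_atTop_atTop.atTop_div_const hρ)

lemma sideLength_energy_upper {V : Vec 3 → ℝ≥0∞} (hV : Measurable V)
    (hVe : ∀ z, V (-z) = V z) {a : ℝ}
    (ha : 0 < a) (hscat : sInf (scatSet3 V) = ENNReal.ofReal (4 * π * a)) {ε : ℝ}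
    (hε : 0 < ε) :
    ∃ ρ₀ : ℝ, 0 < ρ₀ ∧ ∀ ρ, 0 < ρ → ρ < ρ₀ → ∀ᶠ N : ℕ in atTop,
      ∃ ψ, IsTrialState 3 N (sideLength 3 ρ N) ψ ∧
        kineticE 3 N (sideLength 3 ρ N) ψ + interE 3 N (sideLength 3 ρ N) V ψ
          ≤ ENNReal.ofReal (4 * π * a * (1 + ε) * ρ ^ 2 * sideLength 3 ρ N ^ 3) := by
  have hA : 0 < 4 * π * a := by positivity
  set B := 4 * π * a * (1 + ε / 2) with hB
  set C := 4 * π * a * (1 + ε) with hC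
  have hAB : 4 * π * a < B := by rw [hB]; nlinarith
  have hBC : B < C := by rw [hB, hC]; nlinarith
  obtain ⟨f, hf, hfe, hfle, ⟨R, hR, hf1⟩, hfB⟩ := exists_scattering_trial hV hVe hA hAB hscat
  set β := (∫⁻ z, ENNReal.ofReal (1 - f z ^ 2)).toReal with hβ
  set g := (∫⁻ z, ENNReal.ofReal (gradAbs f z)).toReal with hg
  have hβ0 : 0 ≤ β := ENNReal.toReal_nonneg
  have hg0 : 0 ≤ g := ENNReal.toReal_nonneg
  have h1 : ∀ᶠ ρ : ℝ in nhds 0, 0 < 1 - ρ * β := by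
    have : Continuous fun ρ : ℝ => 1 - ρ * β := by fun_prop
    exact (this.tendsto 0).eventually_const_lt (by simp)
  have h2 : ∀ᶠ ρ : ℝ in nhds 0, 0 < (1 - ρ * β) ^ 2 * C - B - ρ * g ^ 2 := by
    have : Continuous fun ρ : ℝ => (1 - ρ * β) ^ 2 * C - B - ρ * g ^ 2 := by fun_prop
    exact (this.tendsto 0).eventually_const_lt (by simpa using hBC)
  obtain ⟨ρ₀, hρ₀, hball⟩ := Metric.eventually_nhds_iff.1 (h1.and h2)
  refine ⟨ρ₀, hρ₀, fun ρ hρ hρlt => ?_⟩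
  obtain ⟨h3, h4⟩ := hball (y := ρ) (by rwa [Real.dist_eq, sub_zero, abs_of_pos hρ])
  filter_upwards [(tendsto_sideLength hρ).eventually_gt_atTop (2 * R)] with N hN
  set T := sideLength 3 ρ N with hT
  have hT0 : 0 < T := by linarith
  have hTN : (N : ℝ) = ρ * T ^ 3 := by
    rw [hT, sideLength_pow_three hρ]
    field_simp
  refine exists_trialState_perExt hV hVe hf hfe hfle hf1 hT0 hN (hA.trans hAB).le hg0 hfB
    (ENNReal.ofReal_toReal (lintegral_one_sub_sq_ne_top hf hf1)).ge
    (ENNReal.ofReal_toReal (lintegral_gradAbs_ne_top hf hf1)).ge h3 ?_ ?_ ?_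
  · have := mul_nonneg hρ.le hβ0
    linarith
  · rw [hTN]
    exact le_of_eq (by ring)
  · rw [hTN]
    have h5 : 0 ≤ ρ ^ 2 * (T ^ 3) ^ 3 * ((1 - ρ * β) ^ 2 * C - B - ρ * g ^ 2) :=
      mul_nonneg (by positivity) h4.le
    refine sub_nonneg.1 (h5.trans (le_of_eq ?_))
    ring

lemma gsEnergy_mem_Icc {d N : ℕ} {T : ℝ} {V : Vec d → ℝ≥0∞} {m M : ℝ} (hM : 0 ≤ M)
    (hlow : ∀ ψ, IsTrialState d N T ψ → ENNReal.ofReal m ≤ kineticE d N T ψ + interE d N T V ψ)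
    (hup : ∃ ψ, IsTrialState d N T ψ ∧
      kineticE d N T ψ + interE d N T V ψ ≤ ENNReal.ofReal M) :
    gsEnergy d N T V ∈ Set.Icc m M := by
  obtain ⟨ψ, hψ, hE⟩ := hup
  have hEt : kineticE d N T ψ + interE d N T V ψ ≠ ⊤ := ne_top_of_le_ne_top ENNReal.ofReal_ne_top hE
  constructor
  · refine le_csInf ⟨_, ψ, hψ, hEt, rfl⟩ ?_
    rintro e ⟨φ, hφ, hφt, rfl⟩
    exact (ENNReal.ofReal_le_iff_le_toReal hφt).1 (hlow φ hφ)
  · refine le_trans (csInf_le ⟨0, ?_⟩ ?_) (ENNReal.toReal_le_of_le_ofReal hM hE)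
    swap
    · exact ⟨ψ, hψ, hEt, rfl⟩
    rintro e ⟨φ, hφ, hφt, rfl⟩
    exact ENNReal.toReal_nonneg

lemma liminf_limsup_mem_Icc {F : ℕ → ℝ} {m M : ℝ} (h : ∀ᶠ N in atTop, F N ∈ Set.Icc m M) :
    liminf F atTop ∈ Set.Icc m M ∧ limsup F atTop ∈ Set.Icc m M := by
  have h1 : ∀ᶠ N in atTop, m ≤ F N := h.mono fun _ h => h.1
  have h2 : ∀ᶠ N in atTop, F N ≤ M := h.mono fun _ h => h.2
  have hb1 : IsBoundedUnder (· ≥ ·) atTop F := isBoundedUnder_of_eventually_ge h1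
  have hb2 : IsBoundedUnder (· ≤ ·) atTop F := isBoundedUnder_of_eventually_le h2
  have h3 : m ≤ liminf F atTop := le_liminf_of_le hb2.isCoboundedUnder_ge h1
  have h4 : limsup F atTop ≤ M := limsup_le_of_le hb1.isCoboundedUnder_le h2
  have h5 : liminf F atTop ≤ limsup F atTop := liminf_le_limsup hb2 hb1
  exact ⟨⟨h3, h5.trans h4⟩, ⟨h3.trans h5, h4⟩⟩

lemma eMinus_ePlus_mem_Icc {V : Vec 3 → ℝ≥0∞} (hV : Measurable V) (hVc : HasCompactSupport V)
    (hVe : ∀ z, V (-z) = V z) {a : ℝ}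
    (ha : 0 < a) (hscat : sInf (scatSet3 V) = ENNReal.ofReal (4 * π * a)) {ε : ℝ}
    (hε : 0 < ε) (hε1 : ε < 1) :
    ∃ ρ₀ : ℝ, 0 < ρ₀ ∧ ∀ ρ, 0 < ρ → ρ < ρ₀ →
      eMinus 3 V ρ / (4 * π * a * ρ ^ 2) ∈ Set.Icc (1 - ε) (1 + ε) ∧
      ePlus 3 V ρ / (4 * π * a * ρ ^ 2) ∈ Set.Icc (1 - ε) (1 + ε) := by
  obtain ⟨ρ₁, hρ₁, h1⟩ := sideLength_energy_lower hV hVc hVe ha hscat hε hε1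
  obtain ⟨ρ₂, hρ₂, h2⟩ := sideLength_energy_upper hV hVe ha hscat hε
  refine ⟨min ρ₁ ρ₂, lt_min hρ₁ hρ₂, fun ρ hρ hlt => ?_⟩
  have hD : 0 < 4 * π * a * ρ ^ 2 := by positivity
  have hε2 : 0 ≤ 1 - ε := by linarith
  have key : ∀ᶠ N : ℕ in atTop, gsEnergy 3 N (sideLength 3 ρ N) V / sideLength 3 ρ N ^ 3
      ∈ Set.Icc ((1 - ε) * (4 * π * a * ρ ^ 2)) ((1 + ε) * (4 * π * a * ρ ^ 2)) := by
    filter_upwards [h1 ρ hρ (hlt.trans_le (min_le_left _ _)),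
      h2 ρ hρ (hlt.trans_le (min_le_right _ _)),
      (tendsto_sideLength hρ).eventually_gt_atTop 0] with N hl hu hT
    have hT3 : 0 < sideLength 3 ρ N ^ 3 := by positivity
    have h := gsEnergy_mem_Icc (by positivity) hl hu
    constructor
    · rw [le_div_iff₀ hT3]
      exact (le_of_eq (by ring)).trans h.1
    · rw [div_le_iff₀ hT3]
      exact h.2.trans (le_of_eq (by ring))
  obtain ⟨h3, h4⟩ := liminf_limsup_mem_Icc key
  exact ⟨⟨(le_div_iff₀ hD).2 h3.1, (div_le_iff₀ hD).2 h3.2⟩,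
    ⟨(le_div_iff₀ hD).2 h4.1, (div_le_iff₀ hD).2 h4.2⟩⟩

lemma tendsto_nhdsGT_zero_of_mem_Icc {F : ℝ → ℝ} (h : ∀ ε : ℝ, 0 < ε → ε < 1 →
    ∃ ρ₀ : ℝ, 0 < ρ₀ ∧ ∀ ρ, 0 < ρ → ρ < ρ₀ → F ρ ∈ Set.Icc (1 - ε) (1 + ε)) :
    Tendsto F (nhdsWithin 0 (Set.Ioi 0)) (nhds 1) := by
  rw [Metric.tendsto_nhdsWithin_nhds]
  intro δ hδ
  have hm : 0 < min (δ / 2) (1 / 2) := by positivity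
  obtain ⟨ρ₀, hρ₀, h1⟩ := h (min (δ / 2) (1 / 2)) hm
    ((min_le_right _ _).trans_lt (by norm_num))
  refine ⟨ρ₀, hρ₀, fun {ρ} hρ hd => ?_⟩
  have hρ' : 0 < ρ := hρ
  rw [Real.dist_eq, sub_zero, abs_of_pos hρ'] at hd
  obtain ⟨h2, h3⟩ := h1 ρ hρ' hd
  have h4 := min_le_left (δ / 2) (1 / 2)
  rw [Real.dist_eq, abs_lt]
  constructor <;> linarith

/-- **Leading order of the ground state energy in three dimensions (Lieb–Yngvason).**
For a radial, compactly supported, nonnegative (possibly infinite) interaction with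
scattering length `a ∈ (0,∞)`, the specific ground state energy satisfies
`e₃(ρ) = 4πaρ²(1+o(1))` as `ρ → 0⁺`, both for the `liminf` and the `limsup` version. -/
theorem leading_order_3d
    (V : Vec 3 → ℝ≥0∞) (hVmeas : Measurable V)
    (hVrad : ∀ x y : Vec 3, ∑ k, (x k) ^ 2 = ∑ k, (y k) ^ 2 → V x = V y)
    (hVsupp : HasCompactSupport V)
    (a : ℝ) (ha : 0 < a)
    (hscat : sInf (scatSet3 V) = ENNReal.ofReal (4 * π * a)) :
    Tendsto (fun ρ : ℝ => eMinus 3 V ρ / (4 * π * a * ρ ^ 2))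
        (nhdsWithin 0 (Set.Ioi 0)) (nhds 1) ∧
    Tendsto (fun ρ : ℝ => ePlus 3 V ρ / (4 * π * a * ρ ^ 2))
        (nhdsWithin 0 (Set.Ioi 0)) (nhds 1) := by
  have h := fun (ε : ℝ) (hε : 0 < ε) (hε1 : ε < 1) =>
    eMinus_ePlus_mem_Icc hVmeas hVsupp (even_of_radial hVrad) ha hscat hε hε1
  constructor
  · refine tendsto_nhdsGT_zero_of_mem_Icc fun ε hε hε1 => ?_
    obtain ⟨ρ₀, hρ₀, h1⟩ := h ε hε hε1
    exact ⟨ρ₀, hρ₀, fun ρ hρ hlt => (h1 ρ hρ hlt).1⟩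
  · refine tendsto_nhdsGT_zero_of_mem_Icc fun ε hε hε1 => ?_
    obtain ⟨ρ₀, hρ₀, h1⟩ := h ε hε hε1
    exact ⟨ρ₀, hρ₀, fun ρ hρ hlt => (h1 ρ hρ hlt).2⟩
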